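/- (Rigidity Theorem II) Let A ⊆ ℝ^n be a Borel set and m a Radon measure on ℝ^n concentrated on A such that (A, d_Euclid, m) is a Lipschitz differentiability space whose Lipschitz dimension equals n, i.e. every Borel subset of A of positive m-measure contains a further Borel subset of positive m-measure on which some n Lipschitz functions are independent, and no n+1 Lipschitz functions are independent on any set of positive m-measure. Then m is absolutely continuous with respect to the Lebesgue measure on ℝ^n; in particular m is supported on an n-rectifiable set. -/

import Mathlib

open MeasureTheory
open scoped ENNReal NNReal

/-- The local Lipschitz constant (slope) `lip f (x) = limsup_{y → x} |f y - f x| / d(y,x)`,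
equal to `0` at isolated points. -/
noncomputable def lip {M : Type*} [PseudoMetricSpace M] (f : M → ℝ) (x : M) : ℝ :=
  Filter.limsup (fun y => |f y - f x| / dist y x) (nhdsWithin x {x}ᶜ)

/-- `q` is a norm on `ℝ^k`. -/
def IsNormOn {k : ℕ} (q : (Fin k → ℝ) → ℝ) : Prop :=
  (∀ a, 0 ≤ q a) ∧ (∀ a, q a = 0 ↔ a = 0) ∧
  (∀ (c : ℝ) (a : Fin k → ℝ), q (c • a) = |c| * q a) ∧
  (∀ a b : Fin k → ℝ, q (a + b) ≤ q a + q b)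

/-- Lipschitz functions `f 0, …, f (k-1)` are independent on `A`: for `μ`-a.e. `x ∈ A` the map
`a ↦ lip (Σ i, a i * f i) (x)` is a norm on `ℝ^k`. -/
def IndependentOn {M : Type*} [PseudoMetricSpace M] [MeasurableSpace M] (μ : Measure M)
    {k : ℕ} (f : Fin k → M → ℝ) (A : Set M) : Prop :=
  ∀ᵐ x ∂(μ.restrict A),
    IsNormOn (fun a : Fin k → ℝ => lip (fun y => ∑ i, a i * f i y) x)

/-- `(M,d,μ)` is a (Lipschitz) differentiability space: there is `N` such that no family of
more than `N` Lipschitz functions is independent on a Borel set of positive measure. -/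
def IsDiffSpace {M : Type*} [PseudoMetricSpace M] [MeasurableSpace M] (μ : Measure M) : Prop :=
  ∃ N : ℕ, ∀ (k : ℕ) (f : Fin k → M → ℝ) (A : Set M), MeasurableSet A → 0 < μ A →
    (∀ i, ∃ K : ℝ≥0, LipschitzWith K (f i)) → IndependentOn μ f A → k ≤ N

/-- `S ⊆ X` is `n`-rectifiable: it is the image of a measurable subset of `ℝⁿ` under a
bi-Lipschitz map. -/
def IsNRectifiable {X : Type*} [PseudoMetricSpace X] (n : ℕ) (S : Set X) : Prop :=
  ∃ (T : Set (EuclideanSpace ℝ (Fin n))) (g : EuclideanSpace ℝ (Fin n) → X) (C : ℝ),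
    0 < C ∧ MeasurableSet T ∧ S = g '' T ∧
    ∀ x ∈ T, ∀ y ∈ T, dist x y / C ≤ dist (g x) (g y) ∧ dist (g x) (g y) ≤ C * dist x y

/-!
Call the divergence closable on a finite measure `ν` on `ℝⁿ` if `∫ div Φ ∂ν` is small for every
field `Φ` which is uniformly small and whose derivative is bounded by a constant.

If `ν` is carried by a compact Lebesgue null set `K` and has closable divergence, then `ν = 0`.
Testing against disjoint fields, each contracting a small ball, shows that `ν` is doubling at almost
every point. Since `K` is null, it is covered by few balls compared to the number of vertices of a
suitable grid; distributing these vertices among the centers of the balls by optimal transport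
gives a convex potential with two different subgradients at each center. Averages of its smoothed
gradient over balls of variable radius are arbitrarily small fields with nonnegative divergence and
bounded derivatives, whose divergence is bounded below on a ball near each point of `K`. By
doubling and the Vitali covering lemma, their total divergence does not tend to `0`.

Now let `F : X → ℝⁿ` have components independent on `B`. If the image of `μ|_B` did not have
closable divergence, there would be potentials, tending to `0` uniformly, whose gradients converge
fast and stay away from `0` on a set of positive measure. The alternating sum of a lacunary
subsequence, composed with `F`, is Lipschitz on a smaller set of positive measure. It has no
gradient in the chart `F`, as its gradients at successive scales differ by one term of the sum.
Together with the components of `F` it gives `n + 1` independent functions. Hence the image of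
`μ|_B` is absolutely continuous, and so is `μ`, because Lipschitz maps preserve null sets.
-/

open Asymptotics Filter Metric Module Set Topology
open scoped Gradient RealInnerProductSpace

/-! ### Measures with closable divergence -/

section Divergence

variable {E : Type*} [NormedAddCommGroup E] [InnerProductSpace ℝ E]

/-- The divergence of a vector field, as the trace of its derivative; it takes the junk value `0`
where the field is not differentiable. -/
noncomputable def divergence (Φ : E → E) (x : E) : ℝ :=
  LinearMap.trace ℝ E (fderiv ℝ Φ x)

variable [FiniteDimensional ℝ E]

lemma abs_trace_le_finrank_mul_norm (T : E →L[ℝ] E) :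
    |LinearMap.trace ℝ E T| ≤ finrank ℝ E * ‖T‖ := by
  set b := stdOrthonormalBasis ℝ E
  have entry_le : ∀ i, |⟪b i, T (b i)⟫| ≤ ‖T‖ := fun i => by
    simpa using (abs_real_inner_le_norm (b i) (T (b i))).trans
      (mul_le_mul_of_nonneg_left (T.le_opNorm (b i)) (norm_nonneg _))
  rw [LinearMap.trace_eq_sum_inner _ b]
  calc |∑ i, ⟪b i, T (b i)⟫| ≤ ∑ i, |⟪b i, T (b i)⟫| := Finset.abs_sum_le_sum_abs _ _
    _ ≤ ∑ _i, ‖T‖ := Finset.sum_le_sum fun i _ => entry_le i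
    _ = finrank ℝ E * ‖T‖ := by simp

lemma continuous_trace : Continuous fun T : E →L[ℝ] E => LinearMap.trace ℝ E T :=
  ((LinearMap.trace ℝ E) ∘ₗ ContinuousLinearMap.coeLM ℝ).continuous_of_finiteDimensional

lemma continuous_divergence {Φ : E → E} (hΦ : ContDiff ℝ 1 Φ) : Continuous (divergence Φ) :=
  continuous_trace.comp (hΦ.continuous_fderiv one_ne_zero)

lemma abs_divergence_le {Φ : E → E} {x : E} {Λ : ℝ} (hΛ : ‖fderiv ℝ Φ x‖ ≤ Λ) :
    |divergence Φ x| ≤ finrank ℝ E * Λ :=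
  (abs_trace_le_finrank_mul_norm _).trans (by gcongr)

lemma integrable_divergence [MeasurableSpace E] [BorelSpace E] {ν : Measure E}
    [IsFiniteMeasure ν] {Φ : E → E} (hΦ : ContDiff ℝ 1 Φ) {Λ : ℝ}
    (hΛ : ∀ x, ‖fderiv ℝ Φ x‖ ≤ Λ) : Integrable (divergence Φ) ν :=
  .of_bound (continuous_divergence hΦ).aestronglyMeasurable (finrank ℝ E * Λ)
    (.of_forall fun x => abs_divergence_le (hΛ x))

/-- The divergence is closable on `ν`: fields which are uniformly small and have uniformly bounded
derivatives have small total divergence. -/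
def HasClosableDivergence [MeasurableSpace E] (ν : Measure E) : Prop :=
  ∀ Λ > (0 : ℝ), ∀ η > (0 : ℝ), ∃ τ > (0 : ℝ), ∀ Φ : E → E, ContDiff ℝ 1 Φ →
    (∀ x, ‖fderiv ℝ Φ x‖ ≤ Λ) → (∀ x, ‖Φ x‖ ≤ τ) → ∫ x, divergence Φ x ∂ν ≤ η

end Divergence

/-! ### Contracting fields -/

lemma hasDerivAt_max_zero_pow (k : ℕ) (s : ℝ) :
    HasDerivAt (fun s : ℝ => max s 0 ^ (k + 2)) ((k + 2) * max s 0 ^ (k + 1)) s := by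
  rcases lt_trichotomy s 0 with hs | rfl | hs
  · have eq_zero : (fun s : ℝ => max s 0 ^ (k + 2)) =ᶠ[𝓝 s] fun _ => 0 := by
      filter_upwards [gt_mem_nhds hs] with y hy
      simp [max_eq_right hy.le]
    rw [max_eq_right hs.le]
    simpa using (hasDerivAt_const s (0 : ℝ)).congr_of_eventuallyEq eq_zero
  · have isBigO : (fun s : ℝ => max s 0 ^ (k + 2)) =O[𝓝 0] fun s : ℝ => s ^ (k + 2) :=
      .of_bound 1 <| .of_forall fun s => by
        rw [one_mul, norm_pow, norm_pow, Real.norm_eq_abs, Real.norm_eq_abs,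
          abs_of_nonneg (le_max_right _ _)]
        gcongr
        exact max_le (le_abs_self s) (abs_nonneg s)
    rw [hasDerivAt_iff_isLittleO]
    simpa using isBigO.trans_isLittleO (by
      simpa using Asymptotics.isLittleO_pow_pow (𝕜 := ℝ) (show 1 < k + 2 by omega))
  · have eq_pow : (fun s : ℝ => max s 0 ^ (k + 2)) =ᶠ[𝓝 s] fun s => s ^ (k + 2) := by
      filter_upwards [lt_mem_nhds hs] with y hy
      simp [max_eq_left hy.le]
    rw [max_eq_left hs.le]
    simpa using (hasDerivAt_pow (k + 2) s).congr_of_eventuallyEq eq_pow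

lemma contDiff_max_zero_pow (k : ℕ) : ContDiff ℝ 1 fun s : ℝ => max s 0 ^ (k + 2) := by
  rw [contDiff_one_iff_deriv, funext fun s => (hasDerivAt_max_zero_pow k s).deriv]
  exact ⟨fun s => (hasDerivAt_max_zero_pow k s).differentiableAt, by fun_prop⟩

/-- `ρ` is a scale at which the mass of `ν` near `x` is steep: it drops by a factor `C` between
the radii `ρ / 2` and `ρ / 4`, but not between `ρ` and `ρ / 2`. -/
def IsSteepScale {X : Type*} [PseudoMetricSpace X] [MeasurableSpace X] (ν : Measure X) (C : ℝ)
    (x : X) (ρ : ℝ) : Prop :=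
  0 < ρ ∧ C * ν.real (closedBall x (ρ / 4)) ≤ ν.real (closedBall x (ρ / 2)) ∧
    ν.real (closedBall x ρ) ≤ C * ν.real (closedBall x (ρ / 2))

section ContractingField

variable {E : Type*} [NormedAddCommGroup E] (k : ℕ) (x : E) (ρ : ℝ)

/-- A radial cut-off function, supported in the closed ball of radius `ρ` about `x`. Its powers
`cutoff x ρ ^ (k + 2)` are of class `C¹`. -/
noncomputable def cutoff (y : E) : ℝ := max (1 - ‖y - x‖ ^ 2 / ρ ^ 2) 0

lemma cutoff_nonneg (y : E) : 0 ≤ cutoff x ρ y := le_max_right _ _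

lemma cutoff_le_one (y : E) : cutoff x ρ y ≤ 1 :=
  max_le (sub_le_self _ (by positivity)) zero_le_one

lemma one_sub_le_cutoff (y : E) : 1 - ‖y - x‖ ^ 2 / ρ ^ 2 ≤ cutoff x ρ y := le_max_left _ _

variable {x ρ} in
lemma cutoff_eq_zero (hρ : 0 < ρ) {y : E} (hy : y ∉ closedBall x ρ) : cutoff x ρ y = 0 := by
  rw [mem_closedBall, dist_eq_norm, not_le] at hy
  refine max_eq_right (sub_nonpos.mpr ((one_le_div (by positivity)).mpr ?_))
  gcongr

lemma cutoff_pow_succ_succ (y : E) :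
    cutoff x ρ y ^ (k + 2) = cutoff x ρ y ^ (k + 1) * (1 - ‖y - x‖ ^ 2 / ρ ^ 2) := by
  rcases le_total (1 - ‖y - x‖ ^ 2 / ρ ^ 2) 0 with h | h
  · simp [cutoff, max_eq_right h]
  · rw [pow_succ, cutoff, max_eq_left h]

variable [InnerProductSpace ℝ E]

lemma contDiff_cutoff_pow : ContDiff ℝ 1 fun y => cutoff x ρ y ^ (k + 2) := by
  have contDiff_norm_sq : ContDiff ℝ 1 fun y : E => ‖y - x‖ ^ 2 :=
    (contDiff_id.sub contDiff_const).norm_sq ℝ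
  exact (contDiff_max_zero_pow k).comp (by fun_prop)

lemma hasFDerivAt_cutoff_pow (y : E) :
    HasFDerivAt (fun y => cutoff x ρ y ^ (k + 2))
      (-((k + 2) * cutoff x ρ y ^ (k + 1) * (2 / ρ ^ 2)) • innerSL ℝ (y - x)) y := by
  have hasFDerivAt_norm_sq := ((hasFDerivAt_id (𝕜 := ℝ) y).sub_const x).norm_sq
  have hasFDerivAt_inner := (hasFDerivAt_norm_sq.mul_const (ρ ^ 2)⁻¹).const_sub 1
  refine ((hasDerivAt_max_zero_pow k (1 - ‖y - x‖ ^ 2 / ρ ^ 2)).comp_hasFDerivAt y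
    (by simpa only [div_eq_mul_inv] using hasFDerivAt_inner)).congr_fderiv ?_
  ext h
  simp [cutoff]
  ring

/-- The field pulling towards `x` inside the closed ball of radius `ρ`. Its divergence is at least
`-finrank ℝ E`, and for large `k` it is positive outside a smaller ball. -/
noncomputable def contractingField (y : E) : E := -(cutoff x ρ y ^ (k + 2) • (y - x))

lemma contDiff_contractingField : ContDiff ℝ 1 (contractingField k x ρ) :=
  ((contDiff_cutoff_pow k x ρ).smul (contDiff_id.sub contDiff_const)).neg

lemma fderiv_contractingField (y : E) :
    fderiv ℝ (contractingField k x ρ) y = -(cutoff x ρ y ^ (k + 2) • ContinuousLinearMap.id ℝ E) +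
      ((k + 2) * cutoff x ρ y ^ (k + 1) * (2 / ρ ^ 2)) •
        (innerSL ℝ (y - x)).smulRight (y - x) := by
  have := ((hasFDerivAt_cutoff_pow k x ρ y).smul ((hasFDerivAt_id y).sub_const x)).neg.fderiv
  refine this.trans ?_
  ext h
  simp [smul_smul, add_comm]

variable {x ρ}

lemma contractingField_eq_zero (hρ : 0 < ρ) {y : E} (hy : y ∉ closedBall x ρ) :
    contractingField k x ρ y = 0 := by
  simp [contractingField, cutoff_eq_zero hρ hy]

lemma fderiv_contractingField_eq_zero (hρ : 0 < ρ) {y : E} (hy : y ∉ closedBall x ρ) :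
    fderiv ℝ (contractingField k x ρ) y = 0 := by
  simp [fderiv_contractingField, cutoff_eq_zero hρ hy]

lemma norm_contractingField_le (hρ : 0 < ρ) (y : E) : ‖contractingField k x ρ y‖ ≤ ρ := by
  by_cases hy : y ∈ closedBall x ρ
  · rw [mem_closedBall, dist_eq_norm] at hy
    rw [contractingField, norm_neg, norm_smul, Real.norm_eq_abs,
      abs_of_nonneg (pow_nonneg (cutoff_nonneg x ρ y) _)]
    exact (mul_le_of_le_one_left (norm_nonneg _)
      (pow_le_one₀ (cutoff_nonneg x ρ y) (cutoff_le_one x ρ y))).trans hy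
  · simpa [contractingField_eq_zero k hρ hy] using hρ.le

lemma norm_fderiv_contractingField_le (hρ : 0 < ρ) (y : E) :
    ‖fderiv ℝ (contractingField k x ρ) y‖ ≤ 1 + 2 * (k + 2) := by
  by_cases hy : y ∈ closedBall x ρ
  · rw [mem_closedBall, dist_eq_norm] at hy
    have cutoff_nonneg := cutoff_nonneg x ρ y
    have cutoff_pow_le (j : ℕ) : cutoff x ρ y ^ j ≤ 1 :=
      pow_le_one₀ cutoff_nonneg (cutoff_le_one x ρ y)
    rw [fderiv_contractingField]
    calc _ ≤ cutoff x ρ y ^ (k + 2) * ‖ContinuousLinearMap.id ℝ E‖ +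
          (k + 2) * cutoff x ρ y ^ (k + 1) * (2 / ρ ^ 2) * (‖y - x‖ * ‖y - x‖) := by
          refine (norm_add_le _ _).trans (le_of_eq ?_)
          rw [norm_neg, norm_smul, norm_smul, ContinuousLinearMap.norm_smulRight_apply,
            innerSL_apply_norm, Real.norm_of_nonneg (by positivity),
            Real.norm_of_nonneg (by positivity)]
      _ ≤ 1 * 1 + (k + 2) * 1 * (2 / ρ ^ 2) * (ρ * ρ) := by
          gcongr
          · exact cutoff_pow_le _
          · exact ContinuousLinearMap.norm_id_le
          · exact cutoff_pow_le _
      _ = 1 + 2 * (k + 2) := by field_simp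
  · simp only [fderiv_contractingField_eq_zero k hρ hy, norm_zero]
    positivity

variable [FiniteDimensional ℝ E]

variable (x ρ) in
lemma divergence_contractingField (y : E) :
    divergence (contractingField k x ρ) y = cutoff x ρ y ^ (k + 1) *
      ((finrank ℝ E + 2 * (k + 2)) * (‖y - x‖ ^ 2 / ρ ^ 2) - finrank ℝ E) := by
  have trace_smulRight :
      LinearMap.trace ℝ E ((innerSL ℝ (y - x)).smulRight (y - x)) = ‖y - x‖ ^ 2 := by
    rw [ContinuousLinearMap.coe_smulRight, LinearMap.trace_smulRight, ContinuousLinearMap.coe_coe,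
      innerSL_apply_apply, real_inner_self_eq_norm_sq]
  rw [divergence, fderiv_contractingField, ContinuousLinearMap.toLinearMap_add,
    ContinuousLinearMap.toLinearMap_neg, ContinuousLinearMap.toLinearMap_smul,
    ContinuousLinearMap.toLinearMap_smul, ContinuousLinearMap.coe_id, map_add, map_neg, map_smul,
    map_smul, trace_smulRight, LinearMap.trace_id, cutoff_pow_succ_succ, smul_eq_mul, smul_eq_mul]
  ring

local notation "d" => (finrank ℝ E : ℝ)
local notation "κ" => ((3 / 4 : ℝ) ^ (16 * finrank ℝ E + 1))

lemma indicator_le_divergence_contractingField (hρ : 0 < ρ) (y : E) :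
    (closedBall x (ρ / 4)).indicator (fun _ => -(d + d * κ)) y +
      (closedBall x (ρ / 2)).indicator (fun _ => d * κ) y ≤
      divergence (contractingField (16 * finrank ℝ E) x ρ) y := by
  set t := ‖y - x‖ ^ 2 / ρ ^ 2 with t_def
  have cutoff_pow_le : cutoff x ρ y ^ (16 * finrank ℝ E + 1) ≤ 1 :=
    pow_le_one₀ (cutoff_nonneg x ρ y) (cutoff_le_one x ρ y)
  have cutoff_pow_nonneg := pow_nonneg (cutoff_nonneg x ρ y) (16 * finrank ℝ E + 1)
  have le_cutoff_pow (hy : y ∈ closedBall x (ρ / 2)) :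
      κ ≤ cutoff x ρ y ^ (16 * finrank ℝ E + 1) := by
    have t_le : t ≤ 1 / 4 := by
      rw [mem_closedBall, dist_eq_norm] at hy
      rw [t_def, div_le_iff₀ (by positivity)]
      nlinarith [norm_nonneg (y - x)]
    gcongr
    exact le_trans (by linarith) (one_sub_le_cutoff x ρ y)
  have d_nonneg : 0 ≤ d := Nat.cast_nonneg _
  rw [divergence_contractingField, ← t_def]
  push_cast
  by_cases hy : y ∈ closedBall x (ρ / 4)
  · rw [indicator_of_mem hy,
      indicator_of_mem (closedBall_subset_closedBall (by linarith) hy)]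
    have : -d ≤ (d + 2 * (16 * d + 2)) * t - d := by
      linarith [show 0 ≤ (d + 2 * (16 * d + 2)) * t by positivity]
    nlinarith
  · have le_t : 1 / 16 ≤ t := by
      rw [mem_closedBall, dist_eq_norm, not_le] at hy
      rw [t_def, le_div_iff₀ (by positivity)]
      nlinarith
    have le_factor : d ≤ (d + 2 * (16 * d + 2)) * t - d := by nlinarith
    rw [indicator_of_notMem hy, zero_add]
    by_cases hy' : y ∈ closedBall x (ρ / 2)
    · rw [indicator_of_mem hy', mul_comm d]
      exact mul_le_mul (le_cutoff_pow hy') le_factor d_nonneg cutoff_pow_nonneg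
    · rw [indicator_of_notMem hy']
      exact mul_nonneg cutoff_pow_nonneg (d_nonneg.trans le_factor)

lemma le_integral_divergence_contractingField [MeasurableSpace E] [BorelSpace E] {ν : Measure E}
    [IsFiniteMeasure ν] (hρ : 0 < ρ) :
    d * κ * ν.real (closedBall x (ρ / 2)) - (d + d * κ) * ν.real (closedBall x (ρ / 4)) ≤
      ∫ y, divergence (contractingField (16 * finrank ℝ E) x ρ) y ∂ν := by
  have integrable_indicator (r a : ℝ) :
      Integrable ((closedBall x r).indicator fun _ => a) ν :=
    (integrable_const a).indicator measurableSet_closedBall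
  calc _ = ∫ y, ((closedBall x (ρ / 4)).indicator (fun _ => -(d + d * κ)) y +
          (closedBall x (ρ / 2)).indicator (fun _ => d * κ) y) ∂ν := by
        rw [integral_add (integrable_indicator _ _) (integrable_indicator _ _),
          integral_indicator_const _ measurableSet_closedBall,
          integral_indicator_const _ measurableSet_closedBall]
        simp only [smul_eq_mul]
        ring
    _ ≤ _ := integral_mono ((integrable_indicator _ _).add (integrable_indicator _ _))
        (integrable_divergence (contDiff_contractingField _ _ _)
          (norm_fderiv_contractingField_le _ hρ))
        (indicator_le_divergence_contractingField hρ)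

lemma IsSteepScale.le_integral_divergence [MeasurableSpace E] [BorelSpace E] {ν : Measure E}
    [IsFiniteMeasure ν] {C : ℝ} (hC : 4 / κ ≤ C) (hρ : IsSteepScale ν C x ρ) :
    d * κ / (2 * C) * ν.real (closedBall x ρ) ≤
      ∫ y, divergence (contractingField (16 * finrank ℝ E) x ρ) y ∂ν := by
  obtain ⟨ρ_pos, inner_drop, outer_bound⟩ := hρ
  refine le_trans ?_ (le_integral_divergence_contractingField ρ_pos)
  have κ_pos : 0 < κ := by positivity
  have κ_le_one : κ ≤ 1 := pow_le_one₀ (by norm_num) (by norm_num)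
  have C_pos : 0 < C := (by positivity : 0 < 4 / κ).trans_le hC
  have four_le : 4 ≤ C * κ := (div_le_iff₀ κ_pos).mp hC
  set a := ν.real (closedBall x (ρ / 4))
  set b := ν.real (closedBall x (ρ / 2))
  have a_nonneg : 0 ≤ a := measureReal_nonneg
  have four_mul_le : 4 * a ≤ κ * b := by nlinarith
  have loss_le : (1 + κ) * a ≤ κ / 2 * b := by nlinarith
  calc d * κ / (2 * C) * ν.real (closedBall x ρ) ≤ d * κ / (2 * C) * (C * b) := by gcongr
    _ = d * (κ / 2 * b) := by field_simp
    _ ≤ d * (κ * b - (1 + κ) * a) := by gcongr; linarith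
    _ = d * κ * b - (d + d * κ) * a := by ring

end ContractingField

/-! ### Doubling -/

section SteepScale

variable {X : Type*} [PseudoMetricSpace X] [MeasurableSpace X] {ν : Measure X} {C r₁ r : ℝ} {x : X}

lemma mul_measureReal_closedBall_le_of_forall_not_isSteepScale
    (not_steep : ∀ ρ ∈ Ioo 0 r₁, ¬ IsSteepScale ν C x ρ) (hr : 0 < r)
    (hgrow : C * ν.real (closedBall x r) ≤ ν.real (closedBall x (2 * r))) (j : ℕ)
    (hj : 2 ^ (j + 1) * r < r₁) :
    C * ν.real (closedBall x (2 ^ j * r)) ≤ ν.real (closedBall x (2 ^ (j + 1) * r)) := by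
  induction j with
  | zero => simpa using hgrow
  | succ j ih =>
    have hj' : 2 ^ (j + 1) * r < r₁ := lt_of_le_of_lt (by gcongr <;> norm_num) hj
    by_contra! hlt
    refine not_steep (2 ^ (j + 1 + 1) * r) ⟨by positivity, hj⟩ ⟨by positivity, ?_, ?_⟩
    · rw [show 2 ^ (j + 1 + 1) * r / 4 = 2 ^ j * r by ring,
        show 2 ^ (j + 1 + 1) * r / 2 = 2 ^ (j + 1) * r by ring]
      exact ih hj'
    · rw [show 2 ^ (j + 1 + 1) * r / 2 = 2 ^ (j + 1) * r by ring]
      exact hlt.le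

lemma pow_mul_measureReal_closedBall_le_of_forall_not_isSteepScale (hC : 0 ≤ C)
    (not_steep : ∀ ρ ∈ Ioo 0 r₁, ¬ IsSteepScale ν C x ρ) (hr : 0 < r)
    (hgrow : C * ν.real (closedBall x r) ≤ ν.real (closedBall x (2 * r))) (j : ℕ)
    (hj : 2 ^ j * r < r₁) :
    C ^ j * ν.real (closedBall x r) ≤ ν.real (closedBall x (2 ^ j * r)) := by
  induction j with
  | zero => simp
  | succ j ih =>
    have hj' : 2 ^ j * r < r₁ := lt_of_le_of_lt (by gcongr <;> norm_num) hj
    calc C ^ (j + 1) * ν.real (closedBall x r) = C * (C ^ j * ν.real (closedBall x r)) := by ring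
      _ ≤ C * ν.real (closedBall x (2 ^ j * r)) := by gcongr; exact ih hj'
      _ ≤ _ := mul_measureReal_closedBall_le_of_forall_not_isSteepScale not_steep hr hgrow j hj

/-- Without steep scales, growth by a factor `C ≥ 4 ^ n` at a tiny radius propagates through all
dyadic radii up to a fixed one, which contradicts finiteness of the measure. -/
lemma frequently_isSteepScale [IsFiniteMeasure ν] {n : ℕ} (hn : n ≠ 0) (hC : 4 ^ n ≤ C)
    (lower : ∀ᶠ r in 𝓝[>] 0, r ^ n ≤ ν.real (closedBall x r))
    (not_doubling : ∃ᶠ r in 𝓝[>] 0, C * ν.real (closedBall x r) < ν.real (closedBall x (2 * r))) :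
    ∃ᶠ ρ in 𝓝[>] 0, IsSteepScale ν C x ρ := by
  by_contra hsteep
  rw [not_frequently] at hsteep
  obtain ⟨r₁, r₁_pos, not_steep⟩ := mem_nhdsGT_iff_exists_Ioo_subset.mp hsteep
  rw [mem_Ioi] at r₁_pos
  set T := ν.real univ
  have : 0 ≤ T := measureReal_nonneg
  have C_nonneg : 0 ≤ C := le_trans (by positivity) hC
  set s := r₁ / 4 with s_def
  have small : ∀ᶠ r in 𝓝[>] (0 : ℝ), r ∈ Ioo 0 (min s (s ^ (n + 1) / (T + 1))) :=
    Ioo_mem_nhdsGT (by positivity)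
  obtain ⟨r, hgrow, hlower, r_pos, r_lt⟩ := (not_doubling.and_eventually (lower.and small)).exists
  have r_lt_s : r < s := r_lt.trans_le (min_le_left _ _)
  have r_mul_lt : r * (T + 1) < s ^ (n + 1) :=
    (lt_div_iff₀ (by positivity)).mp (r_lt.trans_le (min_le_right _ _))
  obtain ⟨j, hj, hj'⟩ := exists_nat_pow_near (x := 2 * s / r) (y := (2 : ℝ))
    ((one_le_div r_pos).mpr (by linarith)) one_lt_two
  rw [le_div_iff₀ r_pos] at hj
  rw [div_lt_iff₀ r_pos, pow_succ] at hj'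
  have two_pow_le : (2 : ℝ) ^ j * s ^ n ≤ T := by
    calc (2 : ℝ) ^ j * s ^ n ≤ (2 ^ j) ^ n * (2 ^ j * r) ^ n := by
          gcongr
          · exact le_self_pow₀ (one_le_pow₀ one_le_two) hn
          · linarith
      _ = (4 ^ n) ^ j * r ^ n := by
          rw [← pow_mul (4 : ℝ), mul_comm n j, pow_mul (4 : ℝ), show (4 : ℝ) = 2 * 2 by norm_num,
            mul_pow 2 2 j]
          ring
      _ ≤ C ^ j * ν.real (closedBall x r) := by gcongr
      _ ≤ ν.real (closedBall x (2 ^ j * r)) :=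
          pow_mul_measureReal_closedBall_le_of_forall_not_isSteepScale C_nonneg not_steep r_pos
            hgrow.le j (by linarith)
      _ ≤ T := measureReal_mono (subset_univ _)
  have : s ^ (n + 1) ≤ r * T := by
    calc s ^ (n + 1) = s ^ n * s := pow_succ _ _
      _ ≤ s ^ n * (2 ^ j * r) := by gcongr; linarith
      _ = r * (2 ^ j * s ^ n) := by ring
      _ ≤ r * T := by gcongr
  linarith

end SteepScale

lemma exists_finset_disjoint_closedBall_half_lt {X : Type*} [MetricSpace X]
    [SecondCountableTopology X] [HasBesicovitchCovering X] [MeasurableSpace X]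
    [OpensMeasurableSpace X] (ν : Measure X) [IsFiniteMeasure ν] {f : X → Set ℝ} {s : Set X}
    (hf : ∀ x ∈ s, ∃ᶠ ρ in 𝓝[>] 0, ρ ∈ f x) {τ : ℝ} (hτ : 0 < τ) (hs : ν s ≠ 0) :
    ∃ (t : Finset X) (r : X → ℝ), (∀ x ∈ t, r x ∈ f x ∩ Ioo 0 τ) ∧
      (t : Set X).PairwiseDisjoint (fun x => closedBall x (r x)) ∧
      ν.real s / 2 < ∑ x ∈ t, ν.real (closedBall x (r x)) := by
  obtain ⟨t, r, t_countable, -, hr, diff_null, disjoint⟩ :=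
    Besicovitch.exists_disjoint_closedBall_covering_ae ν f s
      (fun x hx δ hδ => ((hf x hx).and_eventually (Ioo_mem_nhdsGT hδ)).exists) (fun _ => τ)
      (fun _ _ => hτ)
  have half_lt : ν s / 2 < ∑' x : t, ν (closedBall (x : X) (r x)) :=
    calc ν s / 2 < ν s := ENNReal.half_lt_self hs (measure_ne_top _ _)
      _ ≤ ν (⋃ x ∈ t, closedBall x (r x)) := measure_mono_ae (ae_le_set.mpr diff_null)
      _ = ∑' x : t, ν (closedBall (x : X) (r x)) :=
          measure_biUnion t_countable disjoint fun _ _ => measurableSet_closedBall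
  rw [ENNReal.tsum_eq_iSup_sum] at half_lt
  obtain ⟨u, hu⟩ := lt_iSup_iff.mp half_lt
  have mem_t {x : X} (hx : x ∈ u.map (Function.Embedding.subtype _)) : x ∈ t := by
    obtain ⟨y, -, rfl⟩ := Finset.mem_map.mp hx
    exact y.2
  refine ⟨u.map (Function.Embedding.subtype _), r, fun x hx => hr x (mem_t hx),
    disjoint.subset fun x hx => mem_t hx, ?_⟩
  rw [Finset.sum_map]
  simpa [Measure.real, ENNReal.toReal_sum] using (ENNReal.toReal_lt_toReal
    (ENNReal.div_ne_top (measure_ne_top _ _) two_ne_zero)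
    (ENNReal.sum_ne_top.mpr fun _ _ => measure_ne_top _ _)).mpr hu

lemma norm_sum_le_of_subsingleton_support {ι V : Type*} [SeminormedAddCommGroup V]
    {s : Finset ι} {f : ι → V} {c : ℝ} (hc : 0 ≤ c) (norm_le : ∀ i ∈ s, ‖f i‖ ≤ c)
    (unique : ∀ i ∈ s, ∀ j ∈ s, f i ≠ 0 → f j ≠ 0 → i = j) : ‖∑ i ∈ s, f i‖ ≤ c := by
  by_cases h : ∃ i ∈ s, f i ≠ 0
  · obtain ⟨i, hi, hfi⟩ := h
    rw [Finset.sum_eq_single_of_mem i hi fun j hj hji =>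
      by_contra fun hfj => hji (unique j hj i hi hfj hfi)]
    exact norm_le i hi
  · push Not at h
    simpa [Finset.sum_eq_zero h] using hc

section Doubling

variable {E : Type*} [NormedAddCommGroup E] [InnerProductSpace ℝ E]

lemma divergence_sum {ι : Type*} {s : Finset ι} {Φ : ι → E → E}
    (hΦ : ∀ i ∈ s, ContDiff ℝ 1 (Φ i)) (y : E) :
    divergence (fun y => ∑ i ∈ s, Φ i y) y = ∑ i ∈ s, divergence (Φ i) y := by
  rw [divergence, fderiv_fun_sum fun i hi => (hΦ i hi).differentiable one_ne_zero y,
    ContinuousLinearMap.toLinearMap_sum, map_sum]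
  rfl

variable [FiniteDimensional ℝ E] [MeasurableSpace E] [BorelSpace E] {ν : Measure E}
  [IsFiniteMeasure ν]

lemma sum_integral_divergence_contractingField_le (k : ℕ) {t : Finset E} {r : E → ℝ} {τ η : ℝ}
    (hr : ∀ x ∈ t, r x ∈ Ioo 0 τ) (hτ : 0 < τ)
    (disjoint : (t : Set E).PairwiseDisjoint fun x => closedBall x (r x))
    (hη : ∀ Φ : E → E, ContDiff ℝ 1 Φ → (∀ x, ‖fderiv ℝ Φ x‖ ≤ 1 + 2 * (k + 2)) →
      (∀ x, ‖Φ x‖ ≤ τ) → ∫ x, divergence Φ x ∂ν ≤ η) :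
    ∑ x ∈ t, ∫ y, divergence (contractingField k x (r x)) y ∂ν ≤ η := by
  have contDiff : ∀ x ∈ t, ContDiff ℝ 1 (contractingField k x (r x)) :=
    fun x _ => contDiff_contractingField k x (r x)
  have unique (y : E) : ∀ i ∈ t, ∀ j ∈ t, y ∈ closedBall i (r i) → y ∈ closedBall j (r j) → i = j :=
    fun i hi j hj hyi hyj => disjoint.elim_set hi hj y hyi hyj
  have integral_eq : ∫ y, divergence (fun y => ∑ x ∈ t, contractingField k x (r x) y) y ∂ν =
      ∑ x ∈ t, ∫ y, divergence (contractingField k x (r x)) y ∂ν := by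
    simp only [divergence_sum contDiff]
    exact integral_finsetSum _ fun x hx =>
      integrable_divergence (contDiff x hx) (norm_fderiv_contractingField_le k (hr x hx).1)
  rw [← integral_eq]
  refine hη _ (ContDiff.sum contDiff) (fun y => ?_) (fun y => ?_)
  · rw [fderiv_fun_sum fun x hx => (contDiff x hx).differentiable one_ne_zero y]
    refine norm_sum_le_of_subsingleton_support (by positivity)
      (fun x hx => norm_fderiv_contractingField_le k (hr x hx).1 y)
      fun i hi j hj hfi hfj => unique y i hi j hj ?_ ?_
    · exact not_imp_comm.mp (fderiv_contractingField_eq_zero k (hr i hi).1) hfi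
    · exact not_imp_comm.mp (fderiv_contractingField_eq_zero k (hr j hj).1) hfj
  · refine norm_sum_le_of_subsingleton_support hτ.le
      (fun x hx => (norm_contractingField_le k (hr x hx).1 y).trans (hr x hx).2.le)
      fun i hi j hj hfi hfj => unique y i hi j hj ?_ ?_
    · exact not_imp_comm.mp (contractingField_eq_zero k (hr i hi).1) hfi
    · exact not_imp_comm.mp (contractingField_eq_zero k (hr j hj).1) hfj

/-- Disjoint contracting fields at steep scales below `τ` are small with bounded derivatives, but
their total divergence is comparable to the mass of the balls they live on. -/
lemma HasClosableDivergence.ae_eventually_not_isSteepScale (hν : HasClosableDivergence ν)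
    (hE : 0 < finrank ℝ E) {C : ℝ} (hC : 4 / (3 / 4) ^ (16 * finrank ℝ E + 1) ≤ C) :
    ∀ᵐ x ∂ν, ∀ᶠ ρ in 𝓝[>] 0, ¬ IsSteepScale ν C x ρ := by
  simp only [ae_iff, not_eventually, not_not]
  by_contra hsteep
  set N := {x | ∃ᶠ ρ in 𝓝[>] 0, IsSteepScale ν C x ρ}
  have N_pos : 0 < ν.real N := ENNReal.toReal_pos hsteep (measure_ne_top _ _)
  have C_pos : 0 < C := lt_of_lt_of_le (by positivity) hC
  set k := 16 * finrank ℝ E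
  set c : ℝ := finrank ℝ E * (3 / 4) ^ (k + 1) / (2 * C)
  have c_pos : 0 < c := by positivity
  obtain ⟨τ, τ_pos, hτ⟩ := hν (1 + 2 * (k + 2)) (by positivity) (c * (ν.real N / 2))
    (by positivity)
  obtain ⟨t, r, hr, disjoint, half_lt⟩ := exists_finset_disjoint_closedBall_half_lt ν
    (f := fun x => {ρ | IsSteepScale ν C x ρ}) (fun x hx => hx) τ_pos hsteep
  refine (mul_lt_mul_of_pos_left half_lt c_pos).not_ge ?_
  calc c * ∑ x ∈ t, ν.real (closedBall x (r x))
      = ∑ x ∈ t, c * ν.real (closedBall x (r x)) := Finset.mul_sum _ _ _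
    _ ≤ ∑ x ∈ t, ∫ y, divergence (contractingField k x (r x)) y ∂ν :=
        Finset.sum_le_sum fun x hx => (hr x hx).1.le_integral_divergence hC
    _ ≤ c * (ν.real N / 2) :=
        sum_integral_divergence_contractingField_le k (fun x hx => (hr x hx).2) τ_pos disjoint hτ

lemma ae_eventually_pow_le_measureReal_closedBall
    (hsing : (volume : Measure E) ⟂ₘ ν) :
    ∀ᵐ x ∂ν, ∀ᶠ r in 𝓝[>] 0, r ^ finrank ℝ E ≤ ν.real (closedBall x r) := by
  filter_upwards [Besicovitch.ae_tendsto_rnDeriv (volume : Measure E) ν,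
    hsing.rnDeriv_ae_eq_zero] with x density density_eq_zero
  set v := (volume : Measure E) (ball 0 1)
  have v_pos : 0 < v := measure_ball_pos _ _ one_pos
  have v_ne_top : v ≠ ∞ := measure_ball_lt_top.ne
  rw [density_eq_zero] at density
  filter_upwards [density.eventually (gt_mem_nhds v_pos), self_mem_nhdsWithin] with r hr r_pos
  rw [Measure.addHaar_closedBall _ _ (mem_Ioi.mp r_pos).le] at hr
  have := (ENNReal.div_le_iff_le_mul (.inr v_ne_top) (.inl (measure_ne_top _ _))).mp hr.le
  rw [mul_comm, ENNReal.mul_le_mul_iff_right v_pos.ne' v_ne_top] at this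
  exact (ENNReal.ofReal_le_iff_le_toReal (measure_ne_top _ _)).mp this

lemma HasClosableDivergence.exists_ae_doubling (hν : HasClosableDivergence ν)
    (hE : 0 < finrank ℝ E) (hsing : (volume : Measure E) ⟂ₘ ν) :
    ∃ C : ℝ, 1 ≤ C ∧ ∀ᵐ x ∂ν, ∀ᶠ r in 𝓝[>] 0,
      ν.real (closedBall x (2 * r)) ≤ C * ν.real (closedBall x r) := by
  refine ⟨max (4 / (3 / 4) ^ (16 * finrank ℝ E + 1)) (4 ^ finrank ℝ E),
    le_max_of_le_right (one_le_pow₀ (by norm_num)), ?_⟩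
  filter_upwards [hν.ae_eventually_not_isSteepScale hE (le_max_left _ _),
    ae_eventually_pow_le_measureReal_closedBall hsing] with x not_steep lower
  by_contra not_doubling
  refine frequently_isSteepScale hE.ne' (le_max_right _ _) lower ?_ not_steep
  simpa only [not_eventually, not_le] using not_doubling

end Doubling

/-! ### Optimal coverings and optimal transport -/

section Covering

variable {E : Type*} [NormedAddCommGroup E] [InnerProductSpace ℝ E] [FiniteDimensional ℝ E]
  [MeasurableSpace E] [BorelSpace E] {K : Set E}

lemma card_mul_pow_le_measure_cthickening {s : Finset E} {r : ℝ} (hr : 0 ≤ r) (hs : (s : Set E) ⊆ K)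
    (disjoint : (s : Set E).PairwiseDisjoint fun x => closedBall x r) :
    ENNReal.ofReal (s.card * r ^ finrank ℝ E) * volume (ball (0 : E) 1) ≤
      volume (cthickening r K) := by
  calc ENNReal.ofReal (s.card * r ^ finrank ℝ E) * volume (ball (0 : E) 1)
      = ∑ x ∈ s, volume (closedBall x r) := by
        simp_rw [Measure.addHaar_closedBall _ _ hr]
        rw [Finset.sum_const, nsmul_eq_mul, ENNReal.ofReal_mul (by positivity),
          ENNReal.ofReal_natCast, mul_assoc]
    _ = volume (⋃ x ∈ s, closedBall x r) :=
        (measure_biUnion_finset disjoint fun _ _ => measurableSet_closedBall).symm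
    _ ≤ volume (cthickening r K) := measure_mono <| iUnion₂_subset fun x hx =>
        closedBall_subset_cthickening (hs hx) r

lemma eventually_exists_cover_closedBall_of_isCompact (hK : IsCompact K) (hK0 : volume K = 0)
    {ε : ℝ} (hε : 0 < ε) :
    ∀ᶠ δ in 𝓝[>] 0, ∃ s : Finset E, K ⊆ ⋃ x ∈ s, closedBall x δ ∧
      s.card * δ ^ finrank ℝ E ≤ ε := by
  set v := volume (ball (0 : E) 1)
  have v_pos : 0 < v := measure_ball_pos _ _ one_pos
  have v_ne_top : v ≠ ∞ := measure_ball_lt_top.ne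
  have tendsto := tendsto_measure_cthickening_of_isCompact (μ := volume) hK
  rw [hK0] at tendsto
  have small := tendsto.eventually_le_const (u := ENNReal.ofReal (ε / 5 ^ finrank ℝ E) * v)
    (ENNReal.mul_pos (by simpa using by positivity) v_pos.ne')
  filter_upwards [nhdsWithin_le_nhds small, self_mem_nhdsWithin] with δ hδ (δ_pos : 0 < δ)
  obtain ⟨u, hu, disjoint, cover⟩ :=
    Vitali.exists_disjoint_subfamily_covering_enlargement_closedBall K id
      (fun _ => δ / 5) (δ / 5) (fun _ _ => le_rfl) 5 (by norm_num)
  have card_le (s : Finset E) (hs : (s : Set E) ⊆ u) : s.card * δ ^ finrank ℝ E ≤ ε := by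
    have := (card_mul_pow_le_measure_cthickening (by positivity) (hs.trans hu)
      (disjoint.subset hs)).trans <| (measure_mono (cthickening_mono (by linarith) K)).trans hδ
    rwa [ENNReal.mul_le_mul_iff_left v_pos.ne' v_ne_top,
      ENNReal.ofReal_le_ofReal_iff (by positivity), div_pow, ← mul_div_assoc,
      div_le_div_iff_of_pos_right (by positivity)] at this
  have u_finite : u.Finite := by
    by_contra hinf
    obtain ⟨N, hN⟩ := exists_nat_gt (ε / δ ^ finrank ℝ E)
    obtain ⟨s, hs, rfl⟩ := Set.Infinite.exists_subset_card_eq hinf N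
    exact (card_le s hs).not_gt ((div_lt_iff₀ (by positivity)).mp hN)
  refine ⟨u_finite.toFinset, fun x hx => ?_, card_le _ (by simp)⟩
  obtain ⟨y, hy, hxy⟩ := cover x hx
  have x_mem := hxy (mem_closedBall_self (by positivity))
  rw [mul_div_cancel₀ δ (by norm_num : (5 : ℝ) ≠ 0)] at x_mem
  exact mem_iUnion₂.mpr ⟨y, u_finite.mem_toFinset.mpr hy, x_mem⟩

end Covering

section OptimalTransport

variable {γ ι : Type*} [Fintype ι] [Nonempty ι] (a : γ → ι → ℝ)

/-- The best net value `max_j (a p j - c j)` available to the agent `p` at prices `c`. -/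
noncomputable def bestValue (c : ι → ℝ) (p : γ) : ℝ :=
  Finset.univ.sup' Finset.univ_nonempty fun j => a p j - c j

lemma sub_le_bestValue (c : ι → ℝ) (p : γ) (j : ι) : a p j - c j ≤ bestValue a c p :=
  Finset.le_sup' (fun j => a p j - c j) (Finset.mem_univ j)

variable {a} in
lemma bestValue_le {c : ι → ℝ} {p : γ} {b : ℝ} (h : ∀ j, a p j - c j ≤ b) : bestValue a c p ≤ b :=
  Finset.sup'_le _ _ fun j _ => h j

lemma bestValue_sub_const (c : ι → ℝ) (t : ℝ) (p : γ) :
    bestValue a (fun j => c j - t) p = bestValue a c p + t := by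
  refine le_antisymm (bestValue_le fun j => ?_) (le_sub_iff_add_le.mp (bestValue_le fun j => ?_))
  · linarith [sub_le_bestValue a c p j]
  · linarith [sub_le_bestValue a (fun j => c j - t) p j]

variable [Fintype γ]

/-- The dual energy of the transport problem sending the uniform measure on the agents `γ` to the
uniform measure on `ι`. At a minimizer, every `j : ι` is a best choice of enough agents. -/
noncomputable def dualEnergy (c : ι → ℝ) : ℝ :=
  ∑ p, bestValue a c p + Fintype.card γ / Fintype.card ι * ∑ j, c j

lemma continuous_dualEnergy : Continuous (dualEnergy a) := by
  have (p : γ) : Continuous fun c => bestValue a c p :=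
    Continuous.finset_sup'_apply _ fun j _ => by fun_prop
  unfold dualEnergy
  fun_prop

lemma dualEnergy_sub_const (c : ι → ℝ) (t : ℝ) :
    dualEnergy a (fun j => c j - t) = dualEnergy a c := by
  simp only [dualEnergy, bestValue_sub_const, Finset.sum_add_distrib, Finset.sum_sub_distrib,
    Finset.sum_const, Finset.card_univ, nsmul_eq_mul]
  field_simp
  ring

lemma dualEnergy_zero_le {A : ℝ} (hA : ∀ p j, |a p j| ≤ A) :
    dualEnergy a 0 ≤ Fintype.card γ * A := by
  have : ∑ p, bestValue a 0 p ≤ ∑ _p : γ, A :=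
    Finset.sum_le_sum fun p _ => bestValue_le fun j => by
      simpa using (le_abs_self _).trans (hA p j)
  simpa [dualEnergy] using this

lemma le_dualEnergy {A : ℝ} (hA : ∀ p j, |a p j| ≤ A) {c : ι → ℝ} {i : ι} (hi : c i = 0) :
    Fintype.card γ / Fintype.card ι * ∑ j, c j - Fintype.card γ * A ≤ dualEnergy a c := by
  have : ∑ _p : γ, -A ≤ ∑ p, bestValue a c p := Finset.sum_le_sum fun p _ => by
    linarith [sub_le_bestValue a c p i, neg_le_of_abs_le (hA p i)]
  simp only [Finset.sum_const, Finset.card_univ, nsmul_eq_mul, dualEnergy] at this ⊢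
  linarith

/-- The energy is invariant under adding constants to the prices and coercive on nonnegative prices
vanishing somewhere. -/
lemma exists_forall_dualEnergy_le : ∃ c, ∀ c', dualEnergy a c ≤ dualEnergy a c' := by
  obtain ⟨A, hA⟩ : ∃ A : ℝ, ∀ p j, |a p j| ≤ A := by
    obtain ⟨A, hA⟩ := (finite_range fun q : γ × ι => |a q.1 q.2|).bddAbove
    exact ⟨A, fun p j => hA ⟨(p, j), rfl⟩⟩
  rcases isEmpty_or_nonempty γ with _ | ⟨⟨p₀⟩⟩
  · exact ⟨0, fun c' => by simp [dualEnergy]⟩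
  have A_nonneg : 0 ≤ A := (abs_nonneg _).trans (hA p₀ (Classical.arbitrary ι))
  set M := 2 * Fintype.card ι * A with M_def
  have M_nonneg : 0 ≤ M := by positivity
  obtain ⟨c, -, c_min⟩ := (isCompact_Icc (a := (0 : ι → ℝ)) (b := fun _ => M)).exists_isMinOn
    ⟨0, le_rfl, fun _ => M_nonneg⟩ (continuous_dualEnergy a).continuousOn
  refine ⟨c, fun c' => ?_⟩
  obtain ⟨i, -, hi⟩ := Finset.exists_min_image Finset.univ c' Finset.univ_nonempty
  rw [← dualEnergy_sub_const a c' (c' i)]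
  set b : ι → ℝ := fun j => c' j - c' i
  have b_nonneg (j : ι) : 0 ≤ b j := sub_nonneg.mpr (hi j (Finset.mem_univ j))
  by_cases hb : ∀ j, b j ≤ M
  · exact c_min ⟨b_nonneg, hb⟩
  · push Not at hb
    obtain ⟨j, hj⟩ := hb
    calc dualEnergy a c ≤ dualEnergy a 0 := c_min ⟨le_rfl, fun _ => M_nonneg⟩
      _ ≤ Fintype.card γ * A := dualEnergy_zero_le a hA
      _ = Fintype.card γ / Fintype.card ι * M - Fintype.card γ * A := by
          rw [M_def]
          field_simp
          ring
      _ ≤ Fintype.card γ / Fintype.card ι * ∑ j, b j - Fintype.card γ * A := by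
          gcongr
          exact hj.le.trans (Finset.single_le_sum (fun j _ => b_nonneg j) (Finset.mem_univ j))
      _ ≤ dualEnergy a b := le_dualEnergy a hA (i := i) (sub_self _)

lemma exists_pos_bestValue_update_le [DecidableEq ι] (c : ι → ℝ) (i : ι) {P : Finset γ}
    (hP : ∀ p ∉ P, ∃ j, a p i - c i < a p j - c j) : ∃ t > 0,
      ∑ p, bestValue a (Function.update c i (c i - t)) p ≤ ∑ p, bestValue a c p + P.card * t := by
  classical
  obtain ⟨t, t_pos, gap⟩ : ∃ t > 0, ∀ p ∉ P, t ≤ bestValue a c p - (a p i - c i) := by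
    have pos : ∀ p ∉ P, 0 < bestValue a c p - (a p i - c i) := fun p hp => by
      obtain ⟨j, hj⟩ := hP p hp
      linarith [sub_le_bestValue a c p j]
    rcases (Finset.univ \ P).eq_empty_or_nonempty with hempty | hne
    · exact ⟨1, one_pos, fun p hp =>
        absurd (Finset.sdiff_eq_empty_iff_subset.mp hempty (Finset.mem_univ p)) hp⟩
    · obtain ⟨p₀, hp₀, hmin⟩ :=
        Finset.exists_min_image _ (fun p => bestValue a c p - (a p i - c i)) hne
      exact ⟨_, pos p₀ (by simpa using hp₀), fun p hp => hmin p (by simpa using hp)⟩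
  refine ⟨t, t_pos, ?_⟩
  calc ∑ p, bestValue a (Function.update c i (c i - t)) p
      ≤ ∑ p, (bestValue a c p + if p ∈ P then t else 0) := by
        refine Finset.sum_le_sum fun p _ => bestValue_le fun j => ?_
        have best_j := sub_le_bestValue a c p j
        by_cases hj : j = i
        · subst hj
          rw [Function.update_self]
          split_ifs with hp
          · linarith
          · linarith [gap p hp]
        · rw [Function.update_of_ne hj]
          split_ifs <;> linarith
    _ = ∑ p, bestValue a c p + P.card * t := by
        rw [Finset.sum_add_distrib, Finset.sum_ite_mem, Finset.univ_inter, Finset.sum_const,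
          nsmul_eq_mul]

/-- At a minimizer `c` of the dual energy, lowering the price of an `i` which is a best choice for
at most one agent would decrease the energy. -/
lemma exists_potential_two_best (hcard : 2 * Fintype.card ι ≤ Fintype.card γ) :
    ∃ c : ι → ℝ, ∀ i, ∃ p q, p ≠ q ∧ (∀ j, a p j - c j ≤ a p i - c i) ∧
      (∀ j, a q j - c j ≤ a q i - c i) := by
  classical
  obtain ⟨c, c_min⟩ := exists_forall_dualEnergy_le a
  refine ⟨c, fun i => ?_⟩
  by_contra! hcon
  set P : Finset γ := {p | ∀ j, a p j - c j ≤ a p i - c i} with P_def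
  have card_P_le : (P.card : ℝ) ≤ 1 := by
    norm_cast
    refine Finset.card_le_one.mpr fun p hp q hq => by_contra fun hpq => ?_
    rw [P_def, Finset.mem_filter_univ] at hp hq
    obtain ⟨j, hj⟩ := hcon p q hpq hp
    exact (hq j).not_gt hj
  obtain ⟨t, t_pos, ht⟩ := exists_pos_bestValue_update_le a c i (P := P) fun p hp => by
    simpa only [P_def, Finset.mem_filter_univ, not_forall, not_le] using hp
  have sum_update : ∑ j, Function.update c i (c i - t) j = ∑ j, c j - t := by
    rw [Finset.sum_update_of_mem (Finset.mem_univ i),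
      ← Finset.add_sum_erase _ c (Finset.mem_univ i), Finset.sdiff_singleton_eq_erase]
    ring
  have two_le : (2 : ℝ) ≤ Fintype.card γ / Fintype.card ι := by
    rw [le_div_iff₀ (by exact_mod_cast Fintype.card_pos)]
    exact_mod_cast hcard
  have := c_min (Function.update c i (c i - t))
  rw [dualEnergy, dualEnergy, sum_update] at this
  nlinarith

end OptimalTransport

/-! ### Smooth monotone maps -/

section Softmax

variable {E : Type*} [NormedAddCommGroup E] [InnerProductSpace ℝ E] {γ : Type*}
  (P : γ → E) (b : γ → ℝ) (τ : ℝ)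

/-- The unnormalized Gibbs weight, at temperature `τ`, of the affine function with slope `P p` and
intercept `-b p`. -/
noncomputable def gibbsWeight (p : γ) (y : E) : ℝ := Real.exp ((⟪P p, y⟫ - b p) / τ)

lemma gibbsWeight_pos (p : γ) (y : E) : 0 < gibbsWeight P b τ p y := Real.exp_pos _

lemma hasFDerivAt_gibbsWeight (p : γ) (y : E) :
    HasFDerivAt (gibbsWeight P b τ p) ((gibbsWeight P b τ p y / τ) • innerSL ℝ (P p)) y := by
  have hasFDerivAt_exponent : HasFDerivAt (fun y => (⟪P p, y⟫ - b p) / τ)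
      (τ⁻¹ • innerSL ℝ (P p)) y := by
    simpa only [div_eq_inv_mul, innerSL_apply_apply] using
      ((innerSL ℝ (P p)).hasFDerivAt.sub_const (b p)).const_mul τ⁻¹
  exact hasFDerivAt_exponent.exp.congr_fderiv (by rw [smul_smul]; rfl)

lemma contDiff_gibbsWeight (p : γ) : ContDiff ℝ 1 (gibbsWeight P b τ p) := by
  have : ContDiff ℝ 1 fun y : E => ⟪P p, y⟫ := (innerSL ℝ (P p)).contDiff
  unfold gibbsWeight
  fun_prop

variable [Fintype γ]

/-- The Gibbs probabilities of the affine functions `⟪P p, y⟫ - b p` at temperature `τ`. -/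
noncomputable def gibbsProb (p : γ) (y : E) : ℝ :=
  gibbsWeight P b τ p y / ∑ q, gibbsWeight P b τ q y

/-- The average slope under the Gibbs probabilities. This is the gradient of a smooth approximation
of the convex function `y ↦ max_p (⟪P p, y⟫ - b p)`. -/
noncomputable def softmaxMap (y : E) : E := ∑ p, gibbsProb P b τ p y • P p

lemma inner_softmaxMap (y h : E) :
    ⟪softmaxMap P b τ y, h⟫ = ∑ p, gibbsProb P b τ p y * ⟪P p, h⟫ := by
  simp only [softmaxMap, sum_inner, real_inner_smul_left]

lemma gibbsProb_le_exp (p q : γ) (y : E) :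
    gibbsProb P b τ q y ≤ Real.exp (-(((⟪P p, y⟫ - b p) - (⟪P q, y⟫ - b q)) / τ)) := by
  calc gibbsProb P b τ q y ≤ gibbsWeight P b τ q y / gibbsWeight P b τ p y :=
        div_le_div_of_nonneg_left (gibbsWeight_pos _ _ _ _ _).le (gibbsWeight_pos _ _ _ _ _)
          (Finset.single_le_sum (fun q _ => (gibbsWeight_pos P b τ q y).le) (Finset.mem_univ p))
    _ = _ := by
        rw [gibbsWeight, gibbsWeight, ← Real.exp_sub]
        congr 1
        ring

variable [Nonempty γ]

lemma sum_gibbsWeight_pos (y : E) : 0 < ∑ q, gibbsWeight P b τ q y :=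
  Finset.sum_pos (fun p _ => gibbsWeight_pos P b τ p y) Finset.univ_nonempty

lemma gibbsProb_nonneg (p : γ) (y : E) : 0 ≤ gibbsProb P b τ p y :=
  div_nonneg (gibbsWeight_pos _ _ _ _ _).le (sum_gibbsWeight_pos _ _ _ _).le

lemma sum_gibbsProb (y : E) : ∑ p, gibbsProb P b τ p y = 1 := by
  simp_rw [gibbsProb]
  rw [← Finset.sum_div, div_self (sum_gibbsWeight_pos P b τ y).ne']

lemma contDiff_gibbsProb (p : γ) : ContDiff ℝ 1 (gibbsProb P b τ p) :=
  (contDiff_gibbsWeight P b τ p).div (ContDiff.sum fun q _ => contDiff_gibbsWeight P b τ q)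
    fun y => (sum_gibbsWeight_pos P b τ y).ne'

lemma contDiff_softmaxMap : ContDiff ℝ 1 (softmaxMap P b τ) :=
  ContDiff.sum fun p _ => (contDiff_gibbsProb P b τ p).smul contDiff_const

variable {P} in
lemma norm_softmaxMap_le {R : ℝ} (hR : ∀ p, ‖P p‖ ≤ R) (y : E) : ‖softmaxMap P b τ y‖ ≤ R := by
  calc ‖softmaxMap P b τ y‖ ≤ ∑ p, ‖gibbsProb P b τ p y • P p‖ := norm_sum_le _ _
    _ ≤ ∑ p, gibbsProb P b τ p y * R := by
        refine Finset.sum_le_sum fun p _ => ?_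
        rw [norm_smul, Real.norm_of_nonneg (gibbsProb_nonneg _ _ _ _ _)]
        exact mul_le_mul_of_nonneg_left (hR p) (gibbsProb_nonneg _ _ _ _ _)
    _ = R := by rw [← Finset.sum_mul, sum_gibbsProb, one_mul]

lemma sum_gibbsProb_mul_inner_sub (y h : E) :
    ∑ p, gibbsProb P b τ p y * ⟪P p - softmaxMap P b τ y, h⟫ = 0 := by
  simp only [inner_sub_left, mul_sub, Finset.sum_sub_distrib]
  rw [← Finset.sum_mul, sum_gibbsProb, one_mul, inner_softmaxMap, sub_self]

lemma hasFDerivAt_gibbsProb (p : γ) (y : E) :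
    HasFDerivAt (gibbsProb P b τ p)
      ((gibbsProb P b τ p y / τ) • innerSL ℝ (P p - softmaxMap P b τ y)) y := by
  have Z_ne := (sum_gibbsWeight_pos P b τ y).ne'
  have hasFDerivAt_sum : HasFDerivAt (fun y => ∑ q, gibbsWeight P b τ q y)
      (∑ q, (gibbsWeight P b τ q y / τ) • innerSL ℝ (P q)) y :=
    HasFDerivAt.fun_sum fun q _ => hasFDerivAt_gibbsWeight P b τ q y
  refine ((hasFDerivAt_gibbsWeight P b τ p y).mul
    ((hasDerivAt_inv Z_ne).comp_hasFDerivAt y hasFDerivAt_sum)).congr_fderiv ?_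
  ext h
  have sum_mul_inner : ∑ q, gibbsWeight P b τ q y / τ * ⟪P q, h⟫ =
      (∑ q, gibbsWeight P b τ q y) * ⟪softmaxMap P b τ y, h⟫ / τ := by
    rw [inner_softmaxMap, Finset.mul_sum, Finset.sum_div]
    refine Finset.sum_congr rfl fun q _ => ?_
    rw [gibbsProb]
    field_simp
  simp only [add_apply, smul_apply, smul_eq_mul, Function.comp_apply,
    sum_apply, innerSL_apply_apply, inner_sub_left, sum_mul_inner]
  rw [gibbsProb]
  field_simp
  ring

lemma fderiv_softmaxMap (y : E) :
    fderiv ℝ (softmaxMap P b τ) y = ∑ p, (gibbsProb P b τ p y / τ) •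
      (innerSL ℝ (P p - softmaxMap P b τ y)).smulRight (P p - softmaxMap P b τ y) := by
  have hasFDerivAt : HasFDerivAt (softmaxMap P b τ) _ y :=
    HasFDerivAt.fun_sum fun p _ => (hasFDerivAt_gibbsProb P b τ p y).smul_const (P p)
  rw [hasFDerivAt.fderiv]
  ext h
  have sum_eq_zero := congrArg (· • softmaxMap P b τ y) (sum_gibbsProb_mul_inner_sub P b τ y h)
  simp only [Finset.sum_smul, zero_smul] at sum_eq_zero
  simp only [sum_apply, smul_apply,
    ContinuousLinearMap.smulRight_apply, smul_sub, Finset.sum_sub_distrib, innerSL_apply_apply,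
    smul_eq_mul]
  have sum_div_eq_zero : ∑ p, (gibbsProb P b τ p y / τ) •
      ⟪P p - softmaxMap P b τ y, h⟫ • softmaxMap P b τ y = 0 := by
    simp only [smul_smul, ← Finset.sum_smul, div_mul_eq_mul_div, ← Finset.sum_div,
      sum_gibbsProb_mul_inner_sub, zero_div, zero_smul]
  rw [sum_div_eq_zero, sub_zero]
  simp only [smul_smul]

lemma divergence_softmaxMap [FiniteDimensional ℝ E] (y : E) :
    divergence (softmaxMap P b τ) y =
      ∑ p, gibbsProb P b τ p y / τ * ‖P p - softmaxMap P b τ y‖ ^ 2 := by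
  rw [divergence, fderiv_softmaxMap, ContinuousLinearMap.toLinearMap_sum, map_sum]
  refine Finset.sum_congr rfl fun p _ => ?_
  rw [ContinuousLinearMap.toLinearMap_smul, map_smul, ContinuousLinearMap.coe_smulRight,
    LinearMap.trace_smulRight, smul_eq_mul]
  congr 1
  exact real_inner_self_eq_norm_sq _

variable {τ} in
lemma norm_fderiv_softmaxMap_le [FiniteDimensional ℝ E] (hτ : 0 < τ) (y h : E) :
    ‖fderiv ℝ (softmaxMap P b τ) y h‖ ≤ divergence (softmaxMap P b τ) y * ‖h‖ := by
  rw [divergence_softmaxMap, fderiv_softmaxMap, Finset.sum_mul, sum_apply]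
  refine norm_sum_le_of_le _ fun p _ => ?_
  have div_nonneg : 0 ≤ gibbsProb P b τ p y / τ := div_nonneg (gibbsProb_nonneg _ _ _ _ _) hτ.le
  rw [smul_apply, ContinuousLinearMap.smulRight_apply, norm_smul, norm_smul,
    Real.norm_of_nonneg div_nonneg, mul_assoc]
  refine mul_le_mul_of_nonneg_left ?_ div_nonneg
  calc ‖innerSL ℝ (P p - softmaxMap P b τ y) h‖ * ‖P p - softmaxMap P b τ y‖
      ≤ (‖P p - softmaxMap P b τ y‖ * ‖h‖) * ‖P p - softmaxMap P b τ y‖ := by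
        gcongr; exact norm_inner_le_norm _ _
    _ = ‖P p - softmaxMap P b τ y‖ ^ 2 * ‖h‖ := by ring

variable {τ} in
lemma divergence_softmaxMap_nonneg [FiniteDimensional ℝ E] (hτ : 0 < τ) (y : E) :
    0 ≤ divergence (softmaxMap P b τ) y := by
  rw [divergence_softmaxMap]
  exact Finset.sum_nonneg fun p _ =>
    mul_nonneg (div_nonneg (gibbsProb_nonneg _ _ _ _ _) hτ.le) (sq_nonneg _)

lemma exp_neg_mul_self_le_one (s : ℝ) : Real.exp (-s) * s ≤ 1 := by
  rw [Real.exp_neg, inv_mul_le_iff₀ (Real.exp_pos _), mul_one]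
  linarith [Real.add_one_le_exp s]

variable {τ} in
lemma gibbsProb_mul_gap_le (hτ : 0 < τ) (p q : γ) (y : E) :
    gibbsProb P b τ q y * ((⟪P p, y⟫ - b p) - (⟪P q, y⟫ - b q)) ≤ τ := by
  set s := ((⟪P p, y⟫ - b p) - (⟪P q, y⟫ - b q)) / τ with hs
  have gap_eq : (⟪P p, y⟫ - b p) - (⟪P q, y⟫ - b q) = τ * s := by rw [hs]; field_simp
  rw [gap_eq]
  rcases le_total s 0 with s_nonpos | s_nonneg
  · exact (mul_nonpos_of_nonneg_of_nonpos (gibbsProb_nonneg _ _ _ _ _)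
      (mul_nonpos_of_nonneg_of_nonpos hτ.le s_nonpos)).trans hτ.le
  · calc gibbsProb P b τ q y * (τ * s) ≤ Real.exp (-s) * (τ * s) := by
          gcongr; exact gibbsProb_le_exp P b τ p q y
      _ = τ * (Real.exp (-s) * s) := by ring
      _ ≤ τ := mul_le_of_le_one_right hτ.le (exp_neg_mul_self_le_one s)

variable {P b τ} in
lemma inner_sub_le_inner_softmaxMap (hτ : 0 < τ) {p : γ} {x : E}
    (hp : ∀ q, ⟪P q, x⟫ - b q ≤ ⟪P p, x⟫ - b p) (y : E) :
    ⟪P p, y - x⟫ - τ * Fintype.card γ ≤ ⟪softmaxMap P b τ y, y - x⟫ := by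
  have term_le (q : γ) : gibbsProb P b τ q y * (⟪P p, y - x⟫ - ⟪P q, y - x⟫) ≤ τ := by
    refine le_trans ?_ (gibbsProb_mul_gap_le P b hτ p q y)
    refine mul_le_mul_of_nonneg_left ?_ (gibbsProb_nonneg _ _ _ _ _)
    rw [inner_sub_right, inner_sub_right]
    linarith [hp q]
  have sum_eq : ∑ q, gibbsProb P b τ q y * (⟪P p, y - x⟫ - ⟪P q, y - x⟫) =
      ⟪P p, y - x⟫ - ⟪softmaxMap P b τ y, y - x⟫ := by
    simp only [mul_sub, Finset.sum_sub_distrib]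
    rw [← Finset.sum_mul, sum_gibbsProb, one_mul, inner_softmaxMap]
  have sum_le := Finset.sum_le_card_nsmul Finset.univ _ _ fun q _ => term_le q
  rw [sum_eq, nsmul_eq_mul, Finset.card_univ] at sum_le
  linarith

end Softmax

/-! ### Integration by parts -/

section IntegrationByParts

variable {E : Type*} [NormedAddCommGroup E] {x : E} {ρ : ℝ}

lemma continuous_cutoff : Continuous (cutoff x ρ) := by
  unfold cutoff
  fun_prop

lemma half_le_cutoff_two_mul_sq (hρ : 0 < ρ) {y : E} (hy : y ∈ closedBall x ρ) :
    1 / 2 ≤ cutoff x (2 * ρ) y ^ 2 := by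
  have ratio_le : ‖y - x‖ ^ 2 / (2 * ρ) ^ 2 ≤ 1 / 4 := by
    rw [mem_closedBall, dist_eq_norm] at hy
    rw [div_le_iff₀ (by positivity)]
    nlinarith [norm_nonneg (y - x)]
  nlinarith [one_sub_le_cutoff x (2 * ρ) y]

variable [InnerProductSpace ℝ E] [FiniteDimensional ℝ E]

lemma hasCompactSupport_of_cutoff {f : E → ℝ} (hρ : 0 < ρ)
    (hf : ∀ y, cutoff x ρ y = 0 → f y = 0) : HasCompactSupport f :=
  .intro (isCompact_closedBall x ρ) fun _ hy => hf _ (cutoff_eq_zero hρ hy)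

variable [MeasurableSpace E] [BorelSpace E] {Φ : E → E}

theorem integral_mul_divergence {φ : E → ℝ} (hφ : ContDiff ℝ 1 φ) (hφ' : HasCompactSupport φ)
    (hΦ : ContDiff ℝ 1 Φ) :
    ∫ y, φ y * divergence Φ y = -∫ y, fderiv ℝ φ y (Φ y) := by
  set b := stdOrthonormalBasis ℝ E
  have contDiff_coord i : ContDiff ℝ 1 fun y => ⟪b i, Φ y⟫ := contDiff_const.inner ℝ hΦ
  have fderiv_coord i y v : fderiv ℝ (fun y => ⟪b i, Φ y⟫) y v = ⟪b i, fderiv ℝ Φ y v⟫ := by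
    have := (innerSL ℝ (b i)).hasFDerivAt.comp y (hΦ.differentiable one_ne_zero y).hasFDerivAt
    exact congrArg (· v) this.fderiv
  have integrable_mul i : Integrable fun y => φ y * ⟪b i, Φ y⟫ :=
    (hφ.continuous.mul (contDiff_coord i).continuous).integrable_of_hasCompactSupport hφ'.mul_right
  have integrable_mul_fderiv i : Integrable fun y => φ y * ⟪b i, fderiv ℝ Φ y (b i)⟫ := by
    have := (hΦ.continuous_fderiv one_ne_zero).clm_apply (continuous_const (y := b i))
    exact (hφ.continuous.mul (continuous_const.inner this)).integrable_of_hasCompactSupport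
      hφ'.mul_right
  have integrable_fderiv_mul i : Integrable fun y => fderiv ℝ φ y (b i) * ⟪b i, Φ y⟫ :=
    (((hφ.continuous_fderiv one_ne_zero).clm_apply continuous_const).mul
      (contDiff_coord i).continuous).integrable_of_hasCompactSupport
      (hφ'.fderiv_apply ℝ (b i)).mul_right
  have parts i : ∫ y, φ y * ⟪b i, fderiv ℝ Φ y (b i)⟫ =
      -∫ y, fderiv ℝ φ y (b i) * ⟪b i, Φ y⟫ := by
    simpa only [fderiv_coord] using integral_mul_fderiv_eq_neg_fderiv_mul_of_integrable
      (integrable_fderiv_mul i) (by simpa only [fderiv_coord] using integrable_mul_fderiv i)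
      (integrable_mul i) (fun y _ => hφ.differentiable one_ne_zero y)
      (fun y _ => (contDiff_coord i).differentiable one_ne_zero y)
  have divergence_eq y : φ y * divergence Φ y = ∑ i, φ y * ⟪b i, fderiv ℝ Φ y (b i)⟫ := by
    rw [divergence, LinearMap.trace_eq_sum_inner _ b, Finset.mul_sum]
    rfl
  have fderiv_apply_eq y : fderiv ℝ φ y (Φ y) = ∑ i, fderiv ℝ φ y (b i) * ⟪b i, Φ y⟫ := by
    conv_lhs => rw [← b.sum_repr' (Φ y)]
    simp only [map_sum, map_smul, smul_eq_mul, mul_comm]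
  simp_rw [divergence_eq, fderiv_apply_eq]
  rw [integral_finsetSum _ fun i _ => integrable_mul_fderiv i,
    integral_finsetSum _ fun i _ => integrable_fderiv_mul i, ← Finset.sum_neg_distrib]
  exact Finset.sum_congr rfl fun i _ => parts i

variable (x) in
lemma integral_cutoff_sq_mul_divergence (hρ : 0 < ρ) (hΦ : ContDiff ℝ 1 Φ) :
    ∫ y, cutoff x ρ y ^ 2 * divergence Φ y =
      4 / ρ ^ 2 * ∫ y, cutoff x ρ y * ⟪Φ y, y - x⟫ := by
  rw [integral_mul_divergence (contDiff_cutoff_pow 0 x ρ)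
    (hasCompactSupport_of_cutoff hρ fun y hy => by rw [hy, zero_pow two_ne_zero]) hΦ,
    ← integral_neg, ← integral_const_mul]
  refine integral_congr_ae (.of_forall fun y => ?_)
  simp only [(hasFDerivAt_cutoff_pow 0 x ρ y).fderiv, smul_apply, innerSL_apply_apply, smul_eq_mul,
    real_inner_comm, CharP.cast_eq_zero, zero_add, pow_one]
  ring

lemma integrable_cutoff_sq_mul_divergence (hρ : 0 < ρ) (hΦ : ContDiff ℝ 1 Φ) :
    Integrable fun y => cutoff x ρ y ^ 2 * divergence Φ y :=
  ((contDiff_cutoff_pow 0 x ρ).continuous.mul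
    (continuous_divergence hΦ)).integrable_of_hasCompactSupport
    (hasCompactSupport_of_cutoff (x := x) hρ fun y hy => by simp [hy])

lemma integrableOn_divergence_closedBall (hΦ : ContDiff ℝ 1 Φ) :
    IntegrableOn (divergence Φ) (closedBall x ρ) :=
  (continuous_divergence hΦ).continuousOn.integrableOn_compact (isCompact_closedBall x ρ)

lemma integral_cutoff_sq_mul_divergence_le (hρ : 0 < ρ) (hΦ : ContDiff ℝ 1 Φ)
    (hdiv : ∀ y, 0 ≤ divergence Φ y) :
    ∫ y, cutoff x ρ y ^ 2 * divergence Φ y ≤ ∫ y in closedBall x ρ, divergence Φ y := by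
  rw [← setIntegral_eq_integral_of_forall_compl_eq_zero (s := closedBall x ρ) fun y hy => by
    simp [cutoff_eq_zero hρ hy]]
  refine setIntegral_mono_on (integrable_cutoff_sq_mul_divergence hρ hΦ).integrableOn
    (integrableOn_divergence_closedBall hΦ) measurableSet_closedBall fun y _ => ?_
  exact mul_le_of_le_one_left (hdiv y)
    (pow_le_one₀ (cutoff_nonneg x ρ y) (cutoff_le_one x ρ y))

lemma setIntegral_divergence_le_two_mul (hρ : 0 < ρ) (hΦ : ContDiff ℝ 1 Φ)
    (hdiv : ∀ y, 0 ≤ divergence Φ y) :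
    ∫ y in closedBall x ρ, divergence Φ y ≤
      2 * ∫ y, cutoff x (2 * ρ) y ^ 2 * divergence Φ y := by
  have integrable := (integrable_cutoff_sq_mul_divergence (x := x)
    (show 0 < 2 * ρ by positivity) hΦ).const_mul 2
  rw [← integral_const_mul]
  calc _ ≤ ∫ y in closedBall x ρ, 2 * (cutoff x (2 * ρ) y ^ 2 * divergence Φ y) := by
        refine setIntegral_mono_on (integrableOn_divergence_closedBall hΦ) integrable.integrableOn
          measurableSet_closedBall fun y hy => ?_
        nlinarith [hdiv y, half_le_cutoff_two_mul_sq hρ hy]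
    _ ≤ _ := setIntegral_le_integral integrable <| .of_forall fun y =>
        mul_nonneg two_pos.le (mul_nonneg (sq_nonneg _) (hdiv y))

lemma abs_integral_cutoff_mul_le {C : ℝ} (hρ : 0 < ρ) {f : E → ℝ}
    (hf : ∀ y ∈ closedBall x ρ, |f y| ≤ C) :
    |∫ y, cutoff x ρ y * f y| ≤ C * (ρ ^ finrank ℝ E * volume.real (ball (0 : E) 1)) := by
  rw [← setIntegral_eq_integral_of_forall_compl_eq_zero (s := closedBall x ρ) fun y hy => by
    simp [cutoff_eq_zero hρ hy], ← Measure.addHaar_real_closedBall volume x hρ.le,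
    ← Real.norm_eq_abs]
  refine norm_setIntegral_le_of_norm_le_const measure_closedBall_lt_top fun y hy => ?_
  rw [norm_mul, Real.norm_of_nonneg (cutoff_nonneg x ρ y)]
  exact (mul_le_of_le_one_left (norm_nonneg _) (cutoff_le_one x ρ y)).trans (hf y hy)

variable (x) in
lemma setIntegral_divergence_mul_le {R : ℝ} (hρ : 0 < ρ) (hΦ : ContDiff ℝ 1 Φ)
    (hdiv : ∀ y, 0 ≤ divergence Φ y) (hR : ∀ y, ‖Φ y‖ ≤ R) :
    (∫ y in closedBall x ρ, divergence Φ y) * ρ ≤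
      4 * 2 ^ finrank ℝ E * R * volume.real (ball (0 : E) 1) * ρ ^ finrank ℝ E := by
  have abs_inner_le (y : E) (hy : y ∈ closedBall x (2 * ρ)) :
      |⟪Φ y, y - x⟫| ≤ R * (2 * ρ) := by
    rw [mem_closedBall, dist_eq_norm] at hy
    exact (abs_real_inner_le_norm _ _).trans
      (mul_le_mul (hR y) hy (norm_nonneg _) ((norm_nonneg _).trans (hR y)))
  have integral_le := (le_abs_self _).trans
    (abs_integral_cutoff_mul_le (show 0 < 2 * ρ by positivity) abs_inner_le)
  calc (∫ y in closedBall x ρ, divergence Φ y) * ρ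
      ≤ 2 * (∫ y, cutoff x (2 * ρ) y ^ 2 * divergence Φ y) * ρ := by
        gcongr
        exact setIntegral_divergence_le_two_mul hρ hΦ hdiv
    _ = 2 * (4 / (2 * ρ) ^ 2) * ρ * ∫ y, cutoff x (2 * ρ) y * ⟪Φ y, y - x⟫ := by
        rw [integral_cutoff_sq_mul_divergence x (by positivity) hΦ]
        ring
    _ ≤ 2 * (4 / (2 * ρ) ^ 2) * ρ *
          (R * (2 * ρ) * ((2 * ρ) ^ finrank ℝ E * volume.real (ball (0 : E) 1))) := by gcongr
    _ = _ := by
        field_simp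
        ring

lemma integrable_cutoff_mul (hρ : 0 < ρ) {f : E → ℝ} (hf : Continuous f) :
    Integrable fun y => cutoff x ρ y * f y :=
  (continuous_cutoff.mul hf).integrable_of_hasCompactSupport
    (hasCompactSupport_of_cutoff (x := x) hρ fun y hy => by simp [hy])

lemma le_integral_cutoff_mul_abs_inner (hρ : 0 < ρ) (v : E) :
    (ρ / 8) ^ finrank ℝ E * volume.real (ball (0 : E) 1) * (ρ * ‖v‖ / 8) ≤
      ∫ y, cutoff x ρ y * |⟪v, y - x⟫| := by
  set z : E := x + (ρ / (2 * ‖v‖)) • v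
  have integrand_nonneg (y : E) : 0 ≤ cutoff x ρ y * |⟪v, y - x⟫| :=
    mul_nonneg (cutoff_nonneg _ _ _) (abs_nonneg _)
  rcases eq_or_ne v 0 with v_eq | v_ne
  · simp [v_eq]
  have v_pos : 0 < ‖v‖ := norm_pos_iff.mpr v_ne
  have le_integrand (y : E) (hy : y ∈ closedBall z (ρ / 8)) :
      ρ * ‖v‖ / 8 ≤ cutoff x ρ y * |⟪v, y - x⟫| := by
    rw [mem_closedBall, dist_eq_norm] at hy
    have sub_eq : y - x = (ρ / (2 * ‖v‖)) • v + (y - z) := by simp only [z]; abel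
    have norm_sub_le : ‖y - x‖ ≤ 5 / 8 * ρ := by
      have norm_smul_eq : ‖(ρ / (2 * ‖v‖)) • v‖ = ρ / 2 := by
        rw [norm_smul, Real.norm_of_nonneg (by positivity)]
        field_simp
      rw [sub_eq]
      linarith [norm_add_le ((ρ / (2 * ‖v‖)) • v) (y - z)]
    have half_le_cutoff : 1 / 2 ≤ cutoff x ρ y := by
      have : ‖y - x‖ ^ 2 / ρ ^ 2 ≤ 1 / 2 := by
        rw [div_le_iff₀ (by positivity)]
        nlinarith [norm_nonneg (y - x)]
      linarith [one_sub_le_cutoff x ρ y]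
    have le_inner : 3 / 8 * (ρ * ‖v‖) ≤ ⟪v, y - x⟫ := by
      have inner_center : ρ / (2 * ‖v‖) * ‖v‖ ^ 2 = ρ * ‖v‖ / 2 := by field_simp
      rw [sub_eq, inner_add_right, real_inner_smul_right, real_inner_self_eq_norm_sq, inner_center]
      nlinarith [neg_le_of_abs_le (abs_real_inner_le_norm v (y - z))]
    nlinarith [le_abs_self ⟪v, y - x⟫, mul_pos hρ v_pos]
  rw [← Measure.addHaar_real_closedBall volume z (by positivity), mul_comm]
  have integrable := integrable_cutoff_mul (x := x) hρ
    (show Continuous fun y => |⟪v, y - x⟫| by fun_prop)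
  exact (setIntegral_ge_of_const_le_real measurableSet_closedBall measure_closedBall_lt_top.ne
    le_integrand integrable.integrableOn).trans
    (setIntegral_le_integral integrable (.of_forall integrand_nonneg))

/- The reflection `y ↦ 2 • x - y` exchanges the maximum of two linear functions of `y - x` with
minus their minimum, and maximum minus minimum is the absolute difference. -/
lemma two_mul_integral_cutoff_mul_max (hρ : 0 < ρ) (p q : E) :
    2 * ∫ y, cutoff x ρ y * max ⟪p, y - x⟫ ⟪q, y - x⟫ =
      ∫ y, cutoff x ρ y * |⟪p - q, y - x⟫| := by
  set g : E → ℝ := fun y => cutoff x ρ y * max ⟪p, y - x⟫ ⟪q, y - x⟫ with g_def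
  have integrable_g : Integrable g := integrable_cutoff_mul hρ (by fun_prop)
  have add_reflect (y : E) : g y + g (2 • x - y) = cutoff x ρ y * |⟪p - q, y - x⟫| := by
    have sub_eq : 2 • x - y - x = -(y - x) := by rw [two_smul]; abel
    have cutoff_eq : cutoff x ρ (2 • x - y) = cutoff x ρ y := by
      rw [cutoff, cutoff, sub_eq, norm_neg]
    rw [g_def]
    simp only [cutoff_eq, sub_eq, inner_neg_right, ← mul_add, max_neg_neg, ← sub_eq_add_neg,
      max_sub_min_eq_abs', inner_sub_left p q]
  calc 2 * ∫ y, g y = (∫ y, g y) + ∫ y, g (2 • x - y) := by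
        rw [integral_sub_left_eq_self g volume (2 • x), two_mul]
    _ = ∫ y, cutoff x ρ y * |⟪p - q, y - x⟫| := by
        rw [← integral_add integrable_g (integrable_g.comp_sub_left (2 • x))]
        exact integral_congr_ae (.of_forall add_reflect)

lemma le_setIntegral_divergence (hρ : 0 < ρ) (hΦ : ContDiff ℝ 1 Φ)
    (hdiv : ∀ y, 0 ≤ divergence Φ y) {p q : E} {t : ℝ}
    (hp : ∀ y, ⟪p, y - x⟫ - t ≤ ⟪Φ y, y - x⟫) (hq : ∀ y, ⟪q, y - x⟫ - t ≤ ⟪Φ y, y - x⟫) :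
    volume.real (ball (0 : E) 1) * ρ ^ finrank ℝ E *
        ((1 / 8) ^ finrank ℝ E * ‖p - q‖ / (4 * ρ) - 4 * t / ρ ^ 2) ≤
      ∫ y in closedBall x ρ, divergence Φ y := by
  set V := volume.real (ball (0 : E) 1)
  have t_nonneg : 0 ≤ t := by simpa using hp x
  set I : ℝ := ∫ y, cutoff x ρ y * ⟪Φ y, y - x⟫
  have integral_max_sub_le :
      (∫ y, cutoff x ρ y * max ⟪p, y - x⟫ ⟪q, y - x⟫) - ∫ y, cutoff x ρ y * t ≤ I := by
    rw [← integral_sub (integrable_cutoff_mul hρ (by fun_prop))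
      (integrable_cutoff_mul hρ continuous_const)]
    refine integral_mono ((integrable_cutoff_mul hρ (by fun_prop)).sub
      (integrable_cutoff_mul hρ continuous_const))
      (integrable_cutoff_mul hρ (hΦ.continuous.inner (by fun_prop))) fun y => ?_
    rw [← mul_sub]
    exact mul_le_mul_of_nonneg_left (sub_le_iff_le_add.mpr (max_le
      (sub_le_iff_le_add.mp (hp y)) (sub_le_iff_le_add.mp (hq y)))) (cutoff_nonneg x ρ y)
  have integral_const_le : ∫ y, cutoff x ρ y * t ≤ t * (ρ ^ finrank ℝ E * V) :=
    (le_abs_self _).trans (abs_integral_cutoff_mul_le hρ fun y _ => (abs_of_nonneg t_nonneg).le)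
  have le_integral :
      (ρ / 8) ^ finrank ℝ E * V * (ρ * ‖p - q‖ / 8) / 2 - t * (ρ ^ finrank ℝ E * V) ≤ I := by
    linarith [two_mul_integral_cutoff_mul_max (x := x) hρ p q,
      le_integral_cutoff_mul_abs_inner (x := x) hρ (p - q)]
  calc _ = 4 / ρ ^ 2 *
        ((ρ / 8) ^ finrank ℝ E * V * (ρ * ‖p - q‖ / 8) / 2 - t * (ρ ^ finrank ℝ E * V)) := by
        rw [div_pow, div_pow, one_pow]
        field_simp
        ring
    _ ≤ 4 / ρ ^ 2 * I := by gcongr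
    _ = ∫ y, cutoff x ρ y ^ 2 * divergence Φ y := (integral_cutoff_sq_mul_divergence x hρ hΦ).symm
    _ ≤ _ := integral_cutoff_sq_mul_divergence_le hρ hΦ hdiv

end IntegrationByParts

/-! ### Fields with large divergence near a null set -/

section ExpandingFields

variable {E : Type*} [NormedAddCommGroup E] [InnerProductSpace ℝ E]

/-- `Φ` is continuously differentiable and the norm of its derivative is at most its divergence, as
is the case for gradients of smooth convex functions. -/
structure IsDivergenceDominated (Φ : E → E) : Prop where
  contDiff : ContDiff ℝ 1 Φ
  norm_fderiv_le : ∀ y, ‖fderiv ℝ Φ y‖ ≤ divergence Φ y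

lemma IsDivergenceDominated.divergence_nonneg {Φ : E → E} (hΦ : IsDivergenceDominated Φ) (y : E) :
    0 ≤ divergence Φ y :=
  (norm_nonneg _).trans (hΦ.norm_fderiv_le y)

variable [FiniteDimensional ℝ E]

variable (E) in
lemma exists_grid {M : ℕ} (hM : 0 < M) :
    ∃ P : (Fin (finrank ℝ E) → Fin M) → E, (∀ f, ‖P f‖ ≤ finrank ℝ E) ∧
      Pairwise fun f g => (M : ℝ)⁻¹ ≤ ‖P f - P g‖ := by
  set b := stdOrthonormalBasis ℝ E
  refine ⟨fun f => ∑ i, ((f i : ℝ) / M) • b i, fun f => ?_, fun f g hfg => ?_⟩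
  · have norm_le_one i : ‖((f i : ℝ) / M) • b i‖ ≤ 1 := by
      rw [norm_smul, b.norm_eq_one, mul_one, Real.norm_of_nonneg (by positivity)]
      exact div_le_one_of_le₀ (by exact_mod_cast (f i).2.le) (by positivity)
    simpa using norm_sum_le_of_le Finset.univ fun i _ => norm_le_one i
  · obtain ⟨i, hi⟩ := Function.ne_iff.mp hfg
    have one_le : (1 : ℝ) ≤ |(f i : ℝ) - g i| := by
      have : ((f i : ℕ) : ℤ) - (g i : ℕ) ≠ 0 := fun h => hi (by ext; omega)
      exact_mod_cast Int.one_le_abs this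
    have inner_eq : ⟪b i, (∑ j, ((f j : ℝ) / M) • b j) - ∑ j, ((g j : ℝ) / M) • b j⟫ =
        ((f i : ℝ) - g i) / M := by
      rw [inner_sub_right, b.orthonormal.inner_right_fintype, b.orthonormal.inner_right_fintype,
        sub_div]
    calc (M : ℝ)⁻¹ ≤ |((f i : ℝ) - g i) / M| := by
          rw [abs_div, Nat.abs_cast, inv_eq_one_div]
          gcongr
      _ ≤ _ := by
          rw [← inner_eq]
          simpa using abs_real_inner_le_norm (b i) _

lemma isDivergenceDominated_softmaxMap {γ : Type*} [Fintype γ] [Nonempty γ] (P : γ → E)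
    (b : γ → ℝ) {τ : ℝ} (hτ : 0 < τ) : IsDivergenceDominated (softmaxMap P b τ) where
  contDiff := contDiff_softmaxMap P b τ
  norm_fderiv_le y := ContinuousLinearMap.opNorm_le_bound _ (divergence_softmaxMap_nonneg P b hτ y)
    (norm_fderiv_softmaxMap_le P b hτ y)

variable [MeasurableSpace E] [BorelSpace E]

lemma IsDivergenceDominated.setIntegral_mono {Φ : E → E} (hΦ : IsDivergenceDominated Φ) {x y : E}
    {r s : ℝ} (h : r + dist x y ≤ s) :
    ∫ z in closedBall x r, divergence Φ z ≤ ∫ z in closedBall y s, divergence Φ z :=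
  setIntegral_mono_set (integrableOn_divergence_closedBall hΦ.contDiff)
    (.of_forall hΦ.divergence_nonneg) (.of_forall (closedBall_subset_closedBall' h))

/- The vertices of a grid are distributed among the points of `s` by optimal transport for the
scalar product. The resulting potential has two different vertices in its subdifferential at each
point of `s`, so the gradient of a smoothing of it has a large flux there. -/
lemma exists_isDivergenceDominated_finset {s : Finset E} (hs : s.Nonempty) {M : ℕ}
    (hM : 2 * s.card ≤ M ^ finrank ℝ E) {δ : ℝ} (hδ : 0 < δ) :
    ∃ Φ : E → E, IsDivergenceDominated Φ ∧ (∀ y, ‖Φ y‖ ≤ finrank ℝ E) ∧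
      ∀ z ∈ s, volume.real (ball (0 : E) 1) * δ ^ finrank ℝ E *
        ((1 / 8) ^ finrank ℝ E / (8 * (M * δ))) ≤ ∫ y in closedBall z δ, divergence Φ y := by
  have one_le_card : 1 ≤ s.card := hs.card_pos
  have M_pos : 0 < M := Nat.pos_of_ne_zero fun M_eq => by
    rw [M_eq] at hM
    linarith [pow_le_one₀ (n := finrank ℝ E) le_rfl (zero_le_one (α := ℕ))]
  have : NeZero M := ⟨M_pos.ne'⟩
  have : Nonempty s := hs.to_subtype
  obtain ⟨P, norm_P_le, P_separated⟩ := exists_grid E M_pos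
  set a : (Fin (finrank ℝ E) → Fin M) → s → ℝ := fun p j => ⟪P p, j⟫
  obtain ⟨c, two_best⟩ := exists_potential_two_best a (by simpa using hM)
  set b := bestValue a c
  set N := (Fintype.card (Fin (finrank ℝ E) → Fin M) : ℝ)
  have N_pos : 0 < N := Nat.cast_pos.mpr Fintype.card_pos
  set τ : ℝ := (1 / 8) ^ finrank ℝ E * δ / (32 * M * N) with τ_def
  have τ_pos : 0 < τ := by positivity
  have dominated := isDivergenceDominated_softmaxMap P b τ_pos
  refine ⟨softmaxMap P b τ, dominated, norm_softmaxMap_le b τ norm_P_le, fun z hz => ?_⟩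
  obtain ⟨p, q, p_ne_q, p_best, q_best⟩ := two_best ⟨z, hz⟩
  have maximal {p} (hp : ∀ j, a p j - c j ≤ a p ⟨z, hz⟩ - c ⟨z, hz⟩) (q) :
      ⟪P q, z⟫ - b q ≤ ⟪P p, z⟫ - b p := by
    linarith [bestValue_le hp, sub_le_bestValue a c q ⟨z, hz⟩]
  refine le_trans ?_ (le_setIntegral_divergence hδ dominated.contDiff dominated.divergence_nonneg
    (inner_sub_le_inner_softmaxMap τ_pos (maximal p_best))
    (inner_sub_le_inner_softmaxMap τ_pos (maximal q_best)))
  gcongr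
  have smoothing_error :
      4 * (τ * N) / δ ^ 2 = (1 / 8) ^ finrank ℝ E * (M : ℝ)⁻¹ / (4 * δ) / 2 := by
    rw [τ_def]
    field_simp
    ring
  have main_term : (1 / 8) ^ finrank ℝ E * (M : ℝ)⁻¹ / (4 * δ) ≤
      (1 / 8) ^ finrank ℝ E * ‖P p - P q‖ / (4 * δ) := by
    gcongr
    exact P_separated p_ne_q
  have : (1 / 8) ^ finrank ℝ E / (8 * (M * δ)) =
      (1 / 8) ^ finrank ℝ E * (M : ℝ)⁻¹ / (4 * δ) / 2 := by
    field_simp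
    norm_num
  linarith

/- With mesh `M⁻¹`, where `M * δ` is a small constant `κ`, there are at least twice as many grid
points as balls of radius `δ` needed to cover the null set `K`. -/
lemma exists_isDivergenceDominated_of_isCompact {K : Set E} (hK : IsCompact K) (hK0 : volume K = 0)
    (hKne : K.Nonempty) {L : ℝ} (hL : 0 < L) :
    ∃ δ > 0, ∃ Φ : E → E, IsDivergenceDominated Φ ∧ (∀ y, ‖Φ y‖ ≤ finrank ℝ E) ∧
      ∀ x ∈ K, L * δ ^ finrank ℝ E ≤ ∫ y in closedBall x δ, divergence Φ y := by
  set V := volume.real (ball (0 : E) 1)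
  have V_pos : 0 < V := ENNReal.toReal_pos (measure_ball_pos _ _ one_pos).ne' measure_ball_lt_top.ne
  set κ : ℝ := V * (1 / 16) ^ finrank ℝ E / (8 * L) with κ_def
  have : 0 < κ := by positivity
  obtain ⟨δ, ⟨s, K_subset, card_mul_le⟩, δ_pos, δ_lt⟩ :=
    ((eventually_exists_cover_closedBall_of_isCompact hK hK0
      (show 0 < (κ / 2) ^ finrank ℝ E / 2 by positivity)).and
      (Ioo_mem_nhdsGT (show 0 < κ / 2 by positivity))).exists
  obtain ⟨x₀, hx₀⟩ := hKne
  obtain ⟨z₀, hz₀, -⟩ := mem_iUnion₂.mp (K_subset hx₀)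
  set M := ⌊κ / δ⌋₊
  have le_M_mul : κ / 2 ≤ M * δ := by
    have := Nat.lt_floor_add_one (κ / δ)
    rw [div_lt_iff₀ δ_pos] at this
    linarith
  have M_mul_le : M * δ ≤ κ := by
    rw [← le_div_iff₀ δ_pos]
    exact Nat.floor_le (by positivity)
  have card_le : 2 * s.card ≤ M ^ finrank ℝ E := by
    have : 2 * (s.card : ℝ) * δ ^ finrank ℝ E ≤ M ^ finrank ℝ E * δ ^ finrank ℝ E :=
      calc 2 * (s.card : ℝ) * δ ^ finrank ℝ E ≤ (κ / 2) ^ finrank ℝ E := by linarith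
        _ ≤ (M * δ) ^ finrank ℝ E := by gcongr
        _ = _ := mul_pow _ _ _
    exact_mod_cast le_of_mul_le_mul_right this (by positivity)
  obtain ⟨Φ, dominated, norm_le, le_integral⟩ :=
    exists_isDivergenceDominated_finset ⟨z₀, hz₀⟩ card_le δ_pos
  refine ⟨2 * δ, by positivity, Φ, dominated, norm_le, fun x hx => ?_⟩
  obtain ⟨z, hz, hxz⟩ := mem_iUnion₂.mp (K_subset hx)
  have κ_mul : V * (1 / 8) ^ finrank ℝ E = L * 2 ^ finrank ℝ E * (8 * κ) := by
    have : (1 / 8 : ℝ) = 2 * (1 / 16) := by norm_num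
    rw [κ_def, this, mul_pow]
    field_simp
  calc L * (2 * δ) ^ finrank ℝ E
      = V * δ ^ finrank ℝ E * ((1 / 8) ^ finrank ℝ E / (8 * κ)) := by
        rw [mul_pow, ← mul_div_assoc, eq_div_iff (by positivity)]
        linear_combination -(δ ^ finrank ℝ E) * κ_mul
    _ ≤ V * δ ^ finrank ℝ E * ((1 / 8) ^ finrank ℝ E / (8 * (M * δ))) := by gcongr; linarith
    _ ≤ ∫ y in closedBall z δ, divergence Φ y := le_integral z hz
    _ ≤ _ := dominated.setIntegral_mono (by linarith [mem_closedBall'.mp hxz])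

end ExpandingFields

/-! ### Averages over balls of variable radius -/

section Smoothing

variable {E : Type*} [NormedAddCommGroup E] [InnerProductSpace ℝ E] [FiniteDimensional ℝ E]
  [MeasurableSpace E] [BorelSpace E]

lemma exists_contDiff_approx {f : E → ℝ} {K : ℝ≥0} (hf : LipschitzWith K f) {σ : ℝ} (hσ : 0 < σ) :
    ∃ g : E → ℝ, ContDiff ℝ 1 g ∧ (∀ x, ‖fderiv ℝ g x‖ ≤ K) ∧ ∀ x, |g x - f x| ≤ σ := by
  have ratio_pos : 0 < σ / (K + 1) := by positivity
  let φ : ContDiffBump (0 : E) := ⟨σ / (K + 1) / 2, σ / (K + 1), by positivity, by linarith⟩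
  have integrable_mul (x : E) : Integrable fun t => φ.normed volume t * f (x - t) :=
    (φ.continuous_normed.mul (hf.continuous.comp (by fun_prop))).integrable_of_hasCompactSupport
      φ.hasCompactSupport_normed.mul_right
  set g : E → ℝ := convolution (φ.normed volume) f (ContinuousLinearMap.lsmul ℝ ℝ) volume
  have g_eq (x : E) : g x = ∫ t, φ.normed volume t * f (x - t) := rfl
  have norm_sub_le (x y : E) : ‖g x - g y‖ ≤ K * ‖x - y‖ := by
    rw [g_eq, g_eq, ← integral_sub (integrable_mul x) (integrable_mul y)]
    calc _ ≤ ∫ t, φ.normed volume t * (K * ‖x - y‖) := by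
          refine norm_integral_le_of_norm_le (φ.integrable_normed.mul_const _)
            (.of_forall fun t => ?_)
          rw [← mul_sub, norm_mul, Real.norm_of_nonneg (φ.nonneg_normed t)]
          refine mul_le_mul_of_nonneg_left ?_ (φ.nonneg_normed t)
          simpa [dist_eq_norm] using hf.dist_le_mul (x - t) (y - t)
      _ = K * ‖x - y‖ := by rw [integral_mul_const, φ.integral_normed, one_mul]
  refine ⟨g, φ.hasCompactSupport_normed.contDiff_convolution_left _ φ.contDiff_normed
    hf.continuous.locallyIntegrable, fun x => norm_fderiv_le_of_lip' ℝ K.2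
    (.of_forall fun y => norm_sub_le y x), fun x => ?_⟩
  refine φ.dist_normed_convolution_le hf.continuous.aestronglyMeasurable fun y hy => ?_
  calc dist (f y) (f x) ≤ K * dist y x := hf.dist_le_mul y x
    _ ≤ K * (σ / (K + 1)) := by gcongr; exact (mem_ball.mp hy).le
    _ ≤ σ := by
      rw [mul_div_assoc', div_le_iff₀ (by positivity)]
      nlinarith

end Smoothing

section VariableAverage

variable {E : Type*} [NormedAddCommGroup E] [InnerProductSpace ℝ E] {Φ : E → E} {S : E → ℝ}

/-- The derivative of the integrand of `variableAverage` at `x`. -/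
noncomputable def fderivRescaled (Φ : E → E) (S : E → ℝ) (x z : E) : E →L[ℝ] E :=
  (fderiv ℝ Φ (x + S x • z)).comp (.id ℝ E + (fderiv ℝ S x).smulRight z)

lemma continuous_fderivRescaled (hΦ : ContDiff ℝ 1 Φ) (hS : ContDiff ℝ 1 S) :
    Continuous fun p : E × E => fderivRescaled Φ S p.1 p.2 := by
  have continuous_fderiv_Φ := hΦ.continuous_fderiv one_ne_zero
  have := hS.continuous_fderiv one_ne_zero
  have := hS.continuous
  have continuous_smulRight : Continuous fun p : E × E => (fderiv ℝ S p.1).smulRight p.2 :=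
    show Continuous fun p : E × E => ContinuousLinearMap.smulRightL ℝ E E (fderiv ℝ S p.1) p.2 by
      fun_prop
  exact (continuous_fderiv_Φ.comp (by fun_prop)).clm_comp
    (continuous_const.add continuous_smulRight)

variable [FiniteDimensional ℝ E]

lemma trace_fderivRescaled (x z : E) : LinearMap.trace ℝ E (fderivRescaled Φ S x z) =
    divergence Φ (x + S x • z) + fderiv ℝ S x (fderiv ℝ Φ (x + S x • z) z) := by
  have comp_eq : fderivRescaled Φ S x z = fderiv ℝ Φ (x + S x • z) +
      (fderiv ℝ S x).smulRight (fderiv ℝ Φ (x + S x • z) z) := by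
    ext v
    simp [fderivRescaled]
  rw [comp_eq, ContinuousLinearMap.toLinearMap_add, map_add, ContinuousLinearMap.coe_smulRight,
    LinearMap.trace_smulRight]
  rfl

variable [MeasurableSpace E] [BorelSpace E]

/-- The integral of `Φ` over the ball of radius `S x` around `x`, rescaled to the unit ball. -/
noncomputable def variableAverage (Φ : E → E) (S : E → ℝ) (x : E) : E :=
  ∫ z in closedBall (0 : E) 1, Φ (x + S x • z)

lemma norm_variableAverage_le {R : ℝ} (hR : ∀ y, ‖Φ y‖ ≤ R) (x : E) :
    ‖variableAverage Φ S x‖ ≤ R * volume.real (ball (0 : E) 1) := by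
  refine (norm_setIntegral_le_of_norm_le_const measure_closedBall_lt_top
    fun _ _ => hR _).trans_eq ?_
  rw [Measure.addHaar_real_closedBall volume 0 zero_le_one, one_pow, one_mul]

lemma setIntegral_comp_add_smul (q : E → ℝ) (x : E) {s : ℝ} (hs : 0 < s) :
    ∫ z in closedBall (0 : E) 1, q (x + s • z) =
      (s ^ finrank ℝ E)⁻¹ * ∫ y in closedBall x s, q y := by
  have preimage_eq : (x + ·) ⁻¹' closedBall x s = closedBall 0 s := by
    ext y
    simp
  rw [Measure.setIntegral_comp_smul_of_pos volume (fun w => q (x + w)) _ hs,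
    _root_.smul_closedBall _ _ zero_le_one, smul_zero, Real.norm_of_nonneg hs.le, mul_one,
    smul_eq_mul, ← (measurePreserving_add_left volume x).setIntegral_preimage_emb
      (measurableEmbedding_addLeft x) q (closedBall x s), preimage_eq]

lemma hasFDerivAt_variableAverage (hΦ : ContDiff ℝ 1 Φ) (hS : ContDiff ℝ 1 S) (x : E) :
    HasFDerivAt (variableAverage Φ S) (∫ z in closedBall (0 : E) 1, fderivRescaled Φ S x z) x := by
  have continuous_deriv := continuous_fderivRescaled hΦ hS
  have continuous_Φ := hΦ.continuous
  obtain ⟨C, hC⟩ := ((isCompact_closedBall x 1).prod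
    (isCompact_closedBall (0 : E) 1)).exists_bound_of_continuousOn continuous_deriv.continuousOn
  refine hasFDerivAt_integral_of_dominated_of_fderiv_le (s := closedBall x 1) (bound := fun _ => C)
    (F := fun x z => Φ (x + S x • z)) (F' := fun x z => fderivRescaled Φ S x z)
    (closedBall_mem_nhds x one_pos) (.of_forall fun y => ?_) ?_ ?_ ?_ ?_
    (.of_forall fun z y _ => ?_)
  · exact (by fun_prop : Continuous fun z => Φ (y + S y • z)).aestronglyMeasurable
  · exact (by fun_prop : Continuous fun z => Φ (x + S x • z)).continuousOn.integrableOn_compact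
      (isCompact_closedBall _ _)
  · exact (continuous_deriv.comp (by fun_prop : Continuous fun z => (x, z))).aestronglyMeasurable
  · filter_upwards [ae_restrict_mem measurableSet_closedBall] with z hz y hy
    using hC (y, z) ⟨hy, hz⟩
  · exact integrableOn_const measure_closedBall_lt_top.ne
  · exact (hΦ.differentiable one_ne_zero _).hasFDerivAt.comp y
      ((hasFDerivAt_id y).add ((hS.differentiable one_ne_zero y).hasFDerivAt.smul_const z))

lemma contDiff_variableAverage (hΦ : ContDiff ℝ 1 Φ) (hS : ContDiff ℝ 1 S) :
    ContDiff ℝ 1 (variableAverage Φ S) :=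
  contDiff_one_iff_hasFDerivAt.mpr ⟨_, continuous_parametric_integral_of_continuous
    (continuous_fderivRescaled hΦ hS) (isCompact_closedBall _ _), hasFDerivAt_variableAverage hΦ hS⟩

lemma integrableOn_fderivRescaled (hΦ : ContDiff ℝ 1 Φ) (hS : ContDiff ℝ 1 S) (x : E) :
    IntegrableOn (fderivRescaled Φ S x) (closedBall 0 1) :=
  ((continuous_fderivRescaled hΦ hS).comp
    (by fun_prop : Continuous fun z => (x, z))).continuousOn.integrableOn_compact
    (isCompact_closedBall _ _)

lemma integrableOn_divergence_rescaled (hΦ : ContDiff ℝ 1 Φ) (x : E) (s : ℝ) :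
    IntegrableOn (fun z => divergence Φ (x + s • z)) (closedBall 0 1) :=
  ((continuous_divergence hΦ).comp
    (by fun_prop : Continuous fun z => x + s • z)).continuousOn.integrableOn_compact
    (isCompact_closedBall _ _)

lemma norm_fderiv_variableAverage_le (hΦ : IsDivergenceDominated Φ) (hS : ContDiff ℝ 1 S) {x : E}
    (hx : ‖fderiv ℝ S x‖ ≤ 1 / 2) :
    ‖fderiv ℝ (variableAverage Φ S) x‖ ≤
      3 / 2 * ∫ z in closedBall (0 : E) 1, divergence Φ (x + S x • z) := by
  rw [(hasFDerivAt_variableAverage hΦ.contDiff hS x).fderiv, ← integral_const_mul]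
  refine norm_integral_le_of_norm_le
    ((integrableOn_divergence_rescaled hΦ.contDiff x (S x)).const_mul _) ?_
  filter_upwards [ae_restrict_mem measurableSet_closedBall] with z hz
  have norm_inner_le : ‖ContinuousLinearMap.id ℝ E + (fderiv ℝ S x).smulRight z‖ ≤ 3 / 2 :=
    calc _ ≤ ‖ContinuousLinearMap.id ℝ E‖ + ‖(fderiv ℝ S x).smulRight z‖ := norm_add_le _ _
      _ ≤ 1 + 1 / 2 * 1 := by
        rw [ContinuousLinearMap.norm_smulRight_apply]
        gcongr
        · exact ContinuousLinearMap.norm_id_le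
        · exact mem_closedBall_zero_iff.mp hz
      _ = 3 / 2 := by norm_num
  calc _ ≤ ‖fderiv ℝ Φ (x + S x • z)‖ * ‖ContinuousLinearMap.id ℝ E + (fderiv ℝ S x).smulRight z‖ :=
        ContinuousLinearMap.opNorm_comp_le _ _
    _ ≤ divergence Φ (x + S x • z) * (3 / 2) := by
        gcongr
        exacts [hΦ.divergence_nonneg _, hΦ.norm_fderiv_le _]
    _ = _ := mul_comm _ _

lemma half_integral_le_divergence_variableAverage (hΦ : IsDivergenceDominated Φ)
    (hS : ContDiff ℝ 1 S) {x : E} (hx : ‖fderiv ℝ S x‖ ≤ 1 / 2) :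
    1 / 2 * ∫ z in closedBall (0 : E) 1, divergence Φ (x + S x • z) ≤
      divergence (variableAverage Φ S) x := by
  set tr : (E →L[ℝ] E) →L[ℝ] ℝ :=
    LinearMap.toContinuousLinearMap ((LinearMap.trace ℝ E).comp (ContinuousLinearMap.coeLM ℝ))
  have integrable := integrableOn_fderivRescaled hΦ.contDiff hS x
  have divergence_eq : divergence (variableAverage Φ S) x =
      ∫ z in closedBall (0 : E) 1, tr (fderivRescaled Φ S x z) := by
    rw [tr.integral_comp_comm integrable,
      ← (hasFDerivAt_variableAverage hΦ.contDiff hS x).fderiv]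
    rfl
  rw [divergence_eq, ← integral_const_mul]
  refine setIntegral_mono_on
    ((integrableOn_divergence_rescaled hΦ.contDiff x (S x)).const_mul _)
    (tr.integrable_comp integrable) measurableSet_closedBall fun z hz => ?_
  have norm_fderiv_apply_le :
      ‖fderiv ℝ Φ (x + S x • z) z‖ ≤ divergence Φ (x + S x • z) := by
    refine (ContinuousLinearMap.le_of_opNorm_le _ (hΦ.norm_fderiv_le _) z).trans ?_
    exact mul_le_of_le_one_right (hΦ.divergence_nonneg _) (mem_closedBall_zero_iff.mp hz)
  have trace_eq : tr (fderivRescaled Φ S x z) = _ := trace_fderivRescaled x z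
  have abs_le : |fderiv ℝ S x (fderiv ℝ Φ (x + S x • z) z)| ≤
      1 / 2 * divergence Φ (x + S x • z) :=
    (ContinuousLinearMap.le_of_opNorm_le _ hx _).trans (by gcongr)
  linarith [neg_le_of_abs_le abs_le]

lemma norm_fderiv_variableAverage_le_of_setIntegral_le (hΦ : IsDivergenceDominated Φ)
    (hS : ContDiff ℝ 1 S) {x : E} (hx : ‖fderiv ℝ S x‖ ≤ 1 / 2) (hSx : 0 < S x) {L a : ℝ}
    (h : ∫ y in closedBall x (S x), divergence Φ y ≤ L * (a * S x) ^ finrank ℝ E) :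
    ‖fderiv ℝ (variableAverage Φ S) x‖ ≤ L * (3 / 2 * a ^ finrank ℝ E) := by
  refine (norm_fderiv_variableAverage_le hΦ hS hx).trans ?_
  rw [mul_pow, mul_comm (a ^ _), ← mul_assoc, mul_comm L, mul_assoc,
    ← inv_mul_le_iff₀ (pow_pos hSx _), ← setIntegral_comp_add_smul _ _ hSx] at h
  linarith

lemma le_divergence_variableAverage_of_le_setIntegral (hΦ : IsDivergenceDominated Φ)
    (hS : ContDiff ℝ 1 S) {x : E} (hx : ‖fderiv ℝ S x‖ ≤ 1 / 2) (hSx : 0 < S x) {L a : ℝ}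
    (h : L * (a * S x) ^ finrank ℝ E ≤ ∫ y in closedBall x (S x), divergence Φ y) :
    L * (1 / 2 * a ^ finrank ℝ E) ≤ divergence (variableAverage Φ S) x := by
  refine le_trans ?_ (half_integral_le_divergence_variableAverage hΦ hS hx)
  rw [mul_pow, mul_comm (a ^ _), ← mul_assoc, mul_comm L, mul_assoc,
    ← le_inv_mul_iff₀ (pow_pos hSx _), ← setIntegral_comp_add_smul _ _ hSx] at h
  linarith

end VariableAverage

/-! ### A field with small norm and divergence bounded below on many balls -/

section AdaptedRadius

variable {X : Type*} [PseudoMetricSpace X] {P : Set (X × ℝ)} {F : Set X} {δ R : ℝ}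

/-- A radius function adapted to a family `P` of balls, given by center and radius, with centers in
`F`: up to a bounded factor it is the radius of a ball of `P` on a neighborhood of that ball, for
balls which are large compared to their neighbors, while `(y, r) ∈ P` fails for `r` large compared
to the radius function near `y`. -/
noncomputable def adaptedRadius (P : Set (X × ℝ)) (F : Set X) (δ : ℝ) (x : X) : ℝ :=
  max (max (⨆ p : P, (4 * p.1.2 - dist x p.1.1 / 2)) δ) (infDist x F / 2)

lemma le_adaptedRadius (P : Set (X × ℝ)) (F : Set X) (δ : ℝ) (x : X) : δ ≤ adaptedRadius P F δ x :=
  (le_max_right _ _).trans (le_max_left _ _)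

lemma sub_dist_le_ciSup (hR : ∀ p ∈ P, p.2 ≤ R) {p : X × ℝ} (hp : p ∈ P) (x : X) :
    4 * p.2 - dist x p.1 / 2 ≤ ⨆ p : P, (4 * p.1.2 - dist x p.1.1 / 2) := by
  refine le_ciSup (f := fun p : P => 4 * p.1.2 - dist x p.1.1 / 2) ⟨4 * R, ?_⟩ ⟨p, hp⟩
  rintro _ ⟨q, rfl⟩
  linarith [hR q q.2, dist_nonneg (x := x) (y := q.1.1)]

lemma sub_dist_le_adaptedRadius (hR : ∀ p ∈ P, p.2 ≤ R) {p : X × ℝ} (hp : p ∈ P) (F : Set X)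
    (δ : ℝ) (x : X) : 4 * p.2 - dist x p.1 / 2 ≤ adaptedRadius P F δ x :=
  (sub_dist_le_ciSup hR hp x).trans ((le_max_left _ _).trans (le_max_left _ _))

lemma ciSup_sub_dist_le (hR : ∀ p ∈ P, p.2 ≤ R) (hP : P.Nonempty) (x y : X) :
    ⨆ p : P, (4 * p.1.2 - dist x p.1.1 / 2) ≤
      (⨆ p : P, (4 * p.1.2 - dist y p.1.1 / 2)) + dist x y / 2 := by
  have := hP.to_subtype
  refine ciSup_le fun p => ?_
  linarith [sub_dist_le_ciSup hR p.2 y, dist_triangle_left y p.1.1 x]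

lemma lipschitzWith_adaptedRadius (hR : ∀ p ∈ P, p.2 ≤ R) (hP : P.Nonempty) (F : Set X) (δ : ℝ) :
    LipschitzWith (1 / 2) (adaptedRadius P F δ) := by
  refine .of_le_add_mul _ fun x y => ?_
  have : 0 ≤ dist x y := dist_nonneg
  have half_eq : ((1 / 2 : ℝ≥0) : ℝ) * dist x y = dist x y / 2 := by
    push_cast
    ring
  have infDist_le : infDist x F ≤ infDist y F + dist x y := infDist_le_infDist_add_dist
  rw [half_eq]
  refine max_le (max_le ?_ ?_) ?_
  · exact (ciSup_sub_dist_le hR hP x y).trans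
      (add_le_add_left ((le_max_left _ _).trans (le_max_left _ _)) _)
  · linarith [le_adaptedRadius P F δ y]
  · linarith [show infDist y F / 2 ≤ adaptedRadius P F δ y from le_max_right _ _]

lemma exists_notMem_of_adaptedRadius (hR : ∀ p ∈ P, p.2 ≤ R) (hF : F.Nonempty) (hδ : 0 < δ)
    (x : X) : ∃ y ∈ F, ∃ r > 0, (y, r) ∉ P ∧ dist x y + 2 * adaptedRadius P F δ x ≤ r ∧
      r ≤ 5 * adaptedRadius P F δ x := by
  set S := adaptedRadius P F δ x
  have S_pos : 0 < S := hδ.trans_le (le_adaptedRadius P F δ x)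
  have infDist_lt : infDist x F < 3 * S := by
    linarith [show infDist x F / 2 ≤ S from le_max_right _ _]
  obtain ⟨y, hy, dist_lt⟩ := (infDist_lt_iff hF).mp infDist_lt
  have : 0 ≤ dist x y := dist_nonneg
  refine ⟨y, hy, dist x y + 2 * S, by positivity, fun mem => ?_, le_rfl, by linarith⟩
  linarith [sub_dist_le_adaptedRadius hR mem F δ x]

lemma exists_mem_adaptedRadius_le (hR : ∀ p ∈ P, p.2 ≤ R) (hPF : ∀ p ∈ P, p.1 ∈ F) (hδ : 0 < δ)
    {x₀ : X} (hx₀ : (x₀, δ) ∈ P) :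
    ∃ y r, (y, r) ∈ P ∧ dist x₀ y ≤ 8 * r ∧
      ∀ x ∈ closedBall y (r / 2), adaptedRadius P F δ x ≤ 28 / 5 * r := by
  have : Nonempty P := ⟨_, hx₀⟩
  have four_mul_le : 4 * δ ≤ ⨆ p : P, (4 * p.1.2 - dist x₀ p.1.1 / 2) := by
    simpa using sub_dist_le_ciSup hR hx₀ x₀
  obtain ⟨⟨⟨y, r⟩, hyr⟩, almost_sup⟩ := exists_lt_of_lt_ciSup (sub_lt_self
    (⨆ p : P, (4 * p.1.2 - dist x₀ p.1.1 / 2)) hδ)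
  have : 0 ≤ dist x₀ y := dist_nonneg
  dsimp only at almost_sup
  refine ⟨y, r, hyr, by linarith, fun x hx => max_le (max_le ?_ (by linarith)) ?_⟩
  · linarith [ciSup_sub_dist_le hR ⟨_, hyr⟩ x x₀, dist_triangle_right x x₀ y, mem_closedBall.mp hx]
  · linarith [infDist_le_dist_of_mem (x := x) (hPF _ hyr), mem_closedBall.mp hx]

end AdaptedRadius

section AdaptedField

variable {E : Type*} [NormedAddCommGroup E] [InnerProductSpace ℝ E]

lemma divergence_const_smul {Φ : E → E} {x : E} (hΦ : DifferentiableAt ℝ Φ x) (c : ℝ) :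
    divergence (fun y => c • Φ y) x = c * divergence Φ x := by
  rw [divergence, fderiv_fun_const_smul hΦ, ContinuousLinearMap.toLinearMap_smul, map_smul]
  rfl

variable [FiniteDimensional ℝ E] [MeasurableSpace E] [BorelSpace E]

/-- The balls, given by center and radius, with center in `F` and flux of `Φ` through their boundary
at least `L` times the power `finrank ℝ E` of their radius. -/
def fluxBalls (Φ : E → E) (F : Set E) (L : ℝ) : Set (E × ℝ) :=
  {p | p.1 ∈ F ∧ 0 < p.2 ∧ L * p.2 ^ finrank ℝ E ≤ ∫ y in closedBall p.1 p.2, divergence Φ y}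

lemma radius_le_of_mem_fluxBalls {Φ : E → E} (hΦ : IsDivergenceDominated Φ) {R : ℝ}
    (hR : ∀ y, ‖Φ y‖ ≤ R) {F : Set E} {L : ℝ} (hL : 0 < L) {p : E × ℝ} (hp : p ∈ fluxBalls Φ F L) :
    p.2 ≤ 4 * 2 ^ finrank ℝ E * R * volume.real (ball (0 : E) 1) / L := by
  obtain ⟨-, radius_pos, flux_ge⟩ := hp
  have flux_le := setIntegral_divergence_mul_le p.1 radius_pos hΦ.contDiff hΦ.divergence_nonneg hR
  rw [le_div_iff₀ hL]
  refine le_of_mul_le_mul_right ?_ (pow_pos radius_pos (finrank ℝ E))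
  calc p.2 * L * p.2 ^ finrank ℝ E = L * p.2 ^ finrank ℝ E * p.2 := by ring
    _ ≤ (∫ y in closedBall p.1 p.2, divergence Φ y) * p.2 := by gcongr
    _ ≤ _ := flux_le

/- For the radius function `S`, the flux of `Φ` through the sphere of radius `S x` around `x` is
at most of order `L * S x ^ finrank ℝ E` everywhere, and at least of this order near some ball close
to each point of `F`. -/
lemma IsDivergenceDominated.exists_radius {Φ : E → E} (hΦ : IsDivergenceDominated Φ) {R : ℝ}
    (hR : ∀ y, ‖Φ y‖ ≤ R) {F : Set E} (hF : F.Nonempty) {L δ : ℝ} (hL : 0 < L)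
    (hδ : ∀ x ∈ F, (x, δ) ∈ fluxBalls Φ F L) :
    ∃ S : E → ℝ, ContDiff ℝ 1 S ∧ (∀ x, ‖fderiv ℝ S x‖ ≤ 1 / 2) ∧ (∀ x, 0 < S x) ∧
      (∀ x, ∫ y in closedBall x (S x), divergence Φ y ≤ L * (6 * S x) ^ finrank ℝ E) ∧
      ∀ x₀ ∈ F, ∃ y r, (y, r) ∈ fluxBalls Φ F L ∧ dist x₀ y ≤ 8 * r ∧ ∀ x ∈ closedBall y (r / 2),
        L * (1 / 7 * S x) ^ finrank ℝ E ≤ ∫ z in closedBall x (S x), divergence Φ z := by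
  have radius_le (p) (hp : p ∈ fluxBalls Φ F L) := radius_le_of_mem_fluxBalls hΦ hR hL hp
  obtain ⟨x₁, hx₁⟩ := hF
  have δ_pos : 0 < δ := (hδ x₁ hx₁).2.1
  set S₀ := adaptedRadius (fluxBalls Φ F L) F δ
  have δ_le : ∀ x, δ ≤ S₀ x := le_adaptedRadius _ _ _
  obtain ⟨S, contDiff_S, norm_fderiv_le, abs_sub_le⟩ := exists_contDiff_approx
    (lipschitzWith_adaptedRadius radius_le ⟨_, hδ x₁ hx₁⟩ F δ) (show 0 < δ / 16 by positivity)
  have le_S x : 15 / 16 * S₀ x ≤ S x := by linarith [neg_le_of_abs_le (abs_sub_le x), δ_le x]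
  have S_le x : S x ≤ 17 / 16 * S₀ x := by linarith [le_of_abs_le (abs_sub_le x), δ_le x]
  have S_pos x : 0 < S x := by linarith [le_S x, δ_le x]
  refine ⟨S, contDiff_S, by simpa using norm_fderiv_le, S_pos, fun x => ?_, fun x₀ hx₀ => ?_⟩
  · obtain ⟨y, hy, r, r_pos, notMem, le_r, r_le⟩ :=
      exists_notMem_of_adaptedRadius radius_le ⟨x₁, hx₁⟩ δ_pos x
    have flux_lt : ∫ z in closedBall y r, divergence Φ z < L * r ^ finrank ℝ E :=
      not_le.mp fun flux_ge => notMem ⟨hy, r_pos, flux_ge⟩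
    calc ∫ z in closedBall x (S x), divergence Φ z ≤ ∫ z in closedBall y r, divergence Φ z :=
          hΦ.setIntegral_mono (by linarith [S_le x, δ_le x])
      _ ≤ L * r ^ finrank ℝ E := flux_lt.le
      _ ≤ L * (6 * S x) ^ finrank ℝ E := by
          gcongr
          linarith [le_S x, δ_le x]
  · obtain ⟨y, r, hyr, dist_le, le_r⟩ :=
      exists_mem_adaptedRadius_le radius_le (fun p hp => hp.1) δ_pos (hδ x₀ hx₀)
    refine ⟨y, r, hyr, dist_le, fun x hx => ?_⟩
    have r_pos : 0 < r := hyr.2.1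
    have dist_xy : dist x y ≤ r / 2 := mem_closedBall.mp hx
    calc L * (1 / 7 * S x) ^ finrank ℝ E ≤ L * r ^ finrank ℝ E := by
          have := S_pos x
          gcongr
          linarith [S_le x, le_r x hx]
      _ ≤ ∫ z in closedBall y r, divergence Φ z := hyr.2.2
      _ ≤ _ := hΦ.setIntegral_mono <| by
          rw [dist_comm]
          linarith [le_S x, sub_dist_le_adaptedRadius radius_le hyr F δ x]

lemma exists_field_divergence_ge_of_scale {F K : Set E} (hK : IsCompact K) (hK0 : volume K = 0)
    (hFK : F ⊆ K) (hF : F.Nonempty) {L : ℝ} (hL : 0 < L) :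
    ∃ Φ : E → E, ContDiff ℝ 1 Φ ∧ (∀ x, ‖fderiv ℝ Φ x‖ ≤ 3 / 2 * 6 ^ finrank ℝ E) ∧
      (∀ x, ‖Φ x‖ ≤ 4 * 2 ^ finrank ℝ E * finrank ℝ E * volume.real (ball (0 : E) 1) / L) ∧
      (∀ x, 0 ≤ divergence Φ x) ∧
      ∀ x₀ ∈ F, ∃ y ∈ F, ∃ r > 0,
        r ≤ 4 * 2 ^ finrank ℝ E * finrank ℝ E * volume.real (ball (0 : E) 1) / L ∧
        dist x₀ y ≤ 8 * r ∧
        ∀ x ∈ closedBall y (r / 2), 1 / 2 * (1 / 7) ^ finrank ℝ E ≤ divergence Φ x := by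
  obtain ⟨δ, δ_pos, Φ, dominated, norm_le, flux_ge⟩ :=
    exists_isDivergenceDominated_of_isCompact hK hK0 (hF.mono hFK) hL
  obtain ⟨S, contDiff_S, norm_fderiv_S_le, S_pos, flux_le, exists_ball⟩ :=
    dominated.exists_radius norm_le hF hL fun x hx => ⟨hx, δ_pos, flux_ge x (hFK hx)⟩
  have contDiff_average := contDiff_variableAverage dominated.contDiff contDiff_S
  have differentiable_average := contDiff_average.differentiable one_ne_zero
  refine ⟨fun x => L⁻¹ • variableAverage Φ S x, contDiff_average.const_smul _, fun x => ?_,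
    fun x => ?_, fun x => ?_, fun x₀ hx₀ => ?_⟩
  · rw [fderiv_fun_const_smul (differentiable_average x), norm_smul,
      Real.norm_of_nonneg (by positivity), inv_mul_le_iff₀ hL]
    exact norm_fderiv_variableAverage_le_of_setIntegral_le dominated contDiff_S
      (norm_fderiv_S_le x) (S_pos x) (flux_le x)
  · rw [norm_smul, Real.norm_of_nonneg (by positivity), inv_mul_eq_div]
    gcongr
    refine (norm_variableAverage_le norm_le x).trans ?_
    rw [mul_assoc (4 * 2 ^ finrank ℝ E : ℝ)]
    refine le_mul_of_one_le_left (by positivity) ?_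
    linarith [one_le_pow₀ (n := finrank ℝ E) (one_le_two (α := ℝ))]
  · rw [divergence_const_smul (differentiable_average x)]
    have integral_nonneg : 0 ≤ ∫ z in closedBall (0 : E) 1, divergence Φ (x + S x • z) :=
      integral_nonneg fun z => dominated.divergence_nonneg _
    exact mul_nonneg (by positivity) ((by positivity : (0 : ℝ) ≤ 1 / 2 * _).trans
      (half_integral_le_divergence_variableAverage dominated contDiff_S (norm_fderiv_S_le x)))
  · obtain ⟨y, r, hyr, dist_le, flux_ge⟩ := exists_ball x₀ hx₀
    refine ⟨y, hyr.1, r, hyr.2.1, radius_le_of_mem_fluxBalls dominated norm_le hL hyr, dist_le,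
      fun x hx => ?_⟩
    rw [divergence_const_smul (differentiable_average x), le_inv_mul_iff₀ hL]
    exact le_divergence_variableAverage_of_le_setIntegral dominated contDiff_S
      (norm_fderiv_S_le x) (S_pos x) (flux_ge x hx)

theorem exists_field_divergence_ge {F K : Set E} (hK : IsCompact K) (hK0 : volume K = 0)
    (hFK : F ⊆ K) (hF : F.Nonempty) {ε : ℝ} (hε : 0 < ε) :
    ∃ Φ : E → E, ContDiff ℝ 1 Φ ∧ (∀ x, ‖fderiv ℝ Φ x‖ ≤ 3 / 2 * 6 ^ finrank ℝ E) ∧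
      (∀ x, ‖Φ x‖ ≤ ε) ∧ (∀ x, 0 ≤ divergence Φ x) ∧
      ∀ x₀ ∈ F, ∃ y ∈ F, ∃ r > 0, r ≤ ε ∧ dist x₀ y ≤ 8 * r ∧
        ∀ x ∈ closedBall y (r / 2), 1 / 2 * (1 / 7) ^ finrank ℝ E ≤ divergence Φ x := by
  set C := 4 * 2 ^ finrank ℝ E * finrank ℝ E * volume.real (ball (0 : E) 1)
  have : 0 ≤ C := by positivity
  have scale_pos : 0 < C / ε + 1 := by positivity
  have C_div_le : C / (C / ε + 1) ≤ ε := by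
    rw [div_le_iff₀ scale_pos, mul_add, mul_div_cancel₀ _ hε.ne']
    linarith
  obtain ⟨Φ, contDiff, norm_fderiv_le, norm_le, divergence_nonneg, exists_ball⟩ :=
    exists_field_divergence_ge_of_scale hK hK0 hFK hF scale_pos
  refine ⟨Φ, contDiff, norm_fderiv_le, fun x => (norm_le x).trans C_div_le, divergence_nonneg,
    fun x₀ hx₀ => ?_⟩
  obtain ⟨y, hy, r, r_pos, r_le, ball⟩ := exists_ball x₀ hx₀
  exact ⟨y, hy, r, r_pos, r_le.trans C_div_le, ball⟩

end AdaptedField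

/-! ### Singular measures with closable divergence vanish -/

section Covering

variable {X : Type*} [PseudoMetricSpace X] [MeasurableSpace X] {μ : Measure X} {C ρ : ℝ}

/-- The points at which `μ` is doubling with constant `C` at scales below `ρ`. -/
def doublingSet (μ : Measure X) (C ρ : ℝ) : Set X :=
  {x | ∀ r ∈ Ioo 0 ρ, μ.real (closedBall x (2 * r)) ≤ C * μ.real (closedBall x r)}

lemma measureReal_closedBall_two_pow_mul_le (hC : 0 ≤ C) {x : X} (hx : x ∈ doublingSet μ C ρ)
    {r : ℝ} (hr : 0 < r) (k : ℕ) (hk : 2 ^ k * r < 2 * ρ) :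
    μ.real (closedBall x (2 ^ k * r)) ≤ C ^ k * μ.real (closedBall x r) := by
  induction k with
  | zero => simp
  | succ k ih =>
    have smaller : 2 ^ k * r < ρ := by
      rw [pow_succ'] at hk
      linarith
    calc μ.real (closedBall x (2 ^ (k + 1) * r)) = μ.real (closedBall x (2 * (2 ^ k * r))) := by
          rw [pow_succ', mul_assoc]
      _ ≤ C * μ.real (closedBall x (2 ^ k * r)) := hx _ ⟨by positivity, smaller⟩
      _ ≤ C * (C ^ k * μ.real (closedBall x r)) := by
          gcongr
          exact ih (by linarith [show 0 < 2 ^ k * r by positivity])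
      _ = C ^ (k + 1) * μ.real (closedBall x r) := by ring

lemma exists_measure_inter_doublingSet_ne_zero {K : Set X} (hK : μ Kᶜ = 0) (hμ : μ ≠ 0)
    (hdoubling : ∀ᵐ x ∂μ, ∀ᶠ r in 𝓝[>] 0,
      μ.real (closedBall x (2 * r)) ≤ C * μ.real (closedBall x r)) :
    ∃ ρ > 0, μ (K ∩ doublingSet μ C ρ) ≠ 0 := by
  by_contra! null
  have union_null : μ (⋃ k : ℕ, K ∩ doublingSet μ C (1 / (k + 1))) = 0 :=
    measure_iUnion_null fun k => null _ (by positivity)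
  have union_full : ∀ᵐ x ∂μ, x ∈ ⋃ k : ℕ, K ∩ doublingSet μ C (1 / (k + 1)) := by
    filter_upwards [hdoubling, measure_eq_zero_iff_ae_notMem.mp hK] with x doubling hx
    obtain ⟨ρ, ρ_pos, doubling⟩ := mem_nhdsGT_iff_exists_Ioo_subset.mp doubling
    obtain ⟨k, hk⟩ := exists_nat_one_div_lt (mem_Ioi.mp ρ_pos)
    exact mem_iUnion.mpr ⟨k, not_not.mp hx, fun r hr => doubling ⟨hr.1, hr.2.trans hk⟩⟩
  refine hμ (Measure.measure_univ_eq_zero.mp ?_)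
  rwa [← measure_congr (eventuallyEq_univ.mpr union_full)]

variable [IsFiniteMeasure μ] [OpensMeasurableSpace X] [TopologicalSpace.SeparableSpace X]

/- Passing from `8 * r` to `r / 2` costs a factor 16 in the radius, and the Vitali covering lemma a
factor 4. -/
lemma exists_subfamily_measureReal_le_of_doubling (hC : 1 ≤ C) {F : Set X}
    (hF : F ⊆ doublingSet μ C ρ) {P : Set (X × ℝ)} (hP : ∀ p ∈ P, p.1 ∈ F ∧ 0 < p.2 ∧ p.2 ≤ ρ / 32)
    (hcover : ∀ x ∈ F, ∃ p ∈ P, dist x p.1 ≤ 8 * p.2) :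
    ∃ u ⊆ P, u.Countable ∧
      μ.real F ≤ C ^ 6 * μ.real (⋃ p ∈ u, closedBall p.1 (p.2 / 2)) := by
  obtain ⟨u, subset, disjoint, enlarged⟩ :=
    Vitali.exists_disjoint_subfamily_covering_enlargement_closedBall P (·.1) (8 * ·.2)
      (8 * (ρ / 32)) (fun p hp => by linarith [(hP p hp).2.2]) 4 (by norm_num)
  have countable : u.Countable := disjoint.countable_of_nonempty_interior fun p hp =>
    ⟨p.1, mem_interior_iff_mem_nhds.mpr
      (closedBall_mem_nhds _ (by linarith [(hP p (subset hp)).2.1]))⟩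
  have F_subset : F ⊆ ⋃ p ∈ u, closedBall p.1 (32 * p.2) := by
    intro x hx
    obtain ⟨p, hp, dist_le⟩ := hcover x hx
    obtain ⟨q, hq, hpq⟩ := enlarged p hp
    refine mem_iUnion₂.mpr ⟨q, hq, ?_⟩
    convert hpq (mem_closedBall.mpr dist_le) using 2
    ring
  have doubling (p) (hp : p ∈ u) : μ (closedBall p.1 (32 * p.2)) ≤
      ENNReal.ofReal (C ^ 6) * μ (closedBall p.1 (p.2 / 2)) := by
    obtain ⟨mem_F, pos, le⟩ := hP p (subset hp)
    have := measureReal_closedBall_two_pow_mul_le (by linarith) (hF mem_F) (half_pos pos) 6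
      (by linarith)
    rw [show (2 : ℝ) ^ 6 * (p.2 / 2) = 32 * p.2 by ring] at this
    rw [← ofReal_measureReal, ← ofReal_measureReal, ← ENNReal.ofReal_mul (by positivity)]
    exact ENNReal.ofReal_le_ofReal this
  refine ⟨u, subset, countable, ?_⟩
  have measure_le : μ F ≤ ENNReal.ofReal (C ^ 6) * μ (⋃ p ∈ u, closedBall p.1 (p.2 / 2)) := by
    have half_disjoint : u.PairwiseDisjoint fun p => closedBall p.1 (p.2 / 2) :=
      disjoint.mono_on fun p hp =>
        closedBall_subset_closedBall (by linarith [(hP p (subset hp)).2.1])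
    rw [measure_biUnion countable half_disjoint fun _ _ => isClosed_closedBall.measurableSet,
      ← ENNReal.tsum_mul_left]
    calc μ F ≤ ∑' p : u, μ (closedBall p.1.1 (32 * p.1.2)) :=
          (measure_mono F_subset).trans (measure_biUnion_le _ countable _)
      _ ≤ _ := ENNReal.tsum_le_tsum fun p => doubling p p.2
  simpa [Measure.real, show 0 ≤ C ^ 6 by positivity] using
    ENNReal.toReal_mono (ENNReal.mul_ne_top ENNReal.ofReal_ne_top (measure_ne_top _ _)) measure_le

end Covering

section Vanishing

variable {E : Type*} [NormedAddCommGroup E] [InnerProductSpace ℝ E] [FiniteDimensional ℝ E]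
  [MeasurableSpace E] [BorelSpace E]

lemma exists_mul_measureReal_le_integral_divergence (ν : Measure E) [IsFiniteMeasure ν] {C ρ : ℝ}
    (hC : 1 ≤ C) {F K : Set E} (hK : IsCompact K) (hK0 : volume K = 0) (hFK : F ⊆ K)
    (hF : F.Nonempty) (hdoubling : F ⊆ doublingSet ν C ρ) (hρ : 0 < ρ) {ε : ℝ} (hε : 0 < ε) :
    ∃ Φ : E → E, ContDiff ℝ 1 Φ ∧ (∀ x, ‖fderiv ℝ Φ x‖ ≤ 3 / 2 * 6 ^ finrank ℝ E) ∧
      (∀ x, ‖Φ x‖ ≤ ε) ∧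
      1 / 2 * (1 / 7) ^ finrank ℝ E * ν.real F ≤ C ^ 6 * ∫ x, divergence Φ x ∂ν := by
  set c : ℝ := 1 / 2 * (1 / 7) ^ finrank ℝ E
  obtain ⟨Φ, contDiff, norm_fderiv_le, norm_le, divergence_nonneg, exists_ball⟩ :=
    exists_field_divergence_ge hK hK0 hFK hF (show 0 < min ε (ρ / 32) by positivity)
  set P : Set (E × ℝ) := {p | (p.1 ∈ F ∧ 0 < p.2 ∧ p.2 ≤ ρ / 32) ∧
    ∀ x ∈ closedBall p.1 (p.2 / 2), c ≤ divergence Φ x}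
  obtain ⟨u, subset, countable, measure_le⟩ :=
    exists_subfamily_measureReal_le_of_doubling (P := P) hC hdoubling (fun p hp => hp.1) <| by
      intro x hx
      obtain ⟨y, hy, r, r_pos, r_le, dist_le, divergence_ge⟩ := exists_ball x hx
      exact ⟨(y, r), ⟨⟨hy, r_pos, r_le.trans (min_le_right _ _)⟩, divergence_ge⟩, dist_le⟩
  set U := ⋃ p ∈ u, closedBall p.1 (p.2 / 2)
  have U_measurable : MeasurableSet U :=
    .biUnion countable fun _ _ => isClosed_closedBall.measurableSet
  have integrable : Integrable (divergence Φ) ν := integrable_divergence contDiff norm_fderiv_le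
  have divergence_ge : ∀ x ∈ U, c ≤ divergence Φ x := by
    intro x hx
    obtain ⟨p, hp, hxp⟩ := mem_iUnion₂.mp hx
    exact (subset hp).2 x hxp
  refine ⟨Φ, contDiff, norm_fderiv_le, fun x => (norm_le x).trans (min_le_left _ _), ?_⟩
  calc c * ν.real F ≤ c * (C ^ 6 * ν.real U) := by gcongr
    _ = C ^ 6 * (c * ν.real U) := by ring
    _ ≤ C ^ 6 * ∫ x in U, divergence Φ x ∂ν := by
        gcongr
        exact setIntegral_ge_of_const_le_real U_measurable (measure_ne_top _ _) divergence_ge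
          integrable.integrableOn
    _ ≤ C ^ 6 * ∫ x, divergence Φ x ∂ν := 
        mul_le_mul_of_nonneg_left
          (setIntegral_le_integral integrable (.of_forall divergence_nonneg)) (by positivity)

lemma finrank_pos_of_volume_eq_zero {K : Set E} (hK0 : volume K = 0) (hK : K.Nonempty) :
    0 < finrank ℝ E := by
  by_contra! finrank_le
  have : Subsingleton E := finrank_zero_iff.mp (Nat.le_zero.mp finrank_le)
  rw [Subsingleton.eq_univ_of_nonempty hK] at hK0
  exact NeZero.ne _ hK0

theorem HasClosableDivergence.eq_zero {ν : Measure E} [IsFiniteMeasure ν]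
    (hν : HasClosableDivergence ν) {K : Set E} (hK : IsCompact K) (hK0 : volume K = 0)
    (hνK : ν Kᶜ = 0) : ν = 0 := by
  by_contra ν_ne
  have nonempty : K.Nonempty := by
    by_contra! empty
    rw [empty, compl_empty] at hνK
    exact ν_ne (Measure.measure_univ_eq_zero.mp hνK)
  obtain ⟨C, one_le, doubling⟩ := hν.exists_ae_doubling (finrank_pos_of_volume_eq_zero hK0 nonempty)
    ⟨K, hK.measurableSet, hK0, hνK⟩
  obtain ⟨ρ, ρ_pos, measure_ne⟩ := exists_measure_inter_doublingSet_ne_zero hνK ν_ne doubling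
  set F := K ∩ doublingSet ν C ρ
  have measure_pos : 0 < ν.real F := ENNReal.toReal_pos measure_ne (measure_ne_top _ _)
  set η := 1 / 2 * (1 / 7) ^ finrank ℝ E * ν.real F / C ^ 6
  have η_pos : 0 < η := by positivity
  obtain ⟨τ, τ_pos, integral_le⟩ := hν (3 / 2 * 6 ^ finrank ℝ E) (by positivity) (η / 2)
    (by positivity)
  obtain ⟨Φ, contDiff, norm_fderiv_le, norm_le, le_integral⟩ :=
    exists_mul_measureReal_le_integral_divergence ν one_le hK hK0 inter_subset_left
      (nonempty_of_measure_ne_zero measure_ne) inter_subset_right ρ_pos τ_pos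
  have η_le : η ≤ ∫ x, divergence Φ x ∂ν := (div_le_iff₀' (by positivity)).mpr le_integral
  linarith [integral_le Φ contDiff norm_fderiv_le norm_le]

end Vanishing

/-! ### Slopes and charts -/

section Slope

variable {X : Type*} [PseudoMetricSpace X] {f g : X → ℝ} {K K' : ℝ≥0} {x : X}

lemma lip_le_iff (hf : LipschitzWith K f) {c : ℝ} (hc : 0 ≤ c) :
    lip f x ≤ c ↔ ∀ c' > c, ∀ᶠ y in 𝓝 x, |f y - f x| ≤ c' * dist y x := by
  have le_mul (y : X) : |f y - f x| ≤ K * dist y x := by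
    simpa [Real.dist_eq] using hf.dist_le_mul y x
  have div_le_iff (c' : ℝ) (hc' : c < c') (y : X) :
      |f y - f x| / dist y x ≤ c' ↔ |f y - f x| ≤ c' * dist y x := by
    rcases (dist_nonneg (x := y) (y := x)).eq_or_lt with h0 | hpos
    · have := le_mul y
      rw [← h0, mul_zero] at this
      simp [← h0, this, (hc.trans_lt hc').le]
    · exact div_le_iff₀ hpos
  have eventually_iff (c' : ℝ) (hc' : c < c') :
      (∀ᶠ y in 𝓝[≠] x, |f y - f x| / dist y x ≤ c') ↔
        ∀ᶠ y in 𝓝 x, |f y - f x| ≤ c' * dist y x := by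
    rw [← nhdsNE_sup_pure, eventually_sup, eventually_pure]
    simp [div_le_iff c' hc']
  unfold lip
  rcases (𝓝[≠] x).eq_or_neBot with hbot | hne
  · have limsup_bot : limsup (fun y => |f y - f x| / dist y x) (𝓝[≠] x) = 0 := by
      simp [hbot, limsup, limsSup]
    rw [limsup_bot]
    exact iff_of_true hc fun c' hc' => (eventually_iff c' hc').1 (by simp [hbot])
  · have bdd_above : IsBoundedUnder (· ≤ ·) (𝓝[≠] x) fun y => |f y - f x| / dist y x :=
      isBoundedUnder_of ⟨K, fun y => div_le_of_le_mul₀ dist_nonneg K.2 (le_mul y)⟩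
    have bdd_below : IsBoundedUnder (· ≥ ·) (𝓝[≠] x) fun y => |f y - f x| / dist y x :=
      isBoundedUnder_of ⟨0, fun y => by positivity⟩
    rw [limsup_le_iff' bdd_below.isCoboundedUnder_le bdd_above]
    exact forall₂_congr eventually_iff

lemma lip_nonneg (hf : LipschitzWith K f) : 0 ≤ lip f x := by
  unfold lip
  rcases (𝓝[≠] x).eq_or_neBot with hbot | hne
  · simp [hbot, limsup, limsSup]
  · refine le_limsup_of_frequently_le (Frequently.of_forall fun y => by positivity)
      (isBoundedUnder_of ⟨K, fun y => div_le_of_le_mul₀ dist_nonneg K.2 ?_⟩)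
    simpa [Real.dist_eq] using hf.dist_le_mul y x

/-- `f` is flat at `x` if `f y - f x = o(d(y, x))` as `y → x`, that is, if its slope at `x`
vanishes. Unlike `lip`, this makes sense for functions which are not Lipschitz. -/
def IsFlatAt (f : X → ℝ) (x : X) : Prop :=
  (fun y => f y - f x) =o[𝓝 x] fun y => dist y x

lemma IsFlatAt.const_mul (hf : IsFlatAt f x) (a : ℝ) : IsFlatAt (fun y => a * f y) x :=
  (IsLittleO.const_mul_left hf a).congr_left fun y => by ring

lemma isFlatAt_iff :
    IsFlatAt f x ↔ ∀ ⦃ε : ℝ⦄, 0 < ε → ∀ᶠ y in 𝓝 x, |f y - f x| ≤ ε * dist y x := by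
  simp [IsFlatAt, isLittleO_iff]

lemma lip_eq_zero_iff (hf : LipschitzWith K f) : lip f x = 0 ↔ IsFlatAt f x := by
  rw [← (lip_nonneg hf).ge_iff_eq', lip_le_iff hf le_rfl, isFlatAt_iff]

lemma lip_add_le (hf : LipschitzWith K f) (hg : LipschitzWith K' g) :
    lip (fun y => f y + g y) x ≤ lip f x + lip g x := by
  rw [lip_le_iff (hf.add hg) (add_nonneg (lip_nonneg hf) (lip_nonneg hg))]
  intro c' hc'
  set ε : ℝ := (c' - (lip f x + lip g x)) / 2
  have hε : 0 < ε := half_pos (sub_pos.2 hc')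
  filter_upwards [(lip_le_iff hf (lip_nonneg hf)).1 le_rfl (lip f x + ε) (by simpa),
    (lip_le_iff hg (lip_nonneg hg)).1 le_rfl (lip g x + ε) (by simpa)] with y hfy hgy
  calc |f y + g y - (f x + g x)| = |(f y - f x) + (g y - g x)| := by ring_nf
    _ ≤ |f y - f x| + |g y - g x| := abs_add_le _ _
    _ ≤ (lip f x + ε) * dist y x + (lip g x + ε) * dist y x := add_le_add hfy hgy
    _ = c' * dist y x := by simp only [ε]; ring

lemma lipschitzWith_const_mul (hf : LipschitzWith K f) (a : ℝ) :
    LipschitzWith (‖a‖₊ * K) fun y => a * f y :=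
  (lipschitzWith_smul a).comp hf

lemma lip_const_mul_le (hf : LipschitzWith K f) (a : ℝ) :
    lip (fun y => a * f y) x ≤ |a| * lip f x := by
  rw [lip_le_iff (lipschitzWith_const_mul hf a) (mul_nonneg (abs_nonneg a) (lip_nonneg hf))]
  intro c' hc'
  obtain ⟨c, hc, hac⟩ : ∃ c > lip f x, |a| * c ≤ c' := by
    have tendsto_mul : Tendsto (fun c => |a| * c) (𝓝[>] lip f x) (𝓝 (|a| * lip f x)) :=
      ((continuous_const.mul continuous_id).tendsto _).mono_left nhdsWithin_le_nhds
    exact ((tendsto_mul.eventually_le_const hc').and self_mem_nhdsWithin).exists.imp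
      fun c hc => ⟨hc.2, hc.1⟩
  filter_upwards [(lip_le_iff hf (lip_nonneg hf)).1 le_rfl c hc] with y hy
  calc |a * f y - a * f x| = |a| * |f y - f x| := by rw [← mul_sub, abs_mul]
    _ ≤ |a| * c * dist y x := by rw [mul_assoc]; gcongr
    _ ≤ c' * dist y x := by gcongr

lemma lip_const_mul (hf : LipschitzWith K f) (a : ℝ) :
    lip (fun y => a * f y) x = |a| * lip f x := by
  refine (lip_const_mul_le hf a).antisymm ?_
  rcases eq_or_ne a 0 with rfl | ha
  · simpa using lip_nonneg (x := x) (lipschitzWith_const_mul hf 0)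
  · have key := lip_const_mul_le (x := x) (lipschitzWith_const_mul hf a) a⁻¹
    simp only [inv_mul_cancel_left₀ ha, abs_inv] at key
    rwa [inv_mul_eq_div, le_div_iff₀ (abs_pos.2 ha), mul_comm] at key

lemma exists_lipschitzWith_sum_mul {ι : Type*} [Fintype ι] {f : ι → X → ℝ}
    (hf : ∀ i, ∃ K : ℝ≥0, LipschitzWith K (f i)) (a : ι → ℝ) :
    ∃ K : ℝ≥0, LipschitzWith K fun y => ∑ i, a i * f i y := by
  choose K hK using hf
  refine ⟨∑ i, ‖a i‖₊ * K i, LipschitzWith.of_dist_le_mul fun x y => ?_⟩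
  calc dist (∑ i, a i * f i x) (∑ i, a i * f i y) ≤ ∑ i, dist (a i * f i x) (a i * f i y) :=
        dist_sum_sum_le _ _ _
    _ ≤ ∑ i, ‖a i‖₊ * K i * dist x y :=
        Finset.sum_le_sum fun i _ => (lipschitzWith_const_mul (hK i) (a i)).dist_le_mul x y
    _ = (∑ i, ‖a i‖₊ * K i : ℝ≥0) * dist x y := by push_cast; rw [Finset.sum_mul]

lemma isNormOn_lip_iff {k : ℕ} {f : Fin k → X → ℝ} (hf : ∀ i, ∃ K : ℝ≥0, LipschitzWith K (f i)) :
    IsNormOn (fun a : Fin k → ℝ => lip (fun y => ∑ i, a i * f i y) x) ↔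
      ∀ a : Fin k → ℝ, IsFlatAt (fun y => ∑ i, a i * f i y) x → a = 0 := by
  choose K hK using exists_lipschitzWith_sum_mul hf
  refine ⟨fun h a ha => (h.2.1 a).1 ((lip_eq_zero_iff (hK a)).2 ha), fun h =>
    ⟨fun a => lip_nonneg (hK a), fun a => ?_, fun c a => ?_, fun a b => ?_⟩⟩
  · refine (lip_eq_zero_iff (hK a)).trans ⟨h a, ?_⟩
    rintro rfl
    simp [IsFlatAt]
  · simpa [Finset.mul_sum, mul_assoc] using lip_const_mul (hK a) c
  · simpa [add_mul, Finset.sum_add_distrib] using lip_add_le (hK a) (hK b)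

end Slope

section RegularPoint

variable {X : Type*} [PseudoMetricSpace X] {E : Type*} [NormedAddCommGroup E]
  [InnerProductSpace ℝ E] {F : X → E} {x : X}

/-- `x` is a regular point of the chart `F` if the components of `F` are independent at `x`: no
nonzero linear combination of them is flat at `x`. -/
def IsRegularAt (F : X → E) (x : X) : Prop :=
  ∀ α : E, IsFlatAt (fun y => ⟪α, F y⟫) x → α = 0

/-- `α` is a gradient of `h` at `x` in the chart `F` if `h` and `⟪α, F ·⟫` agree to first order at
`x`. This is the differential of Cheeger, with covectors identified with vectors of `E`. -/
def HasChartGradientAt (F : X → E) (h : X → ℝ) (α : E) (x : X) : Prop :=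
  IsFlatAt (fun y => h y - ⟪α, F y⟫) x

/-- The Lipschitz dimension of the metric measure space `(X, μ)` is at most `n`: no `n + 1`
Lipschitz functions are independent on a set of positive measure. -/
def LipschitzDimLE [MeasurableSpace X] (μ : Measure X) (n : ℕ) : Prop :=
  ∀ (f : Fin (n + 1) → X → ℝ) (B : Set X), MeasurableSet B → 0 < μ B →
    (∀ i, ∃ K : ℝ≥0, LipschitzWith K (f i)) → ¬ IndependentOn μ f B

/-- The Lipschitz dimension of the metric measure space `(X, μ)` is at least `n`: every Borel set
of positive measure contains one on which some `n` Lipschitz functions are independent. -/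
def LipschitzDimGE [MeasurableSpace X] (μ : Measure X) (n : ℕ) : Prop :=
  ∀ B : Set X, MeasurableSet B → 0 < μ B → ∃ B' ⊆ B, MeasurableSet B' ∧ 0 < μ B' ∧
    ∃ f : Fin n → X → ℝ, (∀ i, ∃ K : ℝ≥0, LipschitzWith K (f i)) ∧ IndependentOn μ f B'

lemma lipschitzWith_inner_const_left {L : ℝ≥0} (hF : LipschitzWith L F) (v : E) :
    LipschitzWith (‖v‖₊ * L) fun y => ⟪v, F y⟫ :=
  LipschitzWith.of_dist_le_mul fun y z => by
    rw [Real.dist_eq, ← inner_sub_right, NNReal.coe_mul, coe_nnnorm, mul_assoc]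
    refine (abs_real_inner_le_norm _ _).trans ?_
    rw [← dist_eq_norm]
    gcongr
    exact hF.dist_le_mul y z

lemma IsRegularAt.eq_zero_of_sum_isFlatAt (hx : IsRegularAt F x) {k : ℕ}
    (b : OrthonormalBasis (Fin k) ℝ E) {h : X → ℝ} (hh : ∀ α, ¬ HasChartGradientAt F h α x)
    {a : Fin (k + 1) → ℝ}
    (ha : IsFlatAt (fun y => ∑ i, a i * (Fin.cons h (fun i y => ⟪b i, F y⟫) :
      Fin (k + 1) → X → ℝ) i y) x) : a = 0 := by
  set α : E := ∑ i, a (Fin.succ i) • b i with hα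
  have flat : IsFlatAt (fun y => a 0 * h y + ⟪α, F y⟫) x := by
    simpa [Fin.sum_univ_succ, hα, sum_inner, inner_smul_left] using ha
  have head_eq_zero : a 0 = 0 := by
    by_contra h0
    refine hh (-(a 0)⁻¹ • α) ?_
    have := flat.const_mul (a 0)⁻¹
    simpa [HasChartGradientAt, mul_add, h0, inner_neg_left, inner_smul_left] using this
  have α_eq_zero : α = 0 := hx α (by simpa [head_eq_zero] using flat)
  have tail_eq_zero := Fintype.linearIndependent_iff.1 b.toBasis.linearIndependent
    (fun i => a (Fin.succ i)) (by simpa [hα] using α_eq_zero)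
  exact funext (Fin.cases head_eq_zero tail_eq_zero)

lemma LipschitzDimLE.exists_hasChartGradientAt [FiniteDimensional ℝ E] [MeasurableSpace X]
    {μ : Measure X} (hμ : LipschitzDimLE μ (finrank ℝ E)) {L : ℝ≥0} (hF : LipschitzWith L F)
    {B : Set X} (hB : MeasurableSet B) (hB0 : 0 < μ B) (hreg : ∀ x ∈ B, IsRegularAt F x)
    {h : X → ℝ} {K : ℝ≥0} (hh : LipschitzWith K h) :
    ∃ x ∈ B, ∃ α, HasChartGradientAt F h α x := by
  by_contra! no_gradient
  set b := stdOrthonormalBasis ℝ E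
  have hlip : ∀ i, ∃ K : ℝ≥0, LipschitzWith K
      ((Fin.cons h (fun i y => ⟪b i, F y⟫) : Fin (finrank ℝ E + 1) → X → ℝ) i) :=
    Fin.cases ⟨K, hh⟩ fun i => ⟨_, lipschitzWith_inner_const_left hF (b i)⟩
  refine hμ _ B hB hB0 hlip ((ae_restrict_mem hB).mono fun x hx => ?_)
  exact (isNormOn_lip_iff hlip).2 fun a ha =>
    (hreg x hx).eq_zero_of_sum_isFlatAt b (no_gradient x hx) ha

lemma isRegularAt_of_isNormOn {n : ℕ} {f : Fin n → X → ℝ}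
    (hf : ∀ i, ∃ K : ℝ≥0, LipschitzWith K (f i))
    (h : IsNormOn fun a : Fin n → ℝ => lip (fun y => ∑ i, a i * f i y) x) :
    IsRegularAt (fun y => WithLp.toLp 2 fun i => f i y) x := by
  intro α hα
  refine WithLp.ofLp_injective 2 ((isNormOn_lip_iff hf).1 h α ?_)
  simpa [PiLp.inner_apply, mul_comm] using hα

lemma exists_lipschitzWith_toLp {n : ℕ} {f : Fin n → X → ℝ}
    (hf : ∀ i, ∃ K : ℝ≥0, LipschitzWith K (f i)) :
    ∃ L : ℝ≥0, LipschitzWith L fun y => WithLp.toLp 2 fun i => f i y := by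
  choose K hK using hf
  exact ⟨_, (PiLp.lipschitzWith_toLp 2 _).comp
    (LipschitzWith.of_dist_le_mul (K := ∑ i, K i) fun y z => by
      refine (dist_pi_le_iff (by positivity)).2 fun i => ((hK i).dist_le_mul y z).trans ?_
      gcongr
      exact Finset.single_le_sum (fun _ _ => zero_le) (Finset.mem_univ i))⟩

lemma LipschitzDimGE.exists_chart [MeasurableSpace X] {μ : Measure X} {n : ℕ}
    (hμ : LipschitzDimGE μ n) {S : Set X} (hS : MeasurableSet S) (hS0 : 0 < μ S) :
    ∃ (F : X → EuclideanSpace ℝ (Fin n)) (L : ℝ≥0), LipschitzWith L F ∧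
      ∃ B ⊆ S, MeasurableSet B ∧ 0 < μ B ∧ ∀ x ∈ B, IsRegularAt F x := by
  obtain ⟨B, hBS, hB, hB0, f, hf, hind⟩ := hμ S hS hS0
  obtain ⟨L, hL⟩ := exists_lipschitzWith_toLp hf
  obtain ⟨T, hbadT, hT, hT0⟩ := exists_measurable_superset_of_null (ae_iff.1 hind)
  rw [Measure.restrict_apply hT] at hT0
  refine ⟨_, L, hL, B \ T, sdiff_subset.trans hBS, hB.diff hT, ?_, fun x hx =>
    isRegularAt_of_isNormOn hf (not_not.1 fun hbad => hx.2 (hbadT hbad))⟩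
  rwa [← sdiff_inter_self_eq_sdiff, measure_sdiff_null hT0]

end RegularPoint

/-! ### Windows of scales -/

section Window

variable {T X : Type*} [MetricSpace X] {V : Set T} {P : T → X → X → Prop} {x : X} {s t : ℝ}

/-- The points `x` for which every condition `P v`, `v ∈ V`, is met by a point at distance between
`s` and `t` from `x`. -/
def annulusWindow (V : Set T) (P : T → X → X → Prop) (s t : ℝ) : Set X :=
  {x | ∀ v ∈ V, ∃ y, s < dist y x ∧ dist y x < t ∧ P v y x}

lemma antitone_annulusWindow : Antitone fun s => annulusWindow V P s t :=
  fun _ _ hs _ hx v hv => (hx v hv).imp fun _ hy => ⟨hs.trans_lt hy.1, hy.2⟩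

variable [TopologicalSpace T]

lemma isOpen_annulusWindow (hV : IsCompact V) (hP : ∀ y, IsOpen {p : X × T | P p.2 y p.1}) :
    IsOpen (annulusWindow V P s t) := by
  refine isOpen_iff_eventually.2 fun x hx =>
    hV.eventually_forall_of_forall_eventually fun v hv => ?_
  obtain ⟨y, hsy, hyt, hy⟩ := hx v hv
  have continuous_dist_fst : Continuous fun p : X × T => dist y p.1 := by fun_prop
  filter_upwards [continuous_dist_fst.continuousAt.eventually_const_lt hsy,
    continuous_dist_fst.continuousAt.eventually_lt_const hyt,
    (hP y).eventually_mem (x := (x, v)) hy] with p hsp hpt hp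
  exact ⟨y, hsp, hpt, hp⟩

lemma exists_mem_annulusWindow (hV : IsCompact V) (hP : ∀ y, IsOpen {p : X × T | P p.2 y p.1})
    (ht : 0 < t) (hx : ∀ v ∈ V, ∃ᶠ y in 𝓝[≠] x, P v y x) :
    ∃ m : ℕ, x ∈ annulusWindow V P (1 / ((m : ℝ) + 1)) t := by
  set S : ℕ → Set T := fun m => {v | ∃ y, 1 / ((m : ℝ) + 1) < dist y x ∧ dist y x < t ∧ P v y x}
  have isOpen_S (m : ℕ) : IsOpen (S m) := by
    simp only [S, Set.ofPred_exists, Set.ofPred_and]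
    exact isOpen_iUnion fun y => isOpen_const.inter <| isOpen_const.inter <|
      (hP y).preimage (by fun_prop : Continuous fun v : T => (x, v))
  have monotone_S : Monotone S := fun m m' hm v ⟨y, hy, hyP⟩ =>
    ⟨y, (Nat.one_div_le_one_div hm).trans_lt hy, hyP⟩
  have V_subset : V ⊆ ⋃ m, S m := fun v hv => by
    obtain ⟨y, ⟨hyt, hyx⟩, hy⟩ := nhdsWithin_basis_ball.frequently_iff.1 (hx v hv) t ht
    obtain ⟨m, hm⟩ := exists_nat_one_div_lt (dist_pos.2 hyx)
    exact mem_iUnion.2 ⟨m, y, hm, hyt, hy⟩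
  obtain ⟨m, hm⟩ := hV.elim_directed_cover S isOpen_S V_subset monotone_S.directed_le
  exact ⟨m, fun v hv => hm hv⟩

lemma measurableSet_forall_frequently [MeasurableSpace X] [BorelSpace X] (hV : IsCompact V)
    (hP : ∀ y, IsOpen {p : X × T | P p.2 y p.1}) :
    MeasurableSet {x | ∀ v ∈ V, ∃ᶠ y in 𝓝[≠] x, P v y x} := by
  have eq_iInter : {x | ∀ v ∈ V, ∃ᶠ y in 𝓝[≠] x, P v y x} =
      ⋂ k : ℕ, ⋃ m : ℕ, annulusWindow V P (1 / ((m : ℝ) + 1)) (1 / ((k : ℝ) + 1)) := by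
    ext x
    simp only [mem_iInter, mem_iUnion]
    refine ⟨fun hx k => exists_mem_annulusWindow hV hP (by positivity) hx, fun hx v hv => ?_⟩
    refine nhdsWithin_basis_ball.frequently_iff.2 fun t ht => ?_
    obtain ⟨k, hk⟩ := exists_nat_one_div_lt ht
    obtain ⟨m, hm⟩ := hx k
    obtain ⟨y, hmy, hyk, hy⟩ := hm v hv
    exact ⟨y, ⟨hyk.trans hk, dist_pos.1 (lt_trans (by positivity) hmy)⟩, hy⟩
  rw [eq_iInter]
  exact .iInter fun k => .iUnion fun m => (isOpen_annulusWindow hV hP).measurableSet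

end Window

section Scales

/-- Intervals of scales `(s j, t j)` which decrease to `0` and are separated by large gaps. -/
structure LacunaryScales (s t : ℕ → ℝ) : Prop where
  pos (j : ℕ) : 0 < s j
  lt (j : ℕ) : s j < t j
  succ_le (j : ℕ) : t (j + 1) ≤ (1 / 2) ^ j * s j
  le_pow (j : ℕ) : t j ≤ (1 / 2) ^ j

namespace LacunaryScales

variable {s t : ℕ → ℝ}

lemma right_pos (h : LacunaryScales s t) (j : ℕ) : 0 < t j :=
  (h.pos j).trans (h.lt j)

lemma succ_le_self (h : LacunaryScales s t) (j : ℕ) : t (j + 1) ≤ s j :=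
  (h.succ_le j).trans (mul_le_of_le_one_left (h.pos j).le
    (pow_le_one₀ (by norm_num) (by norm_num)))

lemma antitone_left (h : LacunaryScales s t) : Antitone s :=
  antitone_nat_of_succ_le fun j => (h.lt (j + 1)).le.trans (h.succ_le_self j)

lemma antitone_right (h : LacunaryScales s t) : Antitone t :=
  antitone_nat_of_succ_le fun j => (h.succ_le_self j).trans (h.lt j).le

lemma tendsto_right (h : LacunaryScales s t) : Tendsto t atTop (𝓝 0) :=
  squeeze_zero (fun j => (h.right_pos j).le) h.le_pow
    (tendsto_pow_atTop_nhds_zero_of_lt_one (by norm_num) (by norm_num))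

end LacunaryScales

variable {X : Type*} [MeasurableSpace X] {μ : Measure X} {U : Set X}

lemma exists_measure_sdiff_le (hU : MeasurableSet U) (hUt : μ U ≠ ⊤) {W : ℝ → Set X}
    (hW : ∀ s, MeasurableSet (W s)) (hanti : Antitone W)
    (hUW : ∀ x ∈ U, ∃ m : ℕ, x ∈ W (1 / ((m : ℝ) + 1))) {b : ℝ} (hb : 0 < b) {ε : ℝ≥0∞}
    (hε : 0 < ε) : ∃ s, 0 < s ∧ s < b ∧ μ (U \ W s) ≤ ε := by
  have antitone_sdiff : Antitone fun m : ℕ => U \ W (1 / ((m : ℝ) + 1)) := fun m m' h =>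
    sdiff_subset_sdiff_right (hanti (Nat.one_div_le_one_div h))
  have iInter_sdiff : ⋂ m : ℕ, U \ W (1 / ((m : ℝ) + 1)) = ∅ := by
    refine eq_empty_of_forall_notMem fun x hx => ?_
    obtain ⟨m, hm⟩ := hUW x (mem_iInter.1 hx 0).1
    exact (mem_iInter.1 hx m).2 hm
  have tendsto_measure := tendsto_measure_iInter_atTop (μ := μ)
    (fun m : ℕ => (hU.diff (hW (1 / ((m : ℝ) + 1)))).nullMeasurableSet) antitone_sdiff
    ⟨0, measure_ne_top_of_subset sdiff_subset hUt⟩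
  rw [iInter_sdiff, measure_empty] at tendsto_measure
  obtain ⟨m, hmε, hmb⟩ := ((tendsto_measure.eventually_lt_const hε).and
    (tendsto_one_div_add_atTop_nhds_zero_nat.eventually_lt_const hb)).exists
  exact ⟨_, Nat.one_div_pos_of_nat, hmb, hmε.le⟩

lemma measure_inter_iInter_pos {ι : Type*} [Countable ι] {W : ι → Set X} {ε : ι → ℝ≥0∞}
    (hW : ∀ j, μ (U \ W j) ≤ ε j) (hε : ∑' j, ε j < μ U) : 0 < μ (U ∩ ⋂ j, W j) := by
  refine pos_iff_ne_zero.2 fun h0 => hε.not_ge ?_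
  calc μ U ≤ μ ((U ∩ ⋂ j, W j) ∪ ⋃ j, U \ W j) := measure_mono (by
        rw [← sdiff_iInter, union_comm, sdiff_union_inter])
    _ ≤ μ (U ∩ ⋂ j, W j) + ∑' j, μ (U \ W j) :=
        (measure_union_le _ _).trans (by gcongr; exact measure_iUnion_le _)
    _ ≤ ∑' j, ε j := by rw [h0, zero_add]; exact ENNReal.tsum_le_tsum hW

lemma exists_lacunaryScales (hU : MeasurableSet U) (hUt : μ U ≠ ⊤) (hU0 : 0 < μ U)
    {W : ℕ → ℝ → ℝ → Set X} (hW : ∀ j s t, MeasurableSet (W j s t))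
    (hanti : ∀ j t, Antitone fun s => W j s t)
    (hUW : ∀ j t, 0 < t → ∀ x ∈ U, ∃ m : ℕ, x ∈ W j (1 / ((m : ℝ) + 1)) t) {b : ℕ → ℝ → ℝ}
    (hb : ∀ j s, 0 < s → 0 < b j s) {b₀ : ℝ} (hb₀ : 0 < b₀) :
    ∃ s t : ℕ → ℝ, LacunaryScales s t ∧ t 0 ≤ b₀ ∧ (∀ j, t (j + 1) ≤ b j (s j)) ∧
      0 < μ (U ∩ ⋂ j, W j (s j) (t j)) := by
  obtain ⟨ε, hε, hεU⟩ := ENNReal.exists_pos_sum_of_countable hU0.ne' ℕ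
  choose! σ σ_pos σ_lt μ_le using fun j (t : ℝ) (ht : 0 < t) =>
    exists_measure_sdiff_le hU hUt (fun s => hW j s t) (hanti j t) (hUW j t ht) ht
      (ENNReal.coe_pos.2 (hε j))
  let t : ℕ → ℝ := fun j => Nat.rec (min b₀ 1) (fun j tj =>
    min (b j (σ j tj)) (min ((1 / 2) ^ j * σ j tj) ((1 / 2) ^ (j + 1)))) j
  have t_succ (j : ℕ) : t (j + 1) =
      min (b j (σ j (t j))) (min ((1 / 2) ^ j * σ j (t j)) ((1 / 2) ^ (j + 1))) := rfl
  have t_pos (j : ℕ) : 0 < t j := by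
    induction j with
    | zero => exact lt_min hb₀ one_pos
    | succ j ih =>
      have := σ_pos j _ ih
      have := hb j _ this
      rw [t_succ]
      positivity
  refine ⟨fun j => σ j (t j), t, ⟨fun j => σ_pos j _ (t_pos j), fun j => σ_lt j _ (t_pos j),
    fun j => ?_, fun j => ?_⟩, min_le_left _ _, fun j => min_le_left _ _,
    measure_inter_iInter_pos (fun j => μ_le j _ (t_pos j)) hεU⟩
  · exact (min_le_right _ _).trans (min_le_left _ _)
  · cases j with
    | zero => exact (min_le_right b₀ 1).trans_eq (pow_zero _).symm
    | succ j => exact (min_le_right _ _).trans (min_le_right _ _)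

end Scales

/-! ### Spanning directions at regular points -/

section Spanning

variable {X : Type*} [MetricSpace X] {E : Type*} [NormedAddCommGroup E] [InnerProductSpace ℝ E]
  {F : X → E} {L : ℝ≥0} {x : X} {κ : ℝ} {B Y : Set X}

/-- The point `y ∈ Y` detects the direction `v` at `x` with slope at least `κ`. -/
def Detects (F : X → E) (Y : Set X) (κ : ℝ) (v : E) (y x : X) : Prop :=
  y ∈ Y ∧ κ * dist y x < |⟪v, F y - F x⟫|

/-- Every direction is detected at `x` with slope at least `κ` by points of `Y` arbitrarily close
to `x`. -/
def IsSpanningAt (F : X → E) (Y : Set X) (κ : ℝ) (x : X) : Prop :=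
  ∀ v ∈ sphere (0 : E) 1, ∃ᶠ y in 𝓝[≠] x, Detects F Y κ v y x

lemma isOpen_detects (hF : Continuous F) (y : X) :
    IsOpen {p : X × E | Detects F Y κ p.2 y p.1} := by
  simp only [Detects, Set.ofPred_and]
  exact isOpen_const.inter (isOpen_lt (by fun_prop) (by fun_prop))

lemma HasChartGradientAt.eq_zero {h : X → ℝ} {α : E} (hα : HasChartGradientAt F h α x) (hκ : 0 < κ)
    (H : ∀ ε > 0, ∀ v ∈ sphere (0 : E) 1,
      ∃ᶠ y in 𝓝 x, |h y - h x| ≤ ε * dist y x ∧ κ * dist y x < |⟪v, F y - F x⟫|) : α = 0 := by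
  by_contra hα0
  have norm_pos : 0 < ‖α‖ := norm_pos_iff.2 hα0
  set ε := κ * ‖α‖ / 2
  have hε : 0 < ε := by positivity
  obtain ⟨y, ⟨hy, hyα⟩, hyF⟩ := ((H ε hε (‖α‖⁻¹ • α) (by simp [norm_smul, hα0])).and_eventually
    (isFlatAt_iff.1 hα hε)).exists
  rw [real_inner_smul_left, abs_mul, abs_inv, abs_norm, inv_mul_eq_div, lt_div_iff₀ norm_pos]
    at hyα
  refine hyα.not_ge ?_
  calc |⟪α, F y - F x⟫|
      = |(h y - h x) - (h y - ⟪α, F y⟫ - (h x - ⟪α, F x⟫))| := by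
        rw [inner_sub_right]; congr 1; ring
    _ ≤ ε * dist y x + ε * dist y x := (abs_sub _ _).trans (add_le_add hy hyF)
    _ = κ * dist y x * ‖α‖ := by simp only [ε]; ring

lemma IsFlatAt.inner_of_tendsto (hF : LipschitzWith L F) {v : ℕ → E} {w : E} {κ : ℕ → ℝ}
    (hv : Tendsto v atTop (𝓝 w)) (hκ : Tendsto κ atTop (𝓝 0))
    (H : ∀ k, ∀ᶠ y in 𝓝 x, |⟪v k, F y - F x⟫| ≤ κ k * dist y x) :
    IsFlatAt (fun y => ⟪w, F y⟫) x := by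
  refine isFlatAt_iff.2 fun ε hε => ?_
  have tendsto_slope : Tendsto (fun k => κ k + ‖w - v k‖ * L) atTop (𝓝 0) := by
    simpa using hκ.add (((tendsto_const_nhds (x := w)).sub hv).norm.mul_const (L : ℝ))
  obtain ⟨k, hk⟩ := (tendsto_slope.eventually_le_const hε).exists
  filter_upwards [H k] with y hy
  calc |⟪w, F y⟫ - ⟪w, F x⟫| = |⟪v k, F y - F x⟫ + ⟪w - v k, F y - F x⟫| := by
        rw [← inner_sub_right, ← inner_add_left, add_sub_cancel]
    _ ≤ κ k * dist y x + ‖w - v k‖ * (L * dist y x) := by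
        refine (abs_add_le _ _).trans (add_le_add hy ((abs_real_inner_le_norm _ _).trans ?_))
        rw [← dist_eq_norm (F y)]
        gcongr
        exact hF.dist_le_mul y x
    _ = (κ k + ‖w - v k‖ * L) * dist y x := by ring
    _ ≤ ε * dist y x := by gcongr

lemma IsRegularAt.exists_isSpanningAt [FiniteDimensional ℝ E] (hF : LipschitzWith L F)
    (hx : IsRegularAt F x) : ∃ k : ℕ, IsSpanningAt F univ (1 / ((k : ℝ) + 1)) x := by
  by_contra! not_spanning
  simp only [IsSpanningAt, not_forall, not_frequently, Detects, mem_univ, true_and, not_lt]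
    at not_spanning
  choose v hv hle using not_spanning
  obtain ⟨w, hw, φ, hφ, tendsto_v⟩ := (isCompact_sphere (0 : E) 1).tendsto_subseq hv
  refine ne_zero_of_mem_unit_sphere ⟨w, hw⟩ (hx w (.inner_of_tendsto hF tendsto_v
    (tendsto_one_div_add_atTop_nhds_zero_nat.comp hφ.tendsto_atTop) fun k => ?_))
  filter_upwards [eventually_nhdsWithin_iff.1 (hle (φ k))] with y hy
  rcases eq_or_ne y x with rfl | hyx
  · simp
  · exact hy hyx

lemma abs_inner_sub_le (hF : LipschitzWith L F) {v : E} (hv : v ∈ sphere (0 : E) 1) (y z : X) :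
    |⟪v, F y - F z⟫| ≤ L * dist y z := by
  refine (abs_real_inner_le_norm _ _).trans ?_
  rw [mem_sphere_zero_iff_norm.1 hv, one_mul, ← dist_eq_norm]
  exact hF.dist_le_mul y z

lemma eventually_exists_dist_lt_of_isFlatAt (hx : x ∈ B) (h : IsFlatAt (infDist · B) x) {ε : ℝ}
    (hε : 0 < ε) : ∀ᶠ y in 𝓝[≠] x, ∃ z ∈ B, dist y z < ε * dist y x := by
  filter_upwards [(isFlatAt_iff.1 h (half_pos hε)).filter_mono nhdsWithin_le_nhds,
    self_mem_nhdsWithin] with y hy hyx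
  rw [infDist_zero_of_mem hx, sub_zero, abs_of_nonneg infDist_nonneg] at hy
  exact (infDist_lt_iff ⟨x, hx⟩).1 (hy.trans_lt (by
    have := dist_pos.2 (show y ≠ x from hyx)
    gcongr
    exact half_lt_self hε))

lemma IsSpanningAt.of_isFlatAt_infDist (hF : LipschitzWith L F) (hκ : 0 < κ) (hx : x ∈ B)
    (hspan : IsSpanningAt F univ κ x) (hflat : IsFlatAt (infDist · B) x) :
    IsSpanningAt F B (κ / 2) x := by
  intro v hv
  set ε : ℝ := min (1 / 2) (κ / (2 * (L + κ)))
  have ε_pos : 0 < ε := by positivity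
  have ε_mul_le : ε * (L + κ) ≤ κ / 2 :=
    calc ε * (L + κ) ≤ κ / (2 * (L + κ)) * (L + κ) := by gcongr; exact min_le_right _ _
      _ = κ / 2 := by field_simp
  refine nhdsWithin_basis_ball.frequently_iff.2 fun r hr => ?_
  obtain ⟨y, ⟨-, hy⟩, ⟨z, hz, hyz⟩, hyx, hyr⟩ := ((hspan v hv).and_eventually
    ((eventually_exists_dist_lt_of_isFlatAt hx hflat ε_pos).and
      (inter_mem_nhdsWithin _ (ball_mem_nhds x (half_pos hr))))).exists
  have dist_pos : 0 < dist y x := dist_pos.2 hyx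
  have slope_le : κ / 2 * (1 + ε) ≤ κ - L * ε := by linarith [mul_pos hκ ε_pos]
  have hyz_half : dist y z < 1 / 2 * dist y x := hyz.trans_le (by gcongr; exact min_le_left _ _)
  have hzx : dist z x ≤ dist y x + dist y z := by linarith [dist_triangle_left z x y]
  have dist_zx_pos : 0 < dist z x := by linarith [dist_triangle y z x]
  refine ⟨z, ⟨by rw [mem_ball] at hyr ⊢; linarith, _root_.dist_pos.1 dist_zx_pos⟩, hz, ?_⟩
  calc κ / 2 * dist z x ≤ κ / 2 * (dist y x + ε * dist y x) := by
        gcongr; exact hzx.trans (by gcongr)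
    _ = κ / 2 * (1 + ε) * dist y x := by ring
    _ ≤ (κ - L * ε) * dist y x := by gcongr
    _ = κ * dist y x - L * (ε * dist y x) := by ring
    _ < |⟪v, F y - F x⟫| - L * dist y z := by
        have : L * dist y z ≤ L * (ε * dist y x) := by gcongr
        linarith
    _ ≤ |⟪v, F y - F x⟫| - |⟪v, F y - F z⟫| := by gcongr; exact abs_inner_sub_le hF hv y z
    _ ≤ |⟪v, F y - F x⟫ - ⟪v, F y - F z⟫| := abs_sub_abs_le_abs_sub _ _
    _ = |⟪v, F z - F x⟫| := by rw [← inner_sub_right, sub_sub_sub_cancel_left]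

end Spanning

/-! ### Regular sets are metrically dense at almost every point -/

section OddScales

variable {s t : ℕ → ℝ} {j : ℕ} {z : ℝ}

/-- The scales lying in one of the intervals `[t (j + 1), t j]` with `j` odd, together with `0`. -/
def oddScales (t : ℕ → ℝ) : Set ℝ :=
  {z | z = 0 ∨ ∃ j, Odd j ∧ z ∈ Icc (t (j + 1)) (t j)}

lemma zero_mem_oddScales : 0 ∈ oddScales t :=
  .inl rfl

lemma infDist_oddScales_le (hst : LacunaryScales s t) (hj : Odd j) (hz₀ : 0 ≤ z) (hz : z ≤ t j) :
    infDist z (oddScales t) ≤ t (j + 1) := by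
  rcases le_total (t (j + 1)) z with h | h
  · rw [infDist_zero_of_mem (.inr ⟨j, hj, h, hz⟩)]
    exact (hst.right_pos _).le
  · simpa [abs_of_nonneg hz₀] using (infDist_le_dist_of_mem zero_mem_oddScales).trans
      ((Real.dist_0_eq_abs z).trans_le ((abs_of_nonneg hz₀).trans_le h))

lemma le_infDist_oddScales (hst : LacunaryScales s t) (hj : Even j) (hz : 2 * z ≤ t j) :
    z - t (j + 1) ≤ infDist z (oddScales t) := by
  have t_pos := hst.right_pos (j + 1)
  refine (le_infDist ⟨0, zero_mem_oddScales⟩).2 fun w hw => ?_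
  rw [Real.dist_eq]
  rcases hw with rfl | ⟨i, hi, hiw, hwi⟩
  · linarith [le_abs_self (z - 0)]
  · rcases lt_trichotomy i j with hij | rfl | hij
    · linarith [neg_abs_le (z - w), hst.antitone_right hij]
    · exact absurd hj (Nat.not_even_iff_odd.2 hi)
    · linarith [le_abs_self (z - w), hst.antitone_right hij]

end OddScales

section InfDist

variable {X : Type*} [MetricSpace X] {E : Type*} [NormedAddCommGroup E] [InnerProductSpace ℝ E]
  {F : X → E} {L : ℝ≥0} {x : X} {κ ε : ℝ} {B Y U : Set X} {s t : ℕ → ℝ}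

lemma HasChartGradientAt.eq_zero_of_oddScales (hst : LacunaryScales s t) (hx : x ∈ B) (hκ : 0 < κ)
    (hwin : ∀ j, Odd j → x ∈ annulusWindow (sphere 0 1) (Detects F Y κ) (s j) (t j)) {α : E}
    (hα : HasChartGradientAt F (fun y => infDist (infDist y B) (oddScales t)) α x) : α = 0 := by
  refine hα.eq_zero hκ fun ε hε v hv => nhds_basis_ball.frequently_iff.2 fun r hr => ?_
  obtain ⟨j, hj, hjr, hjε⟩ := (Nat.frequently_odd.and_eventually
    ((hst.tendsto_right.eventually_lt_const hr).and
      ((tendsto_pow_atTop_nhds_zero_of_lt_one (r := (1 / 2 : ℝ)) (by norm_num)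
        (by norm_num)).eventually_le_const hε))).exists
  obtain ⟨y, hsy, hyt, -, hy⟩ := hwin j hj v hv
  refine ⟨y, hyt.trans hjr, ?_, hy⟩
  rw [infDist_zero_of_mem hx, infDist_zero_of_mem zero_mem_oddScales, sub_zero,
    abs_of_nonneg infDist_nonneg]
  calc infDist (infDist y B) (oddScales t) ≤ t (j + 1) :=
        infDist_oddScales_le hst hj infDist_nonneg ((infDist_le_dist_of_mem hx).trans hyt.le)
    _ ≤ (1 / 2) ^ j * s j := hst.succ_le j
    _ ≤ ε * dist y x := by gcongr; exact (hst.pos j).le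

lemma not_isFlatAt_infDist_oddScales (hst : LacunaryScales s t) (hx : x ∈ B) (hε : 0 < ε)
    (hwin : ∀ j, Even j → ∃ y, s j < dist y x ∧ dist y x < t j / 2 ∧ ε * dist y x < infDist y B) :
    ¬ IsFlatAt (fun y => infDist (infDist y B) (oddScales t)) x := by
  intro hflat
  obtain ⟨r, hr, hball⟩ := Metric.eventually_nhds_iff.1 (isFlatAt_iff.1 hflat (half_pos hε))
  obtain ⟨j, hj, hjr, hjε⟩ := (Nat.frequently_even.and_eventually
    ((hst.tendsto_right.eventually_lt_const hr).and
      ((tendsto_pow_atTop_nhds_zero_of_lt_one (r := (1 / 2 : ℝ)) (by norm_num)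
        (by norm_num)).eventually_le_const (half_pos hε)))).exists
  obtain ⟨y, hsy, hyt, hy⟩ := hwin j hj
  have upper := hball (show dist y x < r by linarith [hst.right_pos j])
  rw [infDist_zero_of_mem hx, infDist_zero_of_mem zero_mem_oddScales, sub_zero,
    abs_of_nonneg infDist_nonneg] at upper
  have lower := le_infDist_oddScales hst hj
    (show 2 * infDist y B ≤ t j by linarith [infDist_le_dist_of_mem hx (x := y)])
  have t_succ_le : t (j + 1) ≤ ε / 2 * dist y x :=
    (hst.succ_le j).trans (by gcongr; exact (hst.pos j).le)
  linarith

lemma LipschitzDimLE.measure_eq_zero_of_frequently_lt_infDist [MeasurableSpace X] [BorelSpace X]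
    [FiniteDimensional ℝ E] {μ : Measure X} (hμ : LipschitzDimLE μ (finrank ℝ E))
    (hF : LipschitzWith L F) (hUB : U ⊆ B) (hU : MeasurableSet U) (hUt : μ U ≠ ⊤)
    (hreg : ∀ x ∈ U, IsRegularAt F x) (hκ : 0 < κ) (hspan : ∀ x ∈ U, IsSpanningAt F univ κ x)
    (hε : 0 < ε) (hfar : ∀ x ∈ U, ∃ᶠ y in 𝓝[≠] x, ε * dist y x < infDist y B) : μ U = 0 := by
  by_contra hU0
  set W : ℕ → ℝ → ℝ → Set X := fun j s t =>
    if Even j then annulusWindow {()} (fun _ y x => ε * dist y x < infDist y B) s (t / 2)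
    else annulusWindow (sphere 0 1) (Detects F univ κ) s t with hW
  have isOpen_far (y : X) : IsOpen {p : X × Unit | ε * dist y p.1 < infDist y B} :=
    isOpen_lt (by fun_prop) continuous_const
  have isOpen_W (j s t) : IsOpen (W j s t) := by
    simp only [hW]
    split_ifs
    exacts [isOpen_annulusWindow isCompact_singleton isOpen_far,
      isOpen_annulusWindow (isCompact_sphere _ _) (isOpen_detects hF.continuous)]
  have antitone_W (j t) : Antitone fun s => W j s t := by
    simp only [hW]
    split_ifs <;> exact antitone_annulusWindow
  have exists_mem_W (j t) (ht : 0 < t) (x) (hx : x ∈ U) :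
      ∃ m : ℕ, x ∈ W j (1 / ((m : ℝ) + 1)) t := by
    simp only [hW]
    split_ifs
    exacts [exists_mem_annulusWindow isCompact_singleton isOpen_far (half_pos ht)
        fun _ _ => hfar x hx,
      exists_mem_annulusWindow (isCompact_sphere _ _) (isOpen_detects hF.continuous) ht
        (hspan x hx)]
  obtain ⟨s, t, hst, -, -, hpos⟩ := exists_lacunaryScales hU hUt (pos_iff_ne_zero.2 hU0)
    (fun j s t => (isOpen_W j s t).measurableSet) antitone_W exists_mem_W
    (b := fun _ _ => 1) (fun _ _ _ => one_pos) one_pos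
  obtain ⟨x, ⟨hxU, hxW⟩, α, hα⟩ := hμ.exists_hasChartGradientAt hF
    (hU.inter (.iInter fun j => (isOpen_W j _ _).measurableSet)) hpos (fun x hx => hreg x hx.1)
    ((lipschitz_infDist_pt (oddScales t)).comp (lipschitz_infDist_pt B))
  rw [mem_iInter] at hxW
  obtain rfl : α = 0 := HasChartGradientAt.eq_zero_of_oddScales hst (hUB hxU) hκ
    (fun j hj => by simpa [hW, Nat.not_even_iff_odd.2 hj] using hxW j) hα
  refine not_isFlatAt_infDist_oddScales hst (hUB hxU) hε (fun j hj => ?_)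
    (by simpa [HasChartGradientAt] using hα)
  have hx := hxW j
  simp only [hW, if_pos hj] at hx
  exact hx () rfl

lemma LipschitzDimLE.ae_isFlatAt_infDist [MeasurableSpace X] [BorelSpace X]
    [FiniteDimensional ℝ E] {μ : Measure X} (hμ : LipschitzDimLE μ (finrank ℝ E))
    (hF : LipschitzWith L F) (hB : MeasurableSet B) (hBt : μ B ≠ ⊤)
    (hreg : ∀ x ∈ B, IsRegularAt F x) : ∀ᵐ x ∂μ, x ∈ B → IsFlatAt (infDist · B) x := by
  set far : ℕ → Set X := fun m => {x | ∃ᶠ y in 𝓝[≠] x, 1 / ((m : ℝ) + 1) * dist y x < infDist y B}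
  set spanning : ℕ → Set X := fun k => {x | IsSpanningAt F univ (1 / ((k : ℝ) + 1)) x}
  have measurableSet_far (m : ℕ) : MeasurableSet (far m) := by
    simpa [far] using measurableSet_forall_frequently (V := {()}) isCompact_singleton
      (P := fun _ y x => 1 / ((m : ℝ) + 1) * dist y x < infDist y B)
      fun y => isOpen_lt (by fun_prop) continuous_const
  have measurableSet_spanning (k : ℕ) : MeasurableSet (spanning k) :=
    measurableSet_forall_frequently (isCompact_sphere _ _) (isOpen_detects hF.continuous)
  have measure_eq_zero (m k : ℕ) : μ (B ∩ (far m ∩ spanning k)) = 0 :=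
    hμ.measure_eq_zero_of_frequently_lt_infDist hF inter_subset_left
      (hB.inter ((measurableSet_far m).inter (measurableSet_spanning k)))
      (measure_ne_top_of_subset inter_subset_left hBt) (fun x hx => hreg x hx.1)
      Nat.one_div_pos_of_nat (fun x hx => hx.2.2) Nat.one_div_pos_of_nat fun x hx => hx.2.1
  have ae_notMem := ae_all_iff.2 fun m => ae_all_iff.2 fun k =>
    measure_eq_zero_iff_ae_notMem.1 (measure_eq_zero m k)
  filter_upwards [ae_notMem] with x hx hxB
  obtain ⟨k, hk⟩ := (hreg x hxB).exists_isSpanningAt hF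
  refine isFlatAt_iff.2 fun ε hε => ?_
  obtain ⟨m, hm⟩ := exists_nat_one_div_lt hε
  have not_far : x ∉ far m := fun hfar => hx m k ⟨hxB, hfar, hk⟩
  filter_upwards [eventually_nhdsWithin_iff.1 (not_frequently.1 not_far)] with y hy
  rw [infDist_zero_of_mem hxB, sub_zero, abs_of_nonneg infDist_nonneg]
  rcases eq_or_ne y x with rfl | hyx
  · simp [infDist_zero_of_mem hxB]
  · exact (not_lt.1 (hy hyx)).trans (by gcongr)

lemma LipschitzDimLE.exists_isSpanningAt [MeasurableSpace X] [BorelSpace X]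
    [FiniteDimensional ℝ E] {μ : Measure X} (hμ : LipschitzDimLE μ (finrank ℝ E))
    (hF : LipschitzWith L F) (hB : MeasurableSet B) (hBt : μ B ≠ ⊤) (hB0 : 0 < μ B)
    (hreg : ∀ x ∈ B, IsRegularAt F x) :
    ∃ κ > 0, ∃ U ⊆ B, MeasurableSet U ∧ 0 < μ U ∧ ∀ x ∈ U, IsSpanningAt F B κ x := by
  set spanning : ℕ → Set X := fun k => {x | IsSpanningAt F B (1 / ((k : ℝ) + 1) / 2) x}
  obtain ⟨k, hk⟩ : ∃ k, μ (B ∩ spanning k) ≠ 0 := by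
    by_contra! hnull
    refine hB0.ne' (measure_eq_zero_iff_ae_notMem.2 ?_)
    filter_upwards [hμ.ae_isFlatAt_infDist hF hB hBt hreg,
      ae_all_iff.2 fun k => measure_eq_zero_iff_ae_notMem.1 (hnull k)] with x hflat hx hxB
    obtain ⟨k, hk⟩ := (hreg x hxB).exists_isSpanningAt hF
    exact hx k ⟨hxB, hk.of_isFlatAt_infDist hF Nat.one_div_pos_of_nat hxB (hflat hxB)⟩
  exact ⟨1 / ((k : ℝ) + 1) / 2, half_pos Nat.one_div_pos_of_nat, B ∩ spanning k,
    inter_subset_left, hB.inter (measurableSet_forall_frequently (isCompact_sphere _ _)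
      (isOpen_detects hF.continuous)), pos_iff_ne_zero.2 hk, fun x hx => hx.2⟩

end InfDist

/-! ### Alternating sums of small functions -/

section Sequences

variable {V : Type*} [NormedAddCommGroup V]

lemma norm_sub_le_of_le_geometric_two {a : ℕ → V} {C : ℝ}
    (ha : ∀ j, ‖a (j + 1) - a j‖ ≤ C * (1 / 2) ^ j) {k l : ℕ} (hkl : k ≤ l) :
    ‖a l - a k‖ ≤ 2 * C * (1 / 2) ^ k := by
  suffices ‖a l - a k‖ ≤ 2 * C * (1 / 2) ^ k - 2 * C * (1 / 2) ^ l by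
    have hC : 0 ≤ C := by simpa using (norm_nonneg _).trans (ha 0)
    have : 0 ≤ 2 * C * (1 / 2) ^ l := by positivity
    linarith
  induction l, hkl using Nat.le_induction with
  | base => simp
  | succ l _ ih =>
    calc ‖a (l + 1) - a k‖ ≤ ‖a (l + 1) - a l‖ + ‖a l - a k‖ :=
          norm_sub_le_norm_sub_add_norm_sub ..
      _ ≤ C * (1 / 2) ^ l + (2 * C * (1 / 2) ^ k - 2 * C * (1 / 2) ^ l) := add_le_add (ha l) ih
      _ = 2 * C * (1 / 2) ^ k - 2 * C * (1 / 2) ^ (l + 1) := by rw [pow_succ]; ring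

lemma abs_tsum_sub_sum_le {u s : ℕ → ℝ} (hs : Antitone s)
    (hu : ∀ j, |u (j + 1)| ≤ (1 / 2) ^ j * s j) (J : ℕ) :
    |∑' i, u i - ∑ i ∈ Finset.range (J + 1), u i| ≤ 2 * (1 / 2) ^ J * s J := by
  have hasSum_bound (J : ℕ) :
      HasSum (fun i : ℕ => (1 / 2 : ℝ) ^ (i + J) * s J) (2 * (1 / 2) ^ J * s J) := by
    simpa only [pow_add] using (hasSum_geometric_two.mul_right ((1 / 2 : ℝ) ^ J)).mul_right (s J)
  have norm_le (J i : ℕ) : ‖u (i + (J + 1))‖ ≤ (1 / 2 : ℝ) ^ (i + J) * s J :=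
    (hu (i + J)).trans (by gcongr; exact hs (Nat.le_add_left J i))
  have summable_u : Summable u :=
    (summable_nat_add_iff 1).1 (.of_norm_bounded (hasSum_bound 0).summable (norm_le 0))
  rw [← summable_u.sum_add_tsum_nat_add (J + 1), add_sub_cancel_left]
  exact tsum_of_norm_bounded (hasSum_bound J) (norm_le J)

/- Half of the last term is kept apart: the sums corrected in this way move only by half of the
difference of two consecutive terms. -/
lemma norm_sum_neg_one_pow_smul_le [NormedSpace ℝ V] {a : ℕ → V} (ha : ∀ j, ‖a j‖ ≤ 1)
    (ha' : ∀ j, ‖a (j + 1) - a j‖ ≤ 2 * (1 / 2) ^ j) (J : ℕ) :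
    ‖∑ i ∈ Finset.range (J + 1), (-1 : ℝ) ^ i • a i‖ ≤ 3 := by
  have norm_half (j : ℕ) (v : V) : ‖((-1 : ℝ) ^ j * (1 / 2)) • v‖ = 1 / 2 * ‖v‖ := by
    simp [norm_smul]
  have corrected (J : ℕ) : ‖∑ i ∈ Finset.range (J + 1), (-1 : ℝ) ^ i • a i
      - ((-1 : ℝ) ^ J * (1 / 2)) • a J‖ ≤ 5 / 2 - 2 * (1 / 2) ^ J := by
    induction J with
    | zero =>
      have half : a 0 - (1 / 2 : ℝ) • a 0 = ((-1 : ℝ) ^ 0 * (1 / 2)) • a 0 := by module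
      simp only [zero_add, Finset.sum_range_one, pow_zero, one_smul, one_mul]
      rw [half, norm_half]
      linarith [ha 0]
    | succ J ih =>
      calc ‖∑ i ∈ Finset.range (J + 1 + 1), (-1 : ℝ) ^ i • a i
            - ((-1 : ℝ) ^ (J + 1) * (1 / 2)) • a (J + 1)‖
          = ‖∑ i ∈ Finset.range (J + 1), (-1 : ℝ) ^ i • a i - ((-1 : ℝ) ^ J * (1 / 2)) • a J
              + ((-1 : ℝ) ^ (J + 1) * (1 / 2)) • (a (J + 1) - a J)‖ := by
            rw [Finset.sum_range_succ _ (J + 1), pow_succ]; congr 1; module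
        _ ≤ (5 / 2 - 2 * (1 / 2) ^ J) + 1 / 2 * (2 * (1 / 2) ^ J) := by
            refine norm_add_le_of_le ih ?_
            rw [norm_half]
            gcongr
            exact ha' J
        _ = 5 / 2 - 2 * (1 / 2) ^ (J + 1) := by rw [pow_succ]; ring
  calc ‖∑ i ∈ Finset.range (J + 1), (-1 : ℝ) ^ i • a i‖
      = ‖∑ i ∈ Finset.range (J + 1), (-1 : ℝ) ^ i • a i - ((-1 : ℝ) ^ J * (1 / 2)) • a J
          + ((-1 : ℝ) ^ J * (1 / 2)) • a J‖ := by rw [sub_add_cancel]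
    _ ≤ (5 / 2 - 2 * (1 / 2) ^ J) + 1 / 2 * 1 := by
        refine norm_add_le_of_le (corrected J) ?_
        rw [norm_half]
        gcongr
        exact ha J
    _ ≤ 3 := by linarith [show (0 : ℝ) < (1 / 2) ^ J by positivity]

end Sequences

section Alternating

variable {E : Type*} [NormedAddCommGroup E] [InnerProductSpace ℝ E]

/-- The alternating sum of a sequence of functions. -/
noncomputable def altSum (g : ℕ → E → ℝ) (w : E) : ℝ :=
  ∑' i, (-1) ^ i * g i w

/-- The alternating sum of the functions with index at most `J`. -/
noncomputable def altPartialSum (g : ℕ → E → ℝ) (J : ℕ) (w : E) : ℝ :=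
  ∑ i ∈ Finset.range (J + 1), (-1) ^ i * g i w

lemma norm_gradient [CompleteSpace E] (f : E → ℝ) (z : E) : ‖∇ f z‖ = ‖fderiv ℝ f z‖ := by
  simp [gradient]

lemma continuous_gradient [CompleteSpace E] {f : E → ℝ} (hf : ContDiff ℝ 1 f) :
    Continuous (∇ f) :=
  (InnerProductSpace.toDual ℝ E).symm.continuous.comp (hf.continuous_fderiv one_ne_zero)

variable [FiniteDimensional ℝ E]

/-- The alternating sum of the gradients of the functions with index at most `J`. -/
noncomputable def altGradient (g : ℕ → E → ℝ) (J : ℕ) (z : E) : E :=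
  ∑ i ∈ Finset.range (J + 1), (-1 : ℝ) ^ i • ∇ (g i) z

/-- The terms of an alternating sum which looks near each point of `Z`, on the scales between `s J`
and `r J`, like a linear map whose coefficients depend on `J`. -/
structure AlternatingTerms (Z : Set E) (s r : ℕ → ℝ) (g : ℕ → E → ℝ) : Prop where
  lipschitz (j : ℕ) : LipschitzWith 1 (g j)
  abs_le (j : ℕ) (w : E) : |g (j + 1) w| ≤ (1 / 2) ^ j * s j
  norm_gradient_sub_le (j : ℕ) : ∀ z ∈ Z, ‖∇ (g (j + 1)) z - ∇ (g j) z‖ ≤ 2 * (1 / 2) ^ j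
  linearization (j i : ℕ) (hij : i ≤ j) : ∀ z ∈ Z, ∀ w, ‖w - z‖ ≤ r j →
    |g i w - g i z - ⟪∇ (g i) z, w - z⟫| ≤ (1 / 2) ^ j / (j + 1) * ‖w - z‖

namespace AlternatingTerms

variable {Z : Set E} {s r : ℕ → ℝ} {g : ℕ → E → ℝ} {J : ℕ} {z w : E}

lemma abs_sub_le (hg : AlternatingTerms Z s r g) (j : ℕ) (w z : E) :
    |g j w - g j z| ≤ ‖w - z‖ := by
  simpa [Real.dist_eq, dist_eq_norm] using (hg.lipschitz j).dist_le_mul w z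

lemma norm_altGradient_le (hg : AlternatingTerms Z s r g) (hz : z ∈ Z) (J : ℕ) :
    ‖altGradient g J z‖ ≤ 3 :=
  norm_sum_neg_one_pow_smul_le
    (fun j => (norm_gradient _ _).trans_le
      (by simpa using norm_fderiv_le_of_lipschitz ℝ (hg.lipschitz j)))
    (fun j => hg.norm_gradient_sub_le j z hz) J

lemma abs_altSum_sub_altPartialSum_le (hg : AlternatingTerms Z s r g) (hs : Antitone s) (J : ℕ)
    (w z : E) : |(altSum g w - altSum g z) - (altPartialSum g J w - altPartialSum g J z)| ≤
      4 * (1 / 2) ^ J * s J := by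
  have tail (w : E) : |altSum g w - altPartialSum g J w| ≤ 2 * (1 / 2) ^ J * s J :=
    abs_tsum_sub_sum_le hs (fun j => by simpa [abs_mul] using hg.abs_le j w) J
  calc |(altSum g w - altSum g z) - (altPartialSum g J w - altPartialSum g J z)|
      = |(altSum g w - altPartialSum g J w) - (altSum g z - altPartialSum g J z)| := by
        congr 1; ring
    _ ≤ 2 * (1 / 2) ^ J * s J + 2 * (1 / 2) ^ J * s J :=
        (abs_sub _ _).trans (add_le_add (tail w) (tail z))
    _ = 4 * (1 / 2) ^ J * s J := by ring

lemma abs_altPartialSum_sub_inner_le (hg : AlternatingTerms Z s r g) (hz : z ∈ Z)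
    (hw : ‖w - z‖ ≤ r J) :
    |altPartialSum g J w - altPartialSum g J z - ⟪altGradient g J z, w - z⟫| ≤
      (1 / 2) ^ J * ‖w - z‖ := by
  have termwise : altPartialSum g J w - altPartialSum g J z - ⟪altGradient g J z, w - z⟫ =
      ∑ i ∈ Finset.range (J + 1),
        (-1) ^ i * (g i w - g i z - ⟪∇ (g i) z, w - z⟫) := by
    simp only [altPartialSum, altGradient, sum_inner, real_inner_smul_left,
      ← Finset.sum_sub_distrib, mul_sub]
  calc |altPartialSum g J w - altPartialSum g J z - ⟪altGradient g J z, w - z⟫|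
      ≤ ∑ i ∈ Finset.range (J + 1), |(-1) ^ i * (g i w - g i z - ⟪∇ (g i) z, w - z⟫)| :=
        termwise ▸ Finset.abs_sum_le_sum_abs _ _
    _ ≤ ∑ i ∈ Finset.range (J + 1), (1 / 2) ^ J / (J + 1) * ‖w - z‖ := by
        refine Finset.sum_le_sum fun i hi => ?_
        simpa [abs_mul] using
          hg.linearization J i (Nat.lt_succ_iff.1 (Finset.mem_range.1 hi)) z hz w hw
    _ = (1 / 2) ^ J * ‖w - z‖ := by
        rw [Finset.sum_const, Finset.card_range, nsmul_eq_mul]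
        push_cast
        field_simp

lemma abs_altSum_sub_inner_le (hg : AlternatingTerms Z s r g) (hs : Antitone s) (hz : z ∈ Z)
    (hw : ‖w - z‖ ≤ r J) :
    |altSum g w - altSum g z - ⟪altGradient g J z, w - z⟫| ≤
      (1 / 2) ^ J * (‖w - z‖ + 4 * s J) :=
  calc |altSum g w - altSum g z - ⟪altGradient g J z, w - z⟫|
      ≤ |(altSum g w - altSum g z) - (altPartialSum g J w - altPartialSum g J z)|
        + |altPartialSum g J w - altPartialSum g J z - ⟪altGradient g J z, w - z⟫| :=
        _root_.abs_sub_le _ _ _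
    _ ≤ 4 * (1 / 2) ^ J * s J + (1 / 2) ^ J * ‖w - z‖ :=
        add_le_add (hg.abs_altSum_sub_altPartialSum_le hs J w z)
          (hg.abs_altPartialSum_sub_inner_le hz hw)
    _ = (1 / 2) ^ J * (‖w - z‖ + 4 * s J) := by ring

lemma abs_altPartialSum_succ_sub_le (hg : AlternatingTerms Z s r g) (hz : z ∈ Z)
    (hw : ‖w - z‖ ≤ r J) :
    |altPartialSum g (J + 1) w - altPartialSum g (J + 1) z| ≤ 5 * ‖w - z‖ := by
  have inner_le : |⟪altGradient g J z, w - z⟫| ≤ 3 * ‖w - z‖ :=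
    (abs_real_inner_le_norm _ _).trans (by gcongr; exact hg.norm_altGradient_le hz J)
  have linear_error : |altPartialSum g J w - altPartialSum g J z - ⟪altGradient g J z, w - z⟫| ≤
      1 * ‖w - z‖ :=
    (hg.abs_altPartialSum_sub_inner_le hz hw).trans
      (by gcongr; exact pow_le_one₀ (by norm_num) (by norm_num))
  have last_term : |(-1) ^ (J + 1) * (g (J + 1) w - g (J + 1) z)| ≤ ‖w - z‖ := by
    simpa [abs_mul] using hg.abs_sub_le (J + 1) w z
  calc |altPartialSum g (J + 1) w - altPartialSum g (J + 1) z|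
      = |(altPartialSum g J w - altPartialSum g J z - ⟪altGradient g J z, w - z⟫)
          + ⟪altGradient g J z, w - z⟫ + (-1) ^ (J + 1) * (g (J + 1) w - g (J + 1) z)| := by
        simp only [altPartialSum, Finset.sum_range_succ _ (J + 1)]; congr 1; ring
    _ ≤ 1 * ‖w - z‖ + 3 * ‖w - z‖ + ‖w - z‖ :=
        (abs_add_three _ _ _).trans (add_le_add_three linear_error inner_le last_term)
    _ = 5 * ‖w - z‖ := by ring

end AlternatingTerms

end Alternating

section Composition

variable {X : Type*} [MetricSpace X] {E : Type*} [NormedAddCommGroup E] [InnerProductSpace ℝ E]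
  {F : X → E} {L : ℝ≥0} {x : X} {κ : ℝ} {B Y : Set X} {s t : ℕ → ℝ} {g : ℕ → E → ℝ}

lemma mul_norm_le_of_mem_annulusWindow {a b c : ℝ} (ha : 0 ≤ a) (hc : 0 ≤ c) {β : E}
    (hx : x ∈ annulusWindow (sphere 0 1) (Detects F Y κ) a b)
    (hβ : ∀ y ∈ Y, a < dist y x → dist y x < b → |⟪β, F y - F x⟫| ≤ c * dist y x) :
    κ * ‖β‖ ≤ c := by
  rcases eq_or_ne β 0 with rfl | hβ0
  · simpa using hc
  have norm_pos : 0 < ‖β‖ := norm_pos_iff.2 hβ0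
  obtain ⟨y, hay, hyb, hyY, hy⟩ := hx (‖β‖⁻¹ • β) (by simp [norm_smul, hβ0])
  rw [real_inner_smul_left, abs_mul, abs_inv, abs_norm, inv_mul_eq_div, lt_div_iff₀ norm_pos]
    at hy
  refine le_of_mul_le_mul_right ?_ (ha.trans_lt hay)
  linarith [hβ y hyY hay hyb]

variable [FiniteDimensional ℝ E]

lemma AlternatingTerms.lipschitzOnWith_altSum_comp
    (hg : AlternatingTerms (F '' B) s (fun j => L * t j) g) (hF : LipschitzWith L F)
    (hst : LacunaryScales s t) :
    LipschitzOnWith (5 * L + 4) (fun x => altSum g (F x)) B := by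
  refine LipschitzOnWith.of_dist_le_mul fun y _ x hx => ?_
  have dist_F_le : ‖F y - F x‖ ≤ L * dist y x := by
    simpa [dist_eq_norm] using hF.dist_le_mul y x
  rcases eq_or_ne y x with rfl | hyx
  · simp
  classical
  have exists_scale : ∃ j, t j ≤ dist y x :=
    (hst.tendsto_right.eventually_le_const (dist_pos.2 hyx)).exists
  set J := Nat.find exists_scale
  have t_le : t J ≤ dist y x := Nat.find_spec exists_scale
  have tail : |(altSum g (F y) - altSum g (F x))
      - (altPartialSum g J (F y) - altPartialSum g J (F x))| ≤ 4 * dist y x :=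
    calc _ ≤ 4 * (1 / 2) ^ J * s J := hg.abs_altSum_sub_altPartialSum_le hst.antitone_left J _ _
      _ ≤ 4 * 1 * dist y x := by
          have := (hst.pos J).le
          gcongr
          · exact pow_le_one₀ (by norm_num) (by norm_num)
          · exact (hst.lt J).le.trans t_le
      _ = 4 * dist y x := by ring
  have partial_sum : |altPartialSum g J (F y) - altPartialSum g J (F x)| ≤ 5 * ‖F y - F x‖ := by
    cases h : J with
    | zero =>
      simpa [altPartialSum] using
        (hg.abs_sub_le 0 (F y) (F x)).trans (by linarith [norm_nonneg (F y - F x)])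
    | succ j =>
      have lt_t : dist y x < t j := not_le.1 (Nat.find_min exists_scale (by omega))
      exact hg.abs_altPartialSum_succ_sub_le (mem_image_of_mem F hx)
        (dist_F_le.trans (by gcongr))
  calc |altSum g (F y) - altSum g (F x)|
    _ ≤ 4 * dist y x + 5 * (L * dist y x) := by
        linarith [abs_sub_abs_le_abs_sub (altSum g (F y) - altSum g (F x))
          (altPartialSum g J (F y) - altPartialSum g J (F x))]
    _ = ↑(5 * L + 4) * dist y x := by push_cast; ring

lemma AlternatingTerms.tendsto_altGradient
    (hg : AlternatingTerms (F '' B) s (fun j => L * t j) g) (hF : LipschitzWith L F)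
    (hst : LacunaryScales s t) (hκ : 0 < κ) (hx : x ∈ B)
    (hwin : ∀ j, x ∈ annulusWindow (sphere 0 1) (Detects F B κ) (s j) (t j)) {f : X → ℝ}
    (hf : EqOn (fun y => altSum g (F y)) f B) {α : E} (hα : HasChartGradientAt F f α x) :
    Tendsto (fun J => altGradient g J (F x)) atTop (𝓝 α) := by
  refine Metric.tendsto_nhds.2 fun ε hε => ?_
  obtain ⟨r, hr, hball⟩ := Metric.eventually_nhds_iff.1
    (isFlatAt_iff.1 hα (ε := κ * ε / 4) (by positivity))
  have tendsto_error : Tendsto (fun J : ℕ => (1 / 2 : ℝ) ^ J * (L + 4)) atTop (𝓝 0) := by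
    simpa using (tendsto_pow_atTop_nhds_zero_of_lt_one (r := (1 / 2 : ℝ)) (by norm_num)
      (by norm_num)).mul_const (L + 4 : ℝ)
  filter_upwards [hst.tendsto_right.eventually_lt_const hr,
    tendsto_error.eventually_le_const (show 0 < κ * ε / 4 by positivity)] with J hJr hJ
  suffices κ * ‖altGradient g J (F x) - α‖ ≤ κ * ε / 2 by
    rw [dist_eq_norm]
    exact lt_of_mul_lt_mul_left (this.trans_lt (half_lt_self (by positivity))) hκ.le
  refine mul_norm_le_of_mem_annulusWindow (hst.pos J).le (by positivity) (hwin J)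
    fun y hy hsy hyt => ?_
  have dist_F_le : ‖F y - F x‖ ≤ L * dist y x := by
    simpa [dist_eq_norm] using hF.dist_le_mul y x
  have flat := hball (hyt.trans hJr)
  rw [← hf hy, ← hf hx] at flat
  calc |⟪altGradient g J (F x) - α, F y - F x⟫|
      = |(altSum g (F y) - ⟪α, F y⟫ - (altSum g (F x) - ⟪α, F x⟫))
        - (altSum g (F y) - altSum g (F x) - ⟪altGradient g J (F x), F y - F x⟫)| := by
        rw [inner_sub_left, inner_sub_right α]; congr 1; ring
    _ ≤ κ * ε / 4 * dist y x + (1 / 2) ^ J * (‖F y - F x‖ + 4 * s J) :=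
        (abs_sub _ _).trans (add_le_add flat (hg.abs_altSum_sub_inner_le hst.antitone_left
          (mem_image_of_mem F hx) (dist_F_le.trans (by gcongr))))
    _ ≤ κ * ε / 4 * dist y x + (1 / 2) ^ J * (L * dist y x + 4 * dist y x) := by gcongr
    _ = κ * ε / 4 * dist y x + (1 / 2) ^ J * (L + 4) * dist y x := by ring
    _ ≤ κ * ε / 4 * dist y x + κ * ε / 4 * dist y x := by gcongr
    _ = κ * ε / 2 * dist y x := by ring

lemma AlternatingTerms.not_hasChartGradientAt
    (hg : AlternatingTerms (F '' B) s (fun j => L * t j) g) (hF : LipschitzWith L F)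
    (hst : LacunaryScales s t) (hκ : 0 < κ) (hx : x ∈ B)
    (hwin : ∀ j, x ∈ annulusWindow (sphere 0 1) (Detects F B κ) (s j) (t j)) {f : X → ℝ}
    (hf : EqOn (fun y => altSum g (F y)) f B) {c : ℝ} (hc : 0 < c)
    (hgc : ∀ j, c ≤ ‖∇ (g j) (F x)‖) (α : E) : ¬ HasChartGradientAt F f α x := by
  intro hα
  have tendsto := hg.tendsto_altGradient hF hst hκ hx hwin hf hα
  have tendsto_increment : Tendsto (fun J => ‖altGradient g (J + 1) (F x) - altGradient g J (F x)‖)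
      atTop (𝓝 0) := by
    simpa using ((tendsto.comp (tendsto_add_atTop_nat 1)).sub tendsto).norm
  obtain ⟨J, hJ⟩ := (tendsto_increment.eventually_lt_const hc).exists
  refine (hgc (J + 1)).not_gt (lt_of_eq_of_lt ?_ hJ)
  simp [altGradient, Finset.sum_range_succ _ (J + 1), norm_smul]

end Composition

/-! ### Small potentials with steep gradients -/

section Linearization

variable {E : Type*} [NormedAddCommGroup E] [InnerProductSpace ℝ E] [CompleteSpace E]
  {ψ : ℕ → E → ℝ} {K : Set E} {ε : ℝ}

lemma eventually_forall_abs_sub_inner_gradient_le {φ : E → ℝ} (hφ : ContDiff ℝ 1 φ)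
    (hK : IsCompact K) (hε : 0 < ε) :
    ∀ᶠ ρ in 𝓝[>] (0 : ℝ), ∀ z ∈ K, ∀ w, ‖w - z‖ ≤ ρ →
      |φ w - φ z - ⟪∇ φ z, w - z⟫| ≤ ε * ‖w - z‖ := by
  obtain ⟨δ, hδ, hclose⟩ := Metric.mem_uniformity_dist.1
    (hK.uniformContinuousAt_of_continuousAt (fderiv ℝ φ)
      (fun z _ => (hφ.continuous_fderiv one_ne_zero).continuousAt) (Metric.dist_mem_uniformity hε))
  filter_upwards [Ioo_mem_nhdsGT hδ] with ρ hρ z hz w hw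
  have := (convex_closedBall z ρ).norm_image_sub_le_of_norm_fderiv_le' (𝕜 := ℝ)
    (φ := fderiv ℝ φ z) (C := ε) (x := z) (y := w)
    (fun y _ => hφ.differentiable one_ne_zero y)
    (fun y hy => by
      rw [← dist_eq_norm, dist_comm]
      exact (hclose ((mem_closedBall'.1 hy).trans_lt hρ.2) hz).le)
    (mem_closedBall_self hρ.1.le) (by rwa [mem_closedBall, dist_eq_norm])
  simpa using this

lemma exists_forall_le_abs_sub_inner_gradient_le (hψ : ∀ k, ContDiff ℝ 1 (ψ k)) (hK : IsCompact K)
    (hε : 0 < ε) (k : ℕ) :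
    ∃ ρ > 0, ∀ i ≤ k, ∀ z ∈ K, ∀ w, ‖w - z‖ ≤ ρ →
      |ψ i w - ψ i z - ⟪∇ (ψ i) z, w - z⟫| ≤ ε * ‖w - z‖ := by
  have eventually_all := (Finset.eventually_all (Finset.range (k + 1))).2 fun i _ =>
    eventually_forall_abs_sub_inner_gradient_le (hψ i) hK hε
  obtain ⟨ρ, hρ, hρ0⟩ := (eventually_all.and self_mem_nhdsWithin).exists
  exact ⟨ρ, hρ0, fun i hi => hρ i (Finset.mem_range_succ_iff.2 hi)⟩

end Linearization

section Subsequence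

lemma exists_antitoneOn_index {τ : ℕ → ℝ} (hτ : Tendsto τ atTop (𝓝 0)) :
    ∃ N : ℝ → ℕ, AntitoneOn N (Ioi 0) ∧ ∀ δ > 0, ∀ k ≥ N δ, τ k ≤ δ := by
  set S : ℝ → Set ℕ := fun δ => {N | ∀ k ≥ N, τ k ≤ δ}
  have sInf_mem (δ : ℝ) (hδ : 0 < δ) : sInf (S δ) ∈ S δ :=
    Nat.sInf_mem (eventually_atTop.1 (hτ.eventually_le_const hδ))
  exact ⟨fun δ => sInf (S δ), fun δ hδ δ' _ h => Nat.sInf_le fun k hk =>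
    (sInf_mem δ hδ k hk).trans h, sInf_mem⟩

variable {X : Type*} [MeasurableSpace X] {μ : Measure X} {U : Set X}

/- The index `k (j + 1)` is chosen after the scale `s j` and before the scale `t (j + 1)`. -/
lemma exists_lacunaryScales_index (hU : MeasurableSet U) (hUt : μ U ≠ ⊤) (hU0 : 0 < μ U)
    {W : ℝ → ℝ → Set X} (hW : ∀ s t, MeasurableSet (W s t)) (hanti : ∀ t, Antitone fun s => W s t)
    (hUW : ∀ t, 0 < t → ∀ x ∈ U, ∃ m : ℕ, x ∈ W (1 / ((m : ℝ) + 1)) t) {τ ρ : ℕ → ℝ}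
    (hτ : Tendsto τ atTop (𝓝 0)) (hρ : ∀ k, 0 < ρ k) :
    ∃ (s t : ℕ → ℝ) (k : ℕ → ℕ), LacunaryScales s t ∧ Monotone k ∧ (∀ j, j ≤ k j) ∧
      (∀ j, τ (k (j + 1)) ≤ (1 / 2) ^ j * s j) ∧ (∀ j, t j ≤ ρ (k j)) ∧
      0 < μ (U ∩ ⋂ j, W (s j) (t j)) := by
  obtain ⟨N, hN, hNτ⟩ := exists_antitoneOn_index hτ
  set next : ℕ → ℝ → ℕ := fun j s => max (j + 1) (N ((1 / 2) ^ j * s))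
  obtain ⟨s, t, hst, ht₀, ht, hpos⟩ := exists_lacunaryScales hU hUt hU0 (fun _ => hW)
    (fun _ => hanti) (fun _ => hUW) (b := fun j s => ρ (next j s)) (fun _ _ _ => hρ _) (hρ 0)
  have scale_pos (j : ℕ) : 0 < (1 / 2) ^ j * s j := mul_pos (by positivity) (hst.pos j)
  refine ⟨s, t, fun | 0 => 0 | j + 1 => next j (s j), hst, monotone_nat_of_le_succ ?_, ?_,
    fun j => hNτ _ (scale_pos j) _ (le_max_right _ _), ?_, hpos⟩
  · rintro (_ | j)
    · exact Nat.zero_le _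
    · refine max_le_max (Nat.le_succ _) (hN (scale_pos _) (scale_pos j) ?_)
      have := (hst.pos (j + 1)).le
      gcongr ?_ * ?_
      · exact pow_le_pow_of_le_one (by norm_num) (by norm_num) (Nat.le_succ j)
      · exact hst.antitone_left (Nat.le_succ j)
  · rintro (_ | j)
    exacts [le_rfl, le_max_left _ _]
  · rintro (_ | j)
    exacts [ht₀, ht j]

end Subsequence

section Steep

variable {E : Type*} [NormedAddCommGroup E] [InnerProductSpace ℝ E] [FiniteDimensional ℝ E]
  {ψ : ℕ → E → ℝ}

lemma alternatingTerms_comp {Z : Set E} {s r τ ρ : ℕ → ℝ} {k : ℕ → ℕ}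
    (hψ : ∀ k, LipschitzWith 1 (ψ k)) (hψτ : ∀ k w, |ψ k w| ≤ τ k)
    (hdiff : ∀ k, ∀ z ∈ Z, ‖∇ (ψ (k + 1)) z - ∇ (ψ k) z‖ ≤ (1 / 2) ^ k)
    (hlin : ∀ k, ∀ i ≤ k, ∀ z ∈ Z, ∀ w, ‖w - z‖ ≤ ρ k →
      |ψ i w - ψ i z - ⟪∇ (ψ i) z, w - z⟫| ≤ (1 / 2) ^ k / (k + 1) * ‖w - z‖)
    (hk : Monotone k) (le_k : ∀ j, j ≤ k j) (hτ : ∀ j, τ (k (j + 1)) ≤ (1 / 2) ^ j * s j)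
    (hr : ∀ j, r j ≤ ρ (k j)) : AlternatingTerms Z s r fun j => ψ (k j) where
  lipschitz j := hψ (k j)
  abs_le j w := (hψτ _ w).trans (hτ j)
  norm_gradient_sub_le j z hz :=
    calc ‖∇ (ψ (k (j + 1))) z - ∇ (ψ (k j)) z‖ ≤ 2 * 1 * (1 / 2) ^ k j :=
          norm_sub_le_of_le_geometric_two (a := fun i => ∇ (ψ i) z)
            (fun i => by simpa using hdiff i z hz) (hk (Nat.le_succ j))
      _ ≤ 2 * 1 * (1 / 2) ^ j := by
          gcongr 2 * 1 * ?_
          exact pow_le_pow_of_le_one (by norm_num) (by norm_num) (le_k j)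
      _ = 2 * (1 / 2) ^ j := by ring
  linearization j i hij z hz w hw := by
    refine (hlin (k j) (k i) (hk hij) z hz w (hw.trans (hr j))).trans ?_
    gcongr ?_ / (?_ + 1) * _
    · exact pow_le_pow_of_le_one (by norm_num) (by norm_num) (le_k j)
    · exact_mod_cast le_k j

variable {X : Type*} [MetricSpace X] [MeasurableSpace X] [BorelSpace X] {μ : Measure X} {F : X → E}
  {L : ℝ≥0} {B : Set X} {K : Set E}

lemma LipschitzDimLE.measure_eq_zero_of_le_norm_gradient (hμ : LipschitzDimLE μ (finrank ℝ E))
    (hF : LipschitzWith L F) (hB : MeasurableSet B) (hBt : μ B ≠ ⊤)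
    (hreg : ∀ x ∈ B, IsRegularAt F x) (hK : IsCompact K) (hFK : F '' B ⊆ K)
    (hψ : ∀ k, ContDiff ℝ 1 (ψ k)) (hψ₁ : ∀ k, LipschitzWith 1 (ψ k)) {τ : ℕ → ℝ}
    (hτ : Tendsto τ atTop (𝓝 0)) (hψτ : ∀ k w, |ψ k w| ≤ τ k)
    (hdiff : ∀ k, ∀ z ∈ F '' B, ‖∇ (ψ (k + 1)) z - ∇ (ψ k) z‖ ≤ (1 / 2) ^ k) {c : ℝ} (hc : 0 < c)
    (hsteep : ∀ k, ∀ z ∈ F '' B, c ≤ ‖∇ (ψ k) z‖) : μ B = 0 := by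
  by_contra hB0
  obtain ⟨κ, hκ, U, hUB, hU, hU0, hspan⟩ :=
    hμ.exists_isSpanningAt hF hB hBt (pos_iff_ne_zero.2 hB0) hreg
  choose ρ ρ_pos hρ using fun k : ℕ => exists_forall_le_abs_sub_inner_gradient_le hψ hK
    (show 0 < (1 / 2 : ℝ) ^ k / (k + 1) by positivity) k
  have isOpen_window (s t : ℝ) : IsOpen (annulusWindow (sphere 0 1) (Detects F B κ) s t) :=
    isOpen_annulusWindow (isCompact_sphere _ _) (isOpen_detects hF.continuous)
  obtain ⟨s, t, k, hst, hk, le_k, hkτ, htρ, hpos⟩ := exists_lacunaryScales_index hU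
    (measure_ne_top_of_subset hUB hBt) hU0 (fun s t => (isOpen_window s t).measurableSet)
    (fun _ => antitone_annulusWindow) (fun t ht x hx => exists_mem_annulusWindow
      (isCompact_sphere _ _) (isOpen_detects hF.continuous) ht (hspan x hx))
    hτ (ρ := fun k => ρ k / (L + 1)) (fun k => div_pos (ρ_pos k) (by positivity))
  have terms : AlternatingTerms (F '' B) s (fun j => L * t j) fun j => ψ (k j) := by
    refine alternatingTerms_comp hψ₁ hψτ hdiff (fun k i hi z hz => hρ k i hi z (hFK hz)) hk le_k
      hkτ fun j => ?_
    have := (le_div_iff₀ (by positivity)).1 (htρ j)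
    linarith [hst.right_pos j]
  obtain ⟨f, hf, hfB⟩ := (terms.lipschitzOnWith_altSum_comp hF hst).extend_real
  obtain ⟨x, ⟨hxU, hxW⟩, α, hα⟩ := hμ.exists_hasChartGradientAt hF
    (hU.inter (.iInter fun j => (isOpen_window (s j) (t j)).measurableSet)) hpos
    (fun x hx => hreg x (hUB hx.1)) hf
  exact terms.not_hasChartGradientAt hF hst hκ (hUB hxU) (mem_iInter.1 hxW) hfB hc
    (fun j => hsteep (k j) _ (mem_image_of_mem F (hUB hxU))) α hα

end Steep

/-! ### Extraction of a strongly convergent sequence of potentials -/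

section Extraction

/- Elements of almost minimal norm converge, by the parallelogram law. -/
lemma exists_seq_mem_norm_sub_le_of_antitone_convex {H : Type*} [NormedAddCommGroup H]
    [InnerProductSpace ℝ H] {C : ℕ → Set H} (hC : Antitone C) (hne : ∀ k, (C k).Nonempty)
    (hconv : ∀ k, Convex ℝ (C k)) {M : ℝ} (hM : ∀ u ∈ C 0, ‖u‖ ≤ M) {δ : ℕ → ℝ} (hδ : ∀ k, 0 < δ k)
    (hδa : Antitone δ) :
    ∃ u : ℕ → H, (∀ k, u k ∈ C k) ∧ ∀ k, ‖u (k + 1) - u k‖ ≤ δ k := by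
  set d : ℕ → ℝ := fun k => infDist 0 (C k)
  have d_le {k : ℕ} {u : H} (hu : u ∈ C k) : d k ≤ ‖u‖ := by
    simpa using infDist_le_dist_of_mem (x := (0 : H)) hu
  have d_mono : Monotone d := fun k l hkl => infDist_le_infDist_of_subset (hC hkl) (hne l)
  have d_bdd : BddAbove (range d) := by
    refine ⟨M, forall_mem_range.2 fun k => ?_⟩
    obtain ⟨u, hu⟩ := hne k
    exact (d_le hu).trans (hM u (hC (Nat.zero_le k) hu))
  set D : ℝ := ⨆ k, d k
  have sq_lt (k : ℕ) : ∀ᶠ m in atTop, D ^ 2 - δ k ^ 2 / 8 < d m ^ 2 :=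
    ((tendsto_atTop_ciSup d_mono d_bdd).pow 2).eventually_const_lt
      (sub_lt_self _ (by have := hδ k; positivity))
  obtain ⟨m, hm, hmd⟩ := extraction_forall_of_eventually sq_lt
  have almost_min (k : ℕ) : ∃ u ∈ C (m k), ‖u‖ ^ 2 ≤ D ^ 2 + δ k ^ 2 / 8 := by
    have hr : d (m k) < √(D ^ 2 + δ k ^ 2 / 8) :=
      (le_ciSup d_bdd (m k)).trans_lt (Real.lt_sqrt_of_sq_lt
        (lt_add_of_pos_right _ (by have := hδ k; positivity)))
    obtain ⟨u, hu, hur⟩ := (infDist_lt_iff (hne _)).1 hr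
    refine ⟨u, hu, ?_⟩
    rw [dist_zero_left] at hur
    exact (Real.le_sqrt (norm_nonneg u) (by positivity)).1 hur.le
  choose u hu hu_sq using almost_min
  refine ⟨u, fun k => hC (hm.id_le k) (hu k), fun k => ?_⟩
  have mid : d (m k) ≤ ‖midpoint ℝ (u k) (u (k + 1))‖ :=
    d_le ((hconv _).midpoint_mem (hu k) (hC (hm.monotone k.le_succ) (hu (k + 1))))
  have mid_sq : d (m k) ^ 2 ≤ ‖u (k + 1) + u k‖ ^ 2 / 4 := by
    refine (pow_le_pow_left₀ infDist_nonneg mid 2).trans_eq ?_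
    rw [midpoint_eq_smul_add, norm_smul, add_comm (u k)]
    norm_num
    ring
  have δ_sq : δ (k + 1) ^ 2 ≤ δ k ^ 2 := pow_le_pow_left₀ (hδ _).le (hδa k.le_succ) 2
  refine le_of_sq_le_sq ?_ (hδ k).le
  linarith [parallelogram_law_with_norm ℝ (u (k + 1)) (u k), hmd k, hu_sq k, hu_sq (k + 1)]

end Extraction

section TailMeasure

variable {α E : Type*} [MeasurableSpace α] [NormedAddCommGroup E] {ν : Measure α}

lemma meas_ge_le_of_eLpNorm_two_le {f : α → E} (hf : AEStronglyMeasurable f ν) {a b : ℝ≥0∞}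
    (ha : a ≠ 0) (ha' : a ≠ ⊤) (h : eLpNorm f 2 ν ≤ a * b) : ν {x | a ≤ ‖f x‖ₑ} ≤ b ^ 2 := by
  have chebyshev := meas_ge_le_mul_pow_eLpNorm_enorm ν two_ne_zero ENNReal.ofNat_ne_top hf ha
    (fun h => absurd h ha')
  calc ν {x | a ≤ ‖f x‖ₑ} ≤ a⁻¹ ^ 2 * (a * b) ^ 2 := by
        refine chebyshev.trans ?_
        simp only [ENNReal.toReal_ofNat, ENNReal.rpow_ofNat]
        gcongr
    _ = b ^ 2 := by rw [← mul_pow, ← mul_assoc, ENNReal.inv_mul_cancel ha ha', one_mul]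

lemma tendsto_measure_iUnion_norm_ge {f : ℕ → α → E} (hf : ∀ k, AEStronglyMeasurable (f k) ν)
    (h : ∀ k, eLpNorm (f k) 2 ν ≤ ENNReal.ofReal ((1 / 4) ^ k)) :
    Tendsto (fun k₀ => ν (⋃ k, {x | (1 / 2) ^ (k + k₀) ≤ ‖f (k + k₀) x‖})) atTop (𝓝 0) := by
  have bound (k : ℕ) : ν {x | (1 / 2) ^ k ≤ ‖f k x‖} ≤ ENNReal.ofReal ((1 / 4) ^ k) := by
    have half_pos : (0 : ℝ) < (1 / 2) ^ k := by positivity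
    have h_mul : eLpNorm (f k) 2 ν ≤
        ENNReal.ofReal ((1 / 2) ^ k) * ENNReal.ofReal ((1 / 2) ^ k) := by
      convert h k using 1
      rw [← ENNReal.ofReal_mul half_pos.le, ← mul_pow]
      norm_num
    have := meas_ge_le_of_eLpNorm_two_le (hf k) (ENNReal.ofReal_pos.2 half_pos).ne'
      ENNReal.ofReal_ne_top h_mul
    rw [← ENNReal.ofReal_pow half_pos.le, ← pow_mul, mul_comm, pow_mul] at this
    simp only [← ofReal_norm, ENNReal.ofReal_le_ofReal_iff (norm_nonneg _)] at this
    norm_num at this ⊢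
    exact this
  have summable : ∑' k : ℕ, ENNReal.ofReal ((1 / 4 : ℝ) ^ k) ≠ ⊤ :=
    (summable_geometric_of_lt_one (by norm_num) (by norm_num)).tsum_ofReal_ne_top
  exact tendsto_of_tendsto_of_tendsto_of_le_of_le tendsto_const_nhds
    (ENNReal.tendsto_sum_nat_add _ summable) (fun _ => zero_le)
    fun k₀ => (measure_iUnion_le _).trans (ENNReal.tsum_le_tsum fun k => bound (k + k₀))

lemma integral_le_measureReal_ge_add [IsFiniteMeasure ν] {f : α → ℝ} (hfm : Measurable f)
    (hf : Integrable f ν) (hf₁ : ∀ x, f x ≤ 1) {c : ℝ} (hc : 0 ≤ c) :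
    ∫ x, f x ∂ν ≤ ν.real {x | c ≤ f x} + c * ν.real univ := by
  have hP : MeasurableSet {x | c ≤ f x} := measurableSet_le measurable_const hfm
  have indicator_int : Integrable ({x | c ≤ f x}.indicator (1 : α → ℝ)) ν :=
    (integrable_const (1 : ℝ)).indicator hP
  calc ∫ x, f x ∂ν ≤ ∫ x, ({x | c ≤ f x}.indicator 1 x + c) ∂ν := by
        refine integral_mono hf (indicator_int.add (integrable_const c)) fun x => ?_
        by_cases hx : c ≤ f x
        · simpa [hx] using (hf₁ x).trans (le_add_of_nonneg_right hc)
        · simpa [hx] using (not_le.1 hx).le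
    _ = ν.real {x | c ≤ f x} + c * ν.real univ := by
        rw [integral_add indicator_int (integrable_const c), integral_indicator_one hP,
          integral_const, smul_eq_mul, mul_comm]

end TailMeasure

lemma half_le_norm_of_le_geometric_two {V : Type*} [NormedAddCommGroup V] {a : ℕ → V} {k₀ : ℕ}
    (ha : ∀ j, ‖a (j + k₀ + 1) - a (j + k₀)‖ ≤ (1 / 2) ^ (j + k₀)) {c : ℝ} (hc : c ≤ ‖a k₀‖)
    (hk₀ : (1 / 2) ^ k₀ ≤ c / 4) (k : ℕ) : c / 2 ≤ ‖a (k + k₀)‖ := by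
  have := norm_sub_le_of_le_geometric_two (a := fun j => a (j + k₀)) (C := (1 / 2) ^ k₀)
    (fun j => by rw [← pow_add, add_comm k₀, Nat.add_right_comm]; exact ha j) (Nat.zero_le k)
  simp only [zero_add, pow_zero, mul_one] at this
  linarith [norm_sub_norm_le (a k₀) (a (k + k₀)), norm_sub_rev (a k₀) (a (k + k₀))]

section SmallPotentials

variable {E : Type*} [NormedAddCommGroup E] [InnerProductSpace ℝ E] [FiniteDimensional ℝ E]
  {φ ψ : E → ℝ}

lemma gradient_smul_add_smul (hφ : ContDiff ℝ 1 φ) (hψ : ContDiff ℝ 1 ψ) (a b : ℝ) :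
    ∇ (a • φ + b • ψ) = a • ∇ φ + b • ∇ ψ := by
  refine gradient_eq fun x => ?_
  have hasFDerivAt {χ : E → ℝ} (hχ : ContDiff ℝ 1 χ) : HasFDerivAt χ (fderiv ℝ χ x) x :=
    (hχ.differentiable one_ne_zero x).hasFDerivAt
  rw [hasGradientAt_iff_hasFDerivAt]
  exact (((hasFDerivAt hφ).const_smul a).add ((hasFDerivAt hψ).const_smul b)).congr_fderiv
    (by simp [toDual_gradient])

variable [MeasurableSpace E] {ν : Measure E} {e : E} {η : ℝ} {k : ℕ}

/-- The `C¹` potentials with gradient of norm at most `1` and size at most `1 / (k + 1)` whose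
gradient has integral more than `η` in the direction `e`. The divergence is closable as soon as,
for all `e` and `η > 0`, some class is empty. -/
def smallPotentials (ν : Measure E) (e : E) (η : ℝ) (k : ℕ) : Set (E → ℝ) :=
  {φ | ContDiff ℝ 1 φ ∧ (∀ x, ‖∇ φ x‖ ≤ 1) ∧ (∀ x, |φ x| ≤ 1 / ((k : ℝ) + 1)) ∧
    η < ∫ x, ⟪e, ∇ φ x⟫ ∂ν}

lemma smallPotentials_antitone : Antitone (smallPotentials ν e η) :=
  fun _ _ hkl _ hφ => ⟨hφ.1, hφ.2.1, fun x => (hφ.2.2.1 x).trans (Nat.one_div_le_one_div hkl),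
    hφ.2.2.2⟩

variable [BorelSpace E]

lemma memLp_gradient [IsFiniteMeasure ν] (hφ : ContDiff ℝ 1 φ) (hφ₁ : ∀ x, ‖∇ φ x‖ ≤ 1)
    (p : ℝ≥0∞) : MemLp (∇ φ) p ν :=
  .of_bound (continuous_gradient hφ).aestronglyMeasurable 1 (.of_forall hφ₁)

lemma integrable_inner_gradient [IsFiniteMeasure ν] (hφ : ContDiff ℝ 1 φ)
    (hφ₁ : ∀ x, ‖∇ φ x‖ ≤ 1) (e : E) : Integrable (fun x => ⟪e, ∇ φ x⟫) ν :=
  (memLp_one_iff_integrable.1 (memLp_gradient hφ hφ₁ 1)).const_inner e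

lemma convex_smallPotentials [IsFiniteMeasure ν] : Convex ℝ (smallPotentials ν e η k) := by
  rintro φ ⟨hφ, hφ₁, hφk, hφη⟩ ψ ⟨hψ, hψ₁, hψk, hψη⟩ a b ha hb hab
  have hgrad := gradient_smul_add_smul hφ hψ a b
  refine ⟨.add (hφ.const_smul a) (hψ.const_smul b), fun x => ?_, fun x => ?_, ?_⟩
  · rw [hgrad, ← mem_closedBall_zero_iff]
    exact convex_closedBall (0 : E) 1 (mem_closedBall_zero_iff.2 (hφ₁ x))
      (mem_closedBall_zero_iff.2 (hψ₁ x)) ha hb hab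
  · rw [← Real.norm_eq_abs, ← mem_closedBall_zero_iff]
    exact convex_closedBall (0 : ℝ) _ (mem_closedBall_zero_iff.2 (hφk x))
      (mem_closedBall_zero_iff.2 (hψk x)) ha hb hab
  · simp only [hgrad, Pi.add_apply, Pi.smul_apply, inner_add_right, real_inner_smul_right]
    rw [integral_add ((integrable_inner_gradient hφ hφ₁ e).const_mul a)
      ((integrable_inner_gradient hψ hψ₁ e).const_mul b), integral_const_mul, integral_const_mul]
    exact convex_Ioi η hφη hψη ha hb hab

lemma exists_seq_mem_smallPotentials [IsFiniteMeasure ν]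
    (hne : ∀ k, (smallPotentials ν e η k).Nonempty) {δ : ℕ → ℝ} (hδ : ∀ k, 0 < δ k)
    (hδa : Antitone δ) :
    ∃ ψ : ℕ → E → ℝ, (∀ k, ψ k ∈ smallPotentials ν e η k) ∧
      ∀ k, eLpNorm (∇ (ψ (k + 1)) - ∇ (ψ k)) 2 ν ≤ ENNReal.ofReal (δ k) := by
  set C : ℕ → Set (Lp E 2 ν) := fun k => {u | ∃ φ ∈ smallPotentials ν e η k, u =ᵐ[ν] ∇ φ}
  have C_nonempty (k : ℕ) : (C k).Nonempty :=
    (hne k).elim fun φ hφ => ⟨_, φ, hφ, (memLp_gradient hφ.1 hφ.2.1 2).coeFn_toLp⟩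
  have C_convex (k : ℕ) : Convex ℝ (C k) := by
    rintro u ⟨φ, hφ, hu⟩ v ⟨ψ, hψ, hv⟩ a b ha hb hab
    refine ⟨_, convex_smallPotentials hφ hψ ha hb hab, ?_⟩
    rw [gradient_smul_add_smul hφ.1 hψ.1]
    exact (Lp.coeFn_add _ _).trans
      (((Lp.coeFn_smul a u).trans (hu.const_smul a)).add
        ((Lp.coeFn_smul b v).trans (hv.const_smul b)))
  have C_bounded : ∀ u ∈ C 0, ‖u‖ ≤ ν.real univ ^ (2 : ℝ≥0∞).toReal⁻¹ * 1 := by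
    rintro u ⟨φ, hφ, hu⟩
    refine Lp.norm_le_of_ae_bound zero_le_one ?_
    filter_upwards [hu] with x hx
    exact hx ▸ hφ.2.1 x
  have C_antitone : Antitone C :=
    fun k l hkl u ⟨φ, hφ, hu⟩ => ⟨φ, smallPotentials_antitone hkl hφ, hu⟩
  obtain ⟨u, hu, hu_sub⟩ := exists_seq_mem_norm_sub_le_of_antitone_convex C_antitone C_nonempty
    C_convex C_bounded hδ hδa
  choose ψ hψ huψ using hu
  refine ⟨ψ, hψ, fun k => ?_⟩
  rw [← eLpNorm_congr_ae ((Lp.coeFn_sub _ _).trans ((huψ (k + 1)).sub (huψ k))),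
    ← ENNReal.ofReal_toReal (Lp.eLpNorm_ne_top _), ← Lp.norm_def]
  exact ENNReal.ofReal_le_ofReal (hu_sub k)

lemma lt_measureReal_inner_gradient_ge [IsFiniteMeasure ν] (he : ‖e‖ ≤ 1)
    (hφ : φ ∈ smallPotentials ν e η k) {c : ℝ} (hc : 0 ≤ c) :
    η - c * ν.real univ < ν.real {x | c ≤ ⟪e, ∇ φ x⟫} := by
  obtain ⟨hφ, hφ₁, -, hφη⟩ := hφ
  have := integral_le_measureReal_ge_add
    (continuous_const.inner (continuous_gradient hφ)).measurable
    (integrable_inner_gradient (ν := ν) hφ hφ₁ e)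
    (fun x => (real_inner_le_norm _ _).trans (mul_le_one₀ he (norm_nonneg _) (hφ₁ x))) hc
  linarith

lemma exists_smallPotentials_steep [IsFiniteMeasure ν] (he : ‖e‖ ≤ 1) (hη : 0 < η)
    (hne : ∀ k, (smallPotentials ν e η k).Nonempty) :
    ∃ ψ : ℕ → E → ℝ, (∀ k, ψ k ∈ smallPotentials ν e η k) ∧ ∃ c > 0, ∃ Z, MeasurableSet Z ∧
      ν Z ≠ 0 ∧ ∀ z ∈ Z, ∀ k,
        ‖∇ (ψ (k + 1)) z - ∇ (ψ k) z‖ ≤ (1 / 2) ^ k ∧ c ≤ ‖∇ (ψ k) z‖ := by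
  obtain ⟨ψ, hψ, hψ_sub⟩ := exists_seq_mem_smallPotentials hne (δ := fun k => (1 / 4) ^ k)
    (fun k => by positivity) (pow_right_anti₀ (by norm_num) (by norm_num))
  obtain ⟨c, hc, hcη⟩ := exists_pos_mul_lt (half_pos hη) (ν.real univ)
  set bad : ℕ → Set E :=
    fun k₀ => ⋃ k, {x | (1 / 2) ^ (k + k₀) ≤ ‖(∇ (ψ (k + k₀ + 1)) - ∇ (ψ (k + k₀))) x‖}
  set P : ℕ → Set E := fun k₀ => {x | c ≤ ⟪e, ∇ (ψ k₀) x⟫}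
  have continuous_sub (k : ℕ) : Continuous (∇ (ψ (k + 1)) - ∇ (ψ k)) :=
    (continuous_gradient (hψ (k + 1)).1).sub (continuous_gradient (hψ k).1)
  have measurableSet_bad (k₀ : ℕ) : MeasurableSet (bad k₀) := .iUnion fun k =>
    measurableSet_le measurable_const (continuous_sub _).norm.measurable
  have measurableSet_P (k₀ : ℕ) : MeasurableSet (P k₀) := measurableSet_le measurable_const
    (continuous_const.inner (continuous_gradient (hψ k₀).1)).measurable
  have le_P (k₀ : ℕ) : ENNReal.ofReal (η / 2) ≤ ν (P k₀) :=
    ENNReal.ofReal_le_of_le_toReal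
      (by linarith [lt_measureReal_inner_gradient_ge he (hψ k₀) hc.le] : η / 2 ≤ ν.real (P k₀))
  have bad_tendsto : Tendsto (fun k₀ => ν (bad k₀)) atTop (𝓝 0) :=
    tendsto_measure_iUnion_norm_ge (f := fun k => ∇ (ψ (k + 1)) - ∇ (ψ k))
      (fun k => (continuous_sub k).aestronglyMeasurable) hψ_sub
  obtain ⟨k₀, bad_lt, pow_lt⟩ :=
    ((bad_tendsto.eventually_lt_const (ENNReal.ofReal_pos.2 (half_pos hη))).and
      ((tendsto_pow_atTop_nhds_zero_of_lt_one one_half_pos.le one_half_lt_one).eventually_lt_const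
        (show 0 < c / 4 by positivity))).exists
  refine ⟨fun k => ψ (k + k₀), fun k => smallPotentials_antitone (Nat.le_add_right k k₀) (hψ _),
    c / 2, half_pos hc, P k₀ \ bad k₀, (measurableSet_P k₀).diff (measurableSet_bad k₀),
    ((tsub_pos_of_lt (bad_lt.trans_le (le_P k₀))).trans_le le_measure_sdiff).ne', fun z hz k => ?_⟩
  have sub_le (j : ℕ) : ‖∇ (ψ (j + k₀ + 1)) z - ∇ (ψ (j + k₀)) z‖ ≤ (1 / 2) ^ (j + k₀) := by
    by_contra! h
    exact hz.2 (mem_iUnion.2 ⟨j, h.le⟩)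
  refine ⟨?_, half_le_norm_of_le_geometric_two (a := fun j => ∇ (ψ j) z) sub_le ?_ pow_lt.le k⟩
  · simp only [Nat.add_right_comm k 1 k₀]
    exact (sub_le k).trans
      (pow_le_pow_of_le_one one_half_pos.le one_half_lt_one.le (Nat.le_add_right k k₀))
  · exact (hz.1.trans (real_inner_le_norm _ _)).trans (mul_le_of_le_one_left (norm_nonneg _) he)

end SmallPotentials

/-! ### Closability of the divergence and absolute continuity -/

section Closability

variable {E : Type*} [NormedAddCommGroup E] [InnerProductSpace ℝ E] [FiniteDimensional ℝ E]
  [MeasurableSpace E] {ν : Measure E}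

lemma inv_mul_inner_mem_smallPotentials {Φ : E → E} (hΦ : ContDiff ℝ 1 Φ) {Λ : ℝ} (hΛ : 0 < Λ)
    (hΦΛ : ∀ x, ‖fderiv ℝ Φ x‖ ≤ Λ) {k : ℕ} (hΦk : ∀ x, ‖Φ x‖ ≤ Λ * (1 / ((k : ℝ) + 1))) {e : E}
    (he : ‖e‖ ≤ 1) {η : ℝ} (hη : Λ * η < ∫ x, ⟪e, fderiv ℝ Φ x e⟫ ∂ν) :
    (fun x => Λ⁻¹ * ⟪e, Φ x⟫) ∈ smallPotentials ν e η k := by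
  have hfderiv (x : E) : fderiv ℝ (fun x => Λ⁻¹ * ⟪e, Φ x⟫) x =
      Λ⁻¹ • (innerSL ℝ e ∘L fderiv ℝ Φ x) :=
    (((innerSL ℝ e).hasFDerivAt.comp x
      (hΦ.differentiable one_ne_zero x).hasFDerivAt).const_mul Λ⁻¹).fderiv
  refine ⟨contDiff_const.mul (contDiff_const.inner ℝ hΦ), fun x => ?_, fun x => ?_, ?_⟩
  · rw [norm_gradient, hfderiv, norm_smul, norm_inv, Real.norm_of_nonneg hΛ.le, inv_mul_le_one₀ hΛ]
    calc ‖innerSL ℝ e ∘L fderiv ℝ Φ x‖ ≤ ‖e‖ * ‖fderiv ℝ Φ x‖ := by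
          simpa using (innerSL ℝ e).opNorm_comp_le (fderiv ℝ Φ x)
      _ ≤ Λ := (mul_le_of_le_one_left (norm_nonneg _) he).trans (hΦΛ x)
  · rw [abs_mul, abs_inv, abs_of_pos hΛ, inv_mul_le_iff₀ hΛ]
    exact (abs_real_inner_le_norm _ _).trans
      ((mul_le_of_le_one_left (norm_nonneg _) he).trans (hΦk x))
  · simp only [inner_gradient_right, conj_trivial, hfderiv, smul_apply,
      ContinuousLinearMap.comp_apply, innerSL_apply_apply, smul_eq_mul, integral_const_mul]
    rwa [lt_inv_mul_iff₀ hΛ]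

lemma hasClosableDivergence_of_smallPotentials_eq_empty [BorelSpace E] [IsFiniteMeasure ν]
    (h : ∀ e : E, ‖e‖ ≤ 1 → ∀ η > 0, ∃ k, smallPotentials ν e η k = ∅) :
    HasClosableDivergence ν := by
  intro Λ hΛ η hη
  set b := stdOrthonormalBasis ℝ E
  set ε : ℝ := η / (finrank ℝ E + 1)
  choose k hk using fun i => h (b i) (b.norm_eq_one i).le (Λ⁻¹ * ε) (by positivity)
  set N : ℕ := Finset.univ.sup k
  refine ⟨Λ * (1 / ((N : ℝ) + 1)), by positivity, fun Φ hΦ hΦΛ hΦN => ?_⟩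
  have entry_le (i) : ∫ x, ⟪b i, fderiv ℝ Φ x (b i)⟫ ∂ν ≤ ε := by
    by_contra! lt
    rw [← mul_inv_cancel_left₀ hΛ.ne' ε] at lt
    have := smallPotentials_antitone (Finset.le_sup (Finset.mem_univ i))
      (inv_mul_inner_mem_smallPotentials hΦ hΛ hΦΛ hΦN (b.norm_eq_one i).le lt)
    exact absurd this (hk i ▸ notMem_empty _)
  have entry_integrable (i) : Integrable (fun x => ⟪b i, fderiv ℝ Φ x (b i)⟫) ν := by
    refine .of_bound (continuous_const.inner ((hΦ.continuous_fderiv one_ne_zero).clm_apply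
      continuous_const)).aestronglyMeasurable Λ (.of_forall fun x => ?_)
    calc ‖⟪b i, fderiv ℝ Φ x (b i)⟫‖ ≤ ‖b i‖ * (‖fderiv ℝ Φ x‖ * ‖b i‖) :=
          (norm_inner_le_norm _ _).trans (by gcongr; exact (fderiv ℝ Φ x).le_opNorm _)
      _ ≤ Λ := by simpa using hΦΛ x
  calc ∫ x, divergence Φ x ∂ν = ∑ i, ∫ x, ⟪b i, fderiv ℝ Φ x (b i)⟫ ∂ν := by
        simp only [divergence, LinearMap.trace_eq_sum_inner _ b]
        exact integral_finsetSum _ fun i _ => entry_integrable i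
    _ ≤ ∑ _i, ε := Finset.sum_le_sum fun i _ => entry_le i
    _ = finrank ℝ E / (finrank ℝ E + 1) * η := by simp [ε]; ring
    _ ≤ η := mul_le_of_le_one_left hη.le (div_le_one_of_le₀ (by linarith) (by positivity))

end Closability

section AbsoluteContinuity

variable {X : Type*} [MetricSpace X] [MeasurableSpace X] [BorelSpace X] {μ : Measure X}

section Chart

variable {E : Type*} [NormedAddCommGroup E] [InnerProductSpace ℝ E] [FiniteDimensional ℝ E]
  [MeasurableSpace E] [BorelSpace E] {F : X → E} {L : ℝ≥0} {B : Set X}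

lemma LipschitzDimLE.exists_smallPotentials_eq_empty (hμ : LipschitzDimLE μ (finrank ℝ E))
    (hF : LipschitzWith L F) (hB : MeasurableSet B) (hBt : μ B ≠ ⊤)
    (hreg : ∀ x ∈ B, IsRegularAt F x) {K : Set E} (hK : IsCompact K) (hFK : F '' B ⊆ K) {e : E}
    (he : ‖e‖ ≤ 1) {η : ℝ} (hη : 0 < η) :
    ∃ k, smallPotentials ((μ.restrict B).map F) e η k = ∅ := by
  by_contra! hne
  have : IsFiniteMeasure (μ.restrict B) := isFiniteMeasure_restrict.2 hBt
  obtain ⟨ψ, hψ, c, hc, Z, hZ, hZ0, hψZ⟩ := exists_smallPotentials_steep he hη hne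
  have hFm : Measurable F := hF.continuous.measurable
  rw [Measure.map_apply hFm hZ, Measure.restrict_apply (hFm hZ)] at hZ0
  refine hZ0 (hμ.measure_eq_zero_of_le_norm_gradient hF ((hFm hZ).inter hB)
    (measure_ne_top_of_subset inter_subset_right hBt) (fun x hx => hreg x hx.2) hK
    ((image_mono inter_subset_right).trans hFK) (fun k => (hψ k).1) (fun k => ?_)
    tendsto_one_div_add_atTop_nhds_zero_nat (fun k => (hψ k).2.2.1) (fun k => ?_) hc
    (fun k => ?_))
  · refine lipschitzWith_of_nnnorm_fderiv_le ((hψ k).1.differentiable one_ne_zero) fun x => ?_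
    simpa [← NNReal.coe_le_coe, norm_gradient] using (hψ k).2.1 x
  · rintro _ ⟨x, hx, rfl⟩
    exact (hψZ _ hx.1 k).1
  · rintro _ ⟨x, hx, rfl⟩
    exact (hψZ _ hx.1 k).2

lemma LipschitzDimLE.hasClosableDivergence_map_restrict (hμ : LipschitzDimLE μ (finrank ℝ E))
    (hF : LipschitzWith L F) (hB : MeasurableSet B) (hBt : μ B ≠ ⊤)
    (hreg : ∀ x ∈ B, IsRegularAt F x) {K : Set E} (hK : IsCompact K) (hFK : F '' B ⊆ K) :
    HasClosableDivergence ((μ.restrict B).map F) :=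
  have : IsFiniteMeasure (μ.restrict B) := isFiniteMeasure_restrict.2 hBt
  hasClosableDivergence_of_smallPotentials_eq_empty fun _ he _ hη =>
    hμ.exists_smallPotentials_eq_empty hF hB hBt hreg hK hFK he hη

lemma LipschitzDimLE.map_restrict_absolutelyContinuous (hμ : LipschitzDimLE μ (finrank ℝ E))
    (hF : LipschitzWith L F) (hB : MeasurableSet B) (hBt : μ B ≠ ⊤)
    (hreg : ∀ x ∈ B, IsRegularAt F x) : (μ.restrict B).map F ≪ volume := by
  have : IsFiniteMeasure (μ.restrict B) := isFiniteMeasure_restrict.2 hBt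
  refine Measure.AbsolutelyContinuous.mk fun N hN hN0 => ?_
  by_contra hne
  obtain ⟨K, hKN, hK, hK_pos⟩ := hN.exists_lt_isCompact (pos_iff_ne_zero.2 hne)
  have hFK : MeasurableSet (F ⁻¹' K) := hF.continuous.measurable hK.measurableSet
  have restrict_eq : (μ.restrict (F ⁻¹' K ∩ B)).map F = ((μ.restrict B).map F).restrict K := by
    rw [Measure.restrict_map hF.continuous.measurable hK.measurableSet,
      Measure.restrict_restrict hFK]
  have closable := hμ.hasClosableDivergence_map_restrict hF (hFK.inter hB)
    (measure_ne_top_of_subset inter_subset_right hBt) (fun x hx => hreg x hx.2) hK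
    (image_subset_iff.2 inter_subset_left)
  rw [restrict_eq] at closable
  have restrict_eq_zero := closable.eq_zero hK (measure_mono_null hKN hN0)
    (by simp [Measure.restrict_apply hK.measurableSet.compl])
  exact hK_pos.ne' (Measure.restrict_eq_zero.1 restrict_eq_zero)

end Chart

lemma absolutelyContinuous_hausdorffMeasure_of_lipschitzDim [SigmaFinite μ] {n : ℕ}
    (hle : LipschitzDimLE μ n) (hge : LipschitzDimGE μ n) : μ ≪ μH[n] := by
  refine Measure.AbsolutelyContinuous.mk fun S hS hS0 => ?_
  by_contra hne
  obtain ⟨S', hS', hS'S, hS'0, hS't⟩ := μ.exists_subset_measure_lt_top hS (pos_iff_ne_zero.2 hne)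
  obtain ⟨F, L, hF, B, hBS', hB, hB0, hreg⟩ := hge.exists_chart hS' hS'0
  have map_ac : (μ.restrict B).map F ≪ volume :=
    LipschitzDimLE.map_restrict_absolutelyContinuous (by simpa using hle) hF hB
      (measure_ne_top_of_subset hBS' hS't.ne) hreg
  have image_null : volume (F '' B) = 0 := by
    refine Measure.absolutelyContinuous_isAddHaarMeasure volume μH[n] ?_
    have := hF.hausdorffMeasure_image_le n.cast_nonneg B
    rwa [measure_mono_null (hBS'.trans hS'S) hS0, mul_zero, nonpos_iff_eq_zero] at this
  have preimage_null :=
    Measure.preimage_null_of_map_null hF.continuous.aemeasurable (map_ac image_null)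
  rw [Measure.restrict_apply_superset (subset_preimage_image F B)] at preimage_null
  exact hB0.ne' preimage_null

lemma sigmaFinite_comap_subtype_val {X : Type*} [MeasurableSpace X] (μ : Measure X) [SigmaFinite μ]
    {A : Set X} (hA : MeasurableSet A) : SigmaFinite (μ.comap (Subtype.val : A → X)) :=
  .of_map _ measurable_subtype_coe.aemeasurable
    (by rw [map_comap_subtype_coe hA]; infer_instance)

lemma isNRectifiable_univ (n : ℕ) :
    IsNRectifiable n (univ : Set (EuclideanSpace ℝ (Fin n))) :=
  ⟨univ, id, 1, one_pos, .univ, by simp, fun x _ y _ => by simp⟩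

end AbsoluteContinuity

theorem stmt13_general {X : Type*} [MetricSpace X] [MeasurableSpace X] [BorelSpace X] (n : ℕ)
    {A : Set X} (hA : MeasurableSet A) (m : Measure X) [SigmaFinite m] (hconc : m Aᶜ = 0)
    (hdim_le : LipschitzDimLE (m.comap (Subtype.val : A → X)) n)
    (hdim_ge : LipschitzDimGE (m.comap (Subtype.val : A → X)) n) : m ≪ μH[n] := by
  have := sigmaFinite_comap_subtype_val m hA
  have hausdorff_map : (μH[n] : Measure A).map Subtype.val = μH[n].restrict (range Subtype.val) :=
    isometry_subtype_coe.map_hausdorffMeasure (.inl n.cast_nonneg)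
  have map_ac := (absolutelyContinuous_hausdorffMeasure_of_lipschitzDim hdim_le hdim_ge).map
    measurable_subtype_coe
  rw [map_comap_subtype_coe hA, Measure.restrict_eq_self_of_ae_mem (mem_ae_iff.2 hconc),
    hausdorff_map] at map_ac
  exact map_ac.trans Measure.restrict_le_self.absolutelyContinuous

/-- Rigidity Theorem II: let `m` be a Radon measure on `ℝⁿ` concentrated on a Borel set `A`
such that `(A, d_Euclid, m)` is a Lipschitz differentiability space of Lipschitz dimension `n`
(every positive-measure Borel subset of `A` contains a positive-measure Borel subset carrying
`n` independent Lipschitz functions, and no `n+1` Lipschitz functions are independent on a set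
of positive measure).  Then `m` is absolutely continuous w.r.t. the Lebesgue measure on `ℝⁿ`;
in particular `m` is supported on an `n`-rectifiable set. -/
theorem stmt13 (n : ℕ) (A : Set (EuclideanSpace ℝ (Fin n))) (hA : MeasurableSet A)
    (m : Measure (EuclideanSpace ℝ (Fin n))) [IsFiniteMeasureOnCompacts m] [m.Regular]
    (hconc : m Aᶜ = 0)
    (hdiff : IsDiffSpace (m.comap (Subtype.val : A → EuclideanSpace ℝ (Fin n))))
    (hdim_le : ∀ (f : Fin (n + 1) → A → ℝ) (B : Set A), MeasurableSet B →
      0 < m.comap Subtype.val B → (∀ i, ∃ K : ℝ≥0, LipschitzWith K (f i)) →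
      ¬ IndependentOn (m.comap Subtype.val) f B)
    (hdim_ge : ∀ B : Set A, MeasurableSet B → 0 < m.comap Subtype.val B →
      ∃ B' ⊆ B, MeasurableSet B' ∧ 0 < m.comap Subtype.val B' ∧
        ∃ f : Fin n → A → ℝ, (∀ i, ∃ K : ℝ≥0, LipschitzWith K (f i)) ∧
          IndependentOn (m.comap Subtype.val) f B') :
    m ≪ (volume : Measure (EuclideanSpace ℝ (Fin n))) ∧
    ∃ S : Set (EuclideanSpace ℝ (Fin n)), IsNRectifiable n S ∧ m Sᶜ = 0 :=
  ⟨(stmt13_general n hA m hconc hdim_le hdim_ge).trans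
    (Measure.absolutelyContinuous_isAddHaarMeasure _ _), univ, isNRectifiable_univ n, by simp⟩
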